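/- Consider u'' + f(t,u) = 0 where f is T-periodic in t, locally Lipschitz, and f(t,u)/u → q_∞(t) uniformly as |u| → ∞ for a continuous T-periodic q_∞. Suppose there is a T-periodic solution ū such that the rotation numbers ρ_ū of u'' + ∂_u f(t, ū(t))u = 0 and ρ_∞ of u'' + q_∞(t)u = 0 satisfy ρ_ū ≠ ρ_∞. Then there exists k* ≥ 1 such that for every k ≥ k* the equation has a subharmonic solution of order k (a kT-periodic solution whose minimal period among multiples of T is kT), and the number of non-equivalent subharmonics of order k tends to infinity as k → ∞. -/

import Mathlib

/-! Write `u = ū + y`. The deviation `y` solves `y'' + h(t,y) = 0` with `h(t,y) = f(t,ū+y) - f(t,ū)`,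
whose linearization at `y = 0` has rotation number `ρ_ū` and which is asymptotically linear with
rotation number `ρ_∞`. In the plane `z = y - i y'` (`V`, `Sol`) the clockwise winding of solutions
becomes the usual increase of the argument.

*Twist.* In polar coordinates `θ + i r`, `r ≥ 0`, the time-`kT` map lifts to a homeomorphism
(`lift`, `invLift`) of the closed half plane, continuous up to `r = 0`, where it is given by the
linearized equation. By the definition of rotation numbers the angular displacement is
`2πkρ_ū + o(k)` at `r = 0` and, by a blow-down argument (`lift_top`), `2πkρ_∞ + o(k)` for `r` large.
The time-`kT` map preserves area because it is the limit of the symplectic Euler scheme, whose steps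
are compositions of shears (`Adm.flow_mp`).

*Poincaré–Birkhoff.* Hence for every integer `j` strictly between `kρ_ū` and `kρ_∞`, up to `o(k)`,
there is a point displaced by exactly `2πj` (`AnnulusLift.exists_advance`, `exists_rotating`), that
is, a `kT`-periodic solution `y` with winding number `j`. The fixed point theorem is needed on a
half-infinite annulus, where no outer boundary is invariant. If a twist lift `F` has no fixed point,
an argument of the displacement `F z - z` that is `0` at the bottom is near an odd multiple of `π` at
the top. That multiple is `+π`: the shifted map `F + iε` pushes some point from the bottom strip
past any height (`exists_far_wandering`: the backward images of the disk it vacates are pairwise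
disjoint and of equal or larger area, so they cannot stay bounded), the arc joining its
successive iterates is simple, and the chord from `C t` to `C (t + 1)` turns like the
tangent of a simple arc (`chord_rotation`, `birkhoff_angle`). Applied to the inverse of `F`, reflected
by `θ ↦ -θ`, the same conclusion gives the opposite sign, a contradiction.

*Subharmonics.* The winding number over `kT` is invariant under time shifts by `T`, so
solutions with different `j` are not equivalent; and if `j` is coprime to `k` the minimal period is
`kT` (`Adm.not_periodic`). Intervals of length proportional to `k` contain arbitrarily many
integers coprime to `k` when `k` is large (`exists_coprime`).
-/

open Real Filter Topology

/-- `u` is a solution of the scalar second order equation `u'' + f(t,u) = 0`. -/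
def IsSol (f : ℝ → ℝ → ℝ) (u : ℝ → ℝ) : Prop :=
  ∃ v : ℝ → ℝ, (∀ t, HasDerivAt u (v t) t) ∧ ∀ t, HasDerivAt v (-(f t (u t))) t

/-- `u` is a subharmonic solution of order `k` of `u'' + f(t,u) = 0`:
a `kT`-periodic solution which is not `lT`-periodic for any `1 ≤ l < k`. -/
def Subharmonic (f : ℝ → ℝ → ℝ) (T : ℝ) (k : ℕ) (u : ℝ → ℝ) : Prop :=
  IsSol f u ∧ (∀ t, u (t + k * T) = u t) ∧
    ∀ l : ℕ, 1 ≤ l → l < k → ¬ ∀ t, u (t + l * T) = u t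

/-- `ρ` is the rotation number of the `T`-periodic Hill equation `u'' + q(t) u = 0`,
viewed as the planar system `u' = v`, `v' = −q(t)u`: the limit of the normalized
clockwise winding `(θ(kT;ω) − ω)/(2πk)`, where `θ` is the angular coordinate solving
`θ' = q(t) cos²θ + sin²θ`, `θ(0;ω) = ω`. -/
def IsRotationNumber (T : ℝ) (q : ℝ → ℝ) (ρ : ℝ) : Prop :=
  ∃ θ : ℝ → ℝ → ℝ,
    (∀ ω, θ 0 ω = ω) ∧
    (∀ ω t, HasDerivAt (fun s => θ s ω)
      (q t * Real.cos (θ t ω) ^ 2 + Real.sin (θ t ω) ^ 2) t) ∧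
    ∀ ω, Tendsto (fun k : ℕ => (θ (k * T) ω - ω) / (2 * Real.pi * k)) atTop (nhds ρ)

namespace Subharm

/-! ### Continuous logarithms and the rotation of a simple arc -/

/-- A nowhere vanishing function on a simply connected space has a continuous logarithm. -/
lemma exists_log_lift {A : Type*} [TopologicalSpace A] [SimplyConnectedSpace A]
    [LocallyPathConnectedSpace A] (f : A → ℂ) (hf : Continuous f) (h0 : ∀ a, f a ≠ 0) (a₀ : A)
    (l₀ : ℂ) (h : Complex.exp l₀ = f a₀) :
    ∃ L : A → ℂ, Continuous L ∧ L a₀ = l₀ ∧ ∀ a, Complex.exp (L a) = f a := by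
  obtain ⟨F, ⟨h1, h2⟩, -⟩ := Complex.isCoveringMapOn_exp.existsUnique_continuousMap_lifts
    ⟨f, hf⟩ (a₀ := a₀) (e₀ := l₀) h (fun a => h0 a)
  exact ⟨F, F.continuous, h1, fun a => congrFun h2 a⟩

lemma log_lift_unique {A : Type*} [TopologicalSpace A] {s : Set A} (hs : IsPreconnected s)
    {f g : A → ℂ} (hf : ContinuousOn f s) (hg : ContinuousOn g s)
    (h : ∀ a ∈ s, Complex.exp (f a) = Complex.exp (g a)) {a₀ : A} (ha : a₀ ∈ s)
    (h0 : f a₀ = g a₀) : ∀ a ∈ s, f a = g a := by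
  refine Complex.isCoveringMap_exp.eqOn_of_comp_eqOn hs hf hg ?_ ha h0
  intro a ha
  exact Subtype.ext (h a ha)

/-- A continuous real function on a connected set that avoids the values `p` and `q` stays between
them once it is there. -/
lemma stay_between {A : Type*} [TopologicalSpace A] {s : Set A} (hs : IsPreconnected s)
    {f : A → ℝ} (hf : ContinuousOn f s) {p q : ℝ} (hpq : ∀ a ∈ s, f a ≠ p ∧ f a ≠ q) {a₀ : A}
    (ha : a₀ ∈ s) (h0 : p < f a₀ ∧ f a₀ < q) : ∀ a ∈ s, p < f a ∧ f a < q := by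
  intro a has
  constructor
  · by_contra! hc
    obtain ⟨x, hx, hxp⟩ := hs.intermediate_value has ha hf ⟨hc, h0.1.le⟩
    exact (hpq x hx).1 hxp
  · by_contra! hc
    obtain ⟨x, hx, hxp⟩ := hs.intermediate_value ha has hf ⟨h0.2.le, hc⟩
    exact (hpq x hx).2 hxp

lemma exp_im_pos_ne {l : ℂ} (h : 0 < (Complex.exp l).im) : l.im ≠ 0 ∧ l.im ≠ π := by
  rw [Complex.exp_im] at h
  constructor <;> intro h' <;> simp [h'] at h

/-- **Rotation of the chord of a simple arc.** Let `C` be a simple arc on `[0,T]` whose starting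
point is strictly the lowest and whose end point is strictly the highest. The chord
`C (t+1) - C t`, as `t` runs from `0` to `T - 1`, then turns inside the upper half plane, up to
homotopy: an argument of it that starts in `(0, π)` ends in `(0, π)`. This is Hopf's
argument for the rotation of tangents: the chord `C t - C s` does not vanish on the
triangle `0 ≤ s ≤ t - 1 ≤ T - 1`, and points upwards on the two sides `s = 0` and `t = T`. -/
lemma chord_rotation {C : ℝ → ℂ} {T : ℝ} (hT : 1 ≤ T) (hC : ContinuousOn C (Set.Icc 0 T))
    (hinj : Set.InjOn C (Set.Icc 0 T))
    (hlow : ∀ t, 0 < t → t ≤ T → (C 0).im < (C t).im)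
    (hhigh : ∀ t, 0 ≤ t → t < T → (C t).im < (C T).im)
    {l : ℝ → ℂ} (hl : ContinuousOn l (Set.Icc 0 (T - 1)))
    (hexp : ∀ t, 0 ≤ t → t ≤ T - 1 → Complex.exp (l t) = C (t + 1) - C t)
    (h0 : 0 < (l 0).im ∧ (l 0).im < π) : 0 < (l (T - 1)).im ∧ (l (T - 1)).im < π := by
  have hT1 : 0 ≤ T - 1 := by linarith
  set cl : ℝ → ℝ := fun a => max 0 (min 1 a) with hcl
  have clc : Continuous cl := by fun_prop
  have cl0 : ∀ a, 0 ≤ cl a := fun a => le_max_left _ _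
  have cl1 : ∀ a, cl a ≤ 1 := fun a => max_le zero_le_one (min_le_left _ _)
  have clid : ∀ a, 0 ≤ a → a ≤ 1 → cl a = a := fun a h h' => by simp [hcl, h, h']
  set tt : ℝ × ℝ → ℝ := fun p => 1 + cl p.1 * (T - 1) with htt
  set ss : ℝ × ℝ → ℝ := fun p => cl p.2 * (cl p.1 * (T - 1)) with hss
  have ttc : Continuous tt := by fun_prop
  have ssc : Continuous ss := by fun_prop
  have ttm : ∀ p, tt p ∈ Set.Icc 0 T := fun p => by
    have h1 := mul_nonneg (cl0 p.1) hT1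
    have h2 := mul_le_mul_of_nonneg_right (cl1 p.1) hT1
    constructor <;> simp only [htt] <;> linarith
  have ss_nonneg : ∀ p, 0 ≤ ss p := fun p => mul_nonneg (cl0 _) (mul_nonneg (cl0 _) hT1)
  have sst : ∀ p, ss p ≤ tt p - 1 := fun p => by
    have h1 := mul_nonneg (cl0 p.1) hT1
    have h2 := mul_le_mul_of_nonneg_right (cl1 p.2) h1
    simp only [htt, hss]; linarith
  have ssm : ∀ p, ss p ∈ Set.Icc 0 T := fun p =>
    ⟨ss_nonneg p, by have := sst p; have := (ttm p).2; linarith⟩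
  have Gc : Continuous fun p : ℝ × ℝ => C (tt p) - C (ss p) :=
    (hC.comp_continuous ttc ttm).sub (hC.comp_continuous ssc ssm)
  have Gne : ∀ p, C (tt p) - C (ss p) ≠ 0 := fun p h => by
    have h1 := hinj (ttm p) (ssm p) (sub_eq_zero.1 h)
    have := sst p; linarith
  have hstart : Complex.exp (l 0) = C (tt (0, 0)) - C (ss (0, 0)) := by
    rw [hexp 0 le_rfl hT1]
    simp [htt, hss, clid 0 le_rfl zero_le_one]
  obtain ⟨Λ, Λc, Λ0, Λe⟩ := exists_log_lift _ Gc Gne (0, 0) (l 0) hstart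
  have conn : IsPreconnected (Set.Icc (0 : ℝ) 1) := isPreconnected_Icc
  have m0 : (0 : ℝ) ∈ Set.Icc (0 : ℝ) 1 := by simp
  have m1 : (1 : ℝ) ∈ Set.Icc (0 : ℝ) 1 := by simp
  -- the side `s = 0`
  have side1 : 0 < (Λ (1, 0)).im ∧ (Λ (1, 0)).im < π := by
    refine stay_between conn (f := fun a : ℝ => (Λ (a, 0)).im) (by fun_prop) ?_ m0
      (by simpa [Λ0] using h0) 1 m1
    intro a ha
    apply exp_im_pos_ne
    have e1 : ss (a, 0) = 0 := by simp [hss, clid 0 le_rfl zero_le_one]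
    rw [Λe, e1, Complex.sub_im]
    have h1 : 0 < tt (a, 0) := by have := sst (a, 0); linarith
    linarith [hlow _ h1 (ttm _).2]
  -- the side `t = T`
  have side2 : 0 < (Λ (1, 1)).im ∧ (Λ (1, 1)).im < π := by
    refine stay_between conn (f := fun a : ℝ => (Λ (1, a)).im) (by fun_prop) ?_ m0
      side1 1 m1
    intro a ha
    apply exp_im_pos_ne
    have e1 : tt (1, a) = T := by simp [htt, clid 1 zero_le_one le_rfl]
    rw [Λe, e1, Complex.sub_im]
    have h1 : ss (1, a) < T := by have := sst (1, a); linarith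
    linarith [hhigh _ (ssm (1, a)).1 h1]
  -- the degenerate side at `(s, t) = (0, 1)`
  have side3 : Λ (0, 1) = l 0 := by
    rw [← Λ0]
    refine log_lift_unique conn (f := fun a : ℝ => Λ (0, a)) (g := fun _ => Λ (0, 0))
      (by fun_prop) (by fun_prop) ?_ m0 rfl 1 m1
    intro a ha
    simp only [Λe]
    simp [htt, hss, clid 0 le_rfl zero_le_one]
  have key := log_lift_unique conn (f := fun a : ℝ => Λ (a, 1)) (g := fun a => l (a * (T - 1)))
    (by fun_prop) ?_ ?_ m0 (by simpa using side3) 1 m1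
  · simp only [one_mul] at key
    rw [← key]; exact side2
  · refine hl.comp (by fun_prop) fun a ha => ⟨mul_nonneg ha.1 hT1, ?_⟩
    have := mul_le_mul_of_nonneg_right ha.2 hT1
    linarith
  · intro a ha
    have h2 := mul_le_mul_of_nonneg_right ha.2 hT1
    rw [Λe, hexp _ (mul_nonneg ha.1 hT1) (by linarith)]
    simp [htt, hss, clid 1 zero_le_one le_rfl, clid a ha.1 ha.2, add_comm]

end Subharm

namespace Subharm

/-! ### Wandering sets of an area-preserving map followed by a radial expansion -/

open MeasureTheory

/-- Polar coordinates: the point `θ + i r` of the upper half plane is sent to `r e^{iθ}`. -/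
noncomputable def polar (z : ℂ) : ℂ := z.im * Complex.exp (z.re * Complex.I)

lemma norm_polar (z : ℂ) : ‖polar z‖ = |z.im| := by
  simp [polar, Complex.norm_exp_ofReal_mul_I]

/-- The inverse of the radial translation `r ↦ r + ε`; the disk of radius `ε` is collapsed to the
origin. -/
noncomputable def shrink (ε : ℝ) (z : ℂ) : ℂ := ((1 - ε / max ‖z‖ ε : ℝ) : ℂ) * z

lemma continuous_shrink {ε : ℝ} (hε : 0 < ε) : Continuous (shrink ε) := by
  unfold shrink
  refine (Complex.continuous_ofReal.comp ?_).mul continuous_id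
  refine continuous_const.sub (continuous_const.div (by fun_prop) fun z => ?_)
  exact (lt_of_lt_of_le hε (le_max_right _ _)).ne'

lemma shrink_of_le {ε : ℝ} (hε : 0 < ε) {z : ℂ} (h : ‖z‖ ≤ ε) : shrink ε z = 0 := by
  simp [shrink, max_eq_right h, hε.ne']

lemma shrink_of_ge {ε : ℝ} {z : ℂ} (h : ε ≤ ‖z‖) :
    shrink ε z = ((1 - ε / ‖z‖ : ℝ) : ℂ) * z := by
  simp [shrink, max_eq_left h]

lemma shrink_ne_zero {ε : ℝ} (hε : 0 < ε) {z : ℂ} (h : ε < ‖z‖) : shrink ε z ≠ 0 := by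
  rw [shrink_of_ge h.le]
  have hz : z ≠ 0 := norm_pos_iff.1 (hε.trans h)
  refine mul_ne_zero ?_ hz
  rw [Complex.ofReal_ne_zero, sub_ne_zero]
  exact ((div_lt_one (hε.trans h)).2 h).ne'

lemma shrink_polar {ε : ℝ} (hε : 0 < ε) {z : ℂ} (h : ε ≤ z.im) :
    shrink ε (polar z) = polar (z - ε * Complex.I) := by
  have h0 : 0 < z.im := hε.trans_le h
  have hn : ‖polar z‖ = z.im := by rw [norm_polar, abs_of_pos h0]
  rw [shrink_of_ge (by rw [hn]; exact h), hn]
  simp only [polar]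
  have : (z.im : ℂ) ≠ 0 := by exact_mod_cast h0.ne'
  simp
  field_simp

/-- On the complement of the disk the radial translation does not decrease distances. -/
lemma shrink_lipschitz {ε : ℝ} (hε : 0 < ε) :
    LipschitzOnWith 1 (shrink ε) {z | ε < ‖z‖} := by
  refine LipschitzOnWith.of_dist_le_mul fun z hz w hw => ?_
  simp only [Set.mem_ofPred_eq] at hz hw
  rw [NNReal.coe_one, one_mul, dist_eq_norm, dist_eq_norm]
  refine abs_le_of_sq_le_sq' ?_ (norm_nonneg _) |>.2
  rw [shrink_of_ge hz.le, shrink_of_ge hw.le]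
  have ha : 0 < ‖z‖ := hε.trans hz
  have hb : 0 < ‖w‖ := hε.trans hw
  have ea : ‖z‖ ^ 2 = z.re ^ 2 + z.im ^ 2 := by
    rw [Complex.sq_norm, Complex.normSq_apply]; ring
  have eb : ‖w‖ ^ 2 = w.re ^ 2 + w.im ^ 2 := by
    rw [Complex.sq_norm, Complex.normSq_apply]; ring
  have hc : z.re * w.re + z.im * w.im ≤ ‖z‖ * ‖w‖ := by
    refine abs_le_of_sq_le_sq' ?_ (by positivity) |>.2
    rw [mul_pow, ea, eb]
    nlinarith [sq_nonneg (z.re * w.im - z.im * w.re)]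
  generalize hA : ‖z‖ = a at *
  generalize hB : ‖w‖ = b at *
  have e1 : ‖z - w‖ ^ 2 = a ^ 2 + b ^ 2 - 2 * (z.re * w.re + z.im * w.im) := by
    rw [Complex.sq_norm, Complex.normSq_apply, ea, eb]; simp; ring
  have e2 : ‖((1 - ε / a : ℝ) : ℂ) * z - ((1 - ε / b : ℝ) : ℂ) * w‖ ^ 2 =
      (a - ε) ^ 2 + (b - ε) ^ 2
        - 2 * ((1 - ε / a) * (1 - ε / b)) * (z.re * w.re + z.im * w.im) := by
    have h1 : (a - ε) ^ 2 = (1 - ε / a) ^ 2 * a ^ 2 := by field_simp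
    have h2 : (b - ε) ^ 2 = (1 - ε / b) ^ 2 * b ^ 2 := by field_simp
    rw [Complex.sq_norm, Complex.normSq_apply, h1, h2, ea, eb]
    simp only [Complex.sub_re, Complex.sub_im, Complex.re_ofReal_mul, Complex.im_ofReal_mul]
    ring
  rw [e1, e2]
  generalize z.re * w.re + z.im * w.im = c at *
  have h3 : (1 - ε / a) * (1 - ε / b) ≤ 1 := by
    have : 0 < ε / a := by positivity
    have : ε / a < 1 := (div_lt_one ha).2 hz
    have : 0 < ε / b := by positivity
    have : ε / b < 1 := (div_lt_one hb).2 hw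
    nlinarith
  have h4 : (1 - ε / a) * (1 - ε / b) * (a * b) = (a - ε) * (b - ε) := by field_simp
  nlinarith [mul_nonneg (sub_nonneg.2 h3) (sub_nonneg.2 hc)]

lemma volume_le_preimage_shrink {ε : ℝ} (hε : 0 < ε) {B : Set ℂ} (h0 : (0 : ℂ) ∉ B) :
    volume B ≤ volume (shrink ε ⁻¹' B) := by
  have hsub : B ⊆ shrink ε '' (shrink ε ⁻¹' B ∩ {z | ε < ‖z‖}) := by
    intro y hy
    have hy0 : y ≠ 0 := fun h => h0 (h ▸ hy)
    have hn : 0 < ‖y‖ := norm_pos_iff.2 hy0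
    have e : ‖((1 + ε / ‖y‖ : ℝ) : ℂ) * y‖ = ‖y‖ + ε := by
      rw [norm_mul, Complex.norm_real, Real.norm_of_nonneg (by positivity)]
      field_simp
    have e2 : shrink ε (((1 + ε / ‖y‖ : ℝ) : ℂ) * y) = y := by
      rw [shrink_of_ge (by rw [e]; linarith), e, ← mul_assoc, ← Complex.ofReal_mul]
      have : (1 - ε / (‖y‖ + ε)) * (1 + ε / ‖y‖) = 1 := by field_simp; ring
      rw [this]; simp
    refine ⟨_, ⟨?_, ?_⟩, e2⟩
    · rw [Set.mem_preimage, e2]; exact hy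
    · show ε < _
      rw [e]; linarith
  have hH : ∀ s : Set ℂ, s ⊆ {z | ε < ‖z‖} → Measure.hausdorffMeasure 2 (shrink ε '' s) ≤
      Measure.hausdorffMeasure 2 s := fun s hs => by
    simpa using ((shrink_lipschitz hε).mono hs).hausdorffMeasure_image_le (d := 2) zero_le_two
  have inst : (Measure.hausdorffMeasure 2 : Measure ℂ).IsAddHaarMeasure := by
    have := isAddHaarMeasure_hausdorffMeasure (E := ℂ)
    rwa [Complex.finrank_real_complex] at this
  have hvol : (volume : Measure ℂ) = (volume : Measure ℂ).addHaarScalarFactor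
      (Measure.hausdorffMeasure 2) • (Measure.hausdorffMeasure 2 : Measure ℂ) :=
    Measure.isAddLeftInvariant_eq_smul _ _
  rw [hvol, Measure.smul_apply, Measure.smul_apply]
  simp only [ENNReal.smul_def, smul_eq_mul]
  refine mul_le_mul_right ?_ _
  calc _ ≤ _ := measure_mono hsub
    _ ≤ _ := hH _ Set.inter_subset_right
    _ ≤ _ := measure_mono Set.inter_subset_left

/-- If `Pb` preserves area and fixes the origin only, then under the map `Pb ∘ shrink ε` points of
arbitrarily large modulus end up at the origin: the sets of points reaching it
after exactly `n + 1` steps are disjoint and their areas are bounded below. -/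
lemma exists_far_wandering {ε : ℝ} (hε : 0 < ε) {Pb : ℂ → ℂ} (hc : Continuous Pb)
    (hmp : MeasurePreserving Pb volume volume) (h0 : ∀ z, Pb z = 0 ↔ z = 0) (M : ℝ) :
    ∃ (n : ℕ) (z : ℂ), M < ‖z‖ ∧ (fun z => Pb (shrink ε z))^[n] z ≠ 0 ∧
      (fun z => Pb (shrink ε z))^[n + 1] z = 0 := by
  set N : ℂ → ℂ := fun z => Pb (shrink ε z) with hN
  have Nc : Continuous N := hc.comp (continuous_shrink hε)
  have N0 : N 0 = 0 := (h0 _).2 (by simp [shrink])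
  set A : ℕ → Set ℂ := fun n => {z | N^[n] z ≠ 0 ∧ N^[n + 1] z = 0} with hA
  have Nit0 : ∀ n, N^[n] 0 = 0 := fun n => Function.iterate_fixed N0 n
  by_contra! hcon
  have hsub : ∀ n, A n ⊆ Metric.closedBall 0 M := fun n z hz => by
    rw [mem_closedBall_zero_iff]
    by_contra! h
    exact hcon n z h hz.1 hz.2
  have hmeas : ∀ n, MeasurableSet (A n) := fun n =>
    (IsOpen.measurableSet ((Nc.iterate n).isOpen_preimage _ isOpen_compl_singleton)).inter
      (IsClosed.measurableSet (isClosed_singleton.preimage (Nc.iterate (n + 1))))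
  have hdisj : Pairwise (Function.onFun Disjoint A) := by
    have key : ∀ m n, m < n → Disjoint (A m) (A n) := fun m n hmn => by
      rw [Set.disjoint_left]
      intro z hm hn
      obtain ⟨k, rfl⟩ := Nat.exists_eq_add_of_lt hmn
      apply hn.1
      rw [show m + k + 1 = k + (m + 1) by ring, Function.iterate_add_apply, hm.2, Nit0]
    intro m n hmn
    rcases lt_or_gt_of_ne hmn with h | h
    · exact key m n h
    · exact (key n m h).symm
  -- `A (n + 1)` is the preimage of `A n`; `Pb` keeps its area and `shrink` can only increase it
  have hstep : ∀ n, volume (A n) ≤ volume (A (n + 1)) := fun n => by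
    have e : A (n + 1) = shrink ε ⁻¹' (Pb ⁻¹' (A n)) := rfl
    rw [e, ← hmp.measure_preimage (hmeas n).nullMeasurableSet]
    apply volume_le_preimage_shrink hε
    intro h
    exact h.1 (by rw [(h0 0).2 rfl, Nit0])
  have hall : ∀ n, volume (A 0) ≤ volume (A n) := fun n => by
    induction n with
    | zero => exact le_rfl
    | succ n ih => exact ih.trans (hstep n)
  -- `A 0` is the punctured disk of radius `ε`
  have hpos : 0 < volume (A 0) := by
    have : Metric.ball (ε / 2 : ℂ) (ε / 2) ⊆ A 0 := by
      intro z hz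
      rw [Metric.mem_ball, dist_eq_norm] at hz
      have e : ‖(ε / 2 : ℂ)‖ = ε / 2 := by simp [abs_of_pos hε]
      refine ⟨fun h => ?_, ?_⟩
      · simp only [Function.iterate_zero, id] at h
        rw [h, zero_sub, norm_neg, e] at hz
        exact lt_irrefl _ hz
      · have h1 : ‖z‖ ≤ ε := by
          have := norm_sub_norm_le z (ε / 2 : ℂ)
          linarith
        simp only [zero_add, Function.iterate_one]
        exact (h0 _).2 (shrink_of_le hε h1)
    exact (Metric.measure_ball_pos _ _ (by positivity)).trans_le (measure_mono this)
  have hU : volume (⋃ n, A n) = ⊤ := by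
    rw [measure_iUnion hdisj hmeas]
    exact top_unique ((ENNReal.tsum_const_eq_top_of_ne_zero hpos.ne').symm.le.trans
      (ENNReal.tsum_le_tsum hall))
  have : volume (⋃ n, A n) ≤ volume (Metric.closedBall (0 : ℂ) M) :=
    measure_mono (Set.iUnion_subset hsub)
  rw [hU] at this
  exact absurd this (not_le.2 measure_closedBall_lt_top)

end Subharm

namespace Subharm

/-! ### The Poincaré–Birkhoff fixed point theorem -/

open MeasureTheory

/-- `F` is a lift, in the polar coordinates `z = θ + i r` with `0 ≤ r`, of an area-preserving map
`P` of the plane that fixes the origin; it extends continuously to the boundary `r = 0` and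
changes moduli by bounded factors only. -/
structure AnnulusLift (F P : ℂ → ℂ) : Prop where
  contF : Continuous F
  contP : Continuous P
  per : ∀ z, F (z + 2 * π) = F z + 2 * π
  semi : ∀ z, polar (F z) = P (polar z)
  growth : ∃ c K : ℝ, 0 < c ∧ ∀ z, 0 ≤ z.im → c * z.im ≤ (F z).im ∧ (F z).im ≤ K * z.im
  mp : MeasurePreserving P volume volume

lemma polar_surj (w : ℂ) : ∃ z : ℂ, z.im = ‖w‖ ∧ polar z = w := by
  refine ⟨⟨w.arg, ‖w‖⟩, rfl, ?_⟩
  simp [polar]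

lemma polar_eq_zero {z : ℂ} : polar z = 0 ↔ z.im = 0 := by
  rw [← norm_eq_zero, norm_polar, abs_eq_zero]

namespace AnnulusLift

variable {F P B Pb : ℂ → ℂ}

lemma im_nonneg (h : AnnulusLift F P) {z : ℂ} (hz : 0 ≤ z.im) : 0 ≤ (F z).im := by
  obtain ⟨c, K, hc, hg⟩ := h.growth
  exact (mul_nonneg hc.le hz).trans (hg z hz).1

lemma im_eq_zero (h : AnnulusLift F P) {z : ℂ} (hz : z.im = 0) : (F z).im = 0 := by
  obtain ⟨c, K, hc, hg⟩ := h.growth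
  have := hg z hz.ge
  rw [hz] at this
  linarith [this.1, this.2]

lemma im_pos (h : AnnulusLift F P) {z : ℂ} (hz : 0 < z.im) : 0 < (F z).im := by
  obtain ⟨c, K, hc, hg⟩ := h.growth
  exact (mul_pos hc hz).trans_le (hg z hz.le).1

lemma P_eq_zero (h : AnnulusLift F P) (w : ℂ) : P w = 0 ↔ w = 0 := by
  obtain ⟨z, hz, rfl⟩ := polar_surj w
  have hz0 : 0 ≤ z.im := hz ▸ norm_nonneg _
  rw [← h.semi, polar_eq_zero, polar_eq_zero]
  refine ⟨fun h1 => ?_, h.im_eq_zero⟩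
  by_contra h2
  exact (h.im_pos (lt_of_le_of_ne hz0 (Ne.symm h2))).ne' h1

lemma per_int (h : AnnulusLift F P) (z : ℂ) (n : ℤ) : F (z + n * (2 * π)) = F z + n * (2 * π) := by
  have : Function.Periodic (fun z => F z - z) (2 * π : ℂ) := fun z => by
    simp only [h.per]; ring
  have := this.int_mul n z
  beta_reduce at this
  linear_combination this

/-- Conjugation by the reflection `θ ↦ -θ`. -/
lemma reflect (h : AnnulusLift F P) :
    AnnulusLift (fun z => -(starRingEnd ℂ) (F (-(starRingEnd ℂ) z)))
      (fun w => (starRingEnd ℂ) (P ((starRingEnd ℂ) w))) := by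
  have hpol : ∀ z, polar (-(starRingEnd ℂ) z) = (starRingEnd ℂ) (polar z) := fun z => by
    simp [polar, ← Complex.exp_conj]
  have hcm : MeasurePreserving (fun w : ℂ => (starRingEnd ℂ) w) volume volume :=
    Complex.conjLIE.measurePreserving
  refine ⟨?_, ?_, fun z => ?_, fun z => ?_, ?_, hcm.comp (h.mp.comp hcm)⟩
  · exact (Complex.continuous_conj.comp (h.contF.comp Complex.continuous_conj.neg)).neg
  · exact Complex.continuous_conj.comp (h.contP.comp Complex.continuous_conj)
  · have e : -(starRingEnd ℂ) (z + 2 * π) = -(starRingEnd ℂ) z + (-1 : ℤ) * (2 * π) := by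
      simp [Complex.conj_ofNat]; ring
    rw [e, h.per_int]
    simp [Complex.conj_ofNat]
    ring
  · rw [hpol, h.semi, hpol]
  · obtain ⟨c, K, hc, hg⟩ := h.growth
    exact ⟨c, K, hc, fun z hz => by simpa using hg (-(starRingEnd ℂ) z) (by simpa using hz)⟩

/-- The displacement of a lift without fixed points has a continuous logarithm whose argument
vanishes on the boundary `r = 0`, where the displacement is positive. -/
lemma exists_log (h : AnnulusLift F P) (hbot : ∀ z : ℂ, z.im = 0 → 0 < (F z - z).re)
    (hfix : ∀ z : ℂ, 0 ≤ z.im → F z ≠ z) :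
    ∃ L : ℂ → ℂ, Continuous L ∧ (∀ z : ℂ, 0 ≤ z.im → Complex.exp (L z) = F z - z) ∧
      ∀ z : ℂ, z.im = 0 → (L z).im = 0 := by
  set pr : ℂ → ℂ := fun z => z.re + (max z.im 0 : ℝ) * Complex.I with hpr
  have prc : Continuous pr := by fun_prop
  have pri : ∀ z, 0 ≤ (pr z).im := fun z => by simp [hpr]
  have prid : ∀ z : ℂ, 0 ≤ z.im → pr z = z := fun z hz => by
    simp [hpr, max_eq_left hz]
  have hreal : ∀ z : ℂ, z.im = 0 → F z - z = ((F z - z).re : ℂ) := fun z hz => by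
    apply Complex.ext
    · simp
    · simp [h.im_eq_zero hz, hz]
  obtain ⟨L, Lc, L0, Le⟩ := exists_log_lift (fun z => F (pr z) - pr z)
    ((h.contF.comp prc).sub prc) (fun z => sub_ne_zero.2 (hfix _ (pri z))) 0
    (Real.log (F 0 - 0).re : ℂ) (by
      rw [← Complex.ofReal_exp, Real.exp_log (hbot 0 rfl), ← hreal 0 rfl, prid 0 le_rfl])
  have Le' : ∀ z : ℂ, 0 ≤ z.im → Complex.exp (L z) = F z - z := fun z hz => by
    rw [Le, prid z hz]
  refine ⟨L, Lc, Le', ?_⟩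
  have conn : IsPreconnected {z : ℂ | z.im = 0} :=
    (convex_hyperplane (r := (0 : ℝ)) (Complex.imLm.isLinear)).isPreconnected
  have cospos : ∀ z : ℂ, z.im = 0 → 0 < Real.cos (L z).im := fun z hz => by
    have h1 := hbot z hz
    rw [← Le' z hz.ge, Complex.exp_re] at h1
    exact pos_of_mul_pos_right h1 (Real.exp_pos _).le
  have hst := stay_between conn (f := fun z => (L z).im) (by fun_prop) (p := -(π / 2)) (q := π / 2)
    (fun z hz => ⟨fun h' => by have := cospos z hz; simp [h'] at this,
      fun h' => by have := cospos z hz; simp [h'] at this⟩) (a₀ := 0) rfl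
    (by rw [L0]; simp [pi_pos])
  intro z hz
  have h1 := hst z hz
  have h2 : Real.sin (L z).im = 0 := by
    have h3 : (F z - z).im = 0 := by simp [h.im_eq_zero hz, hz]
    rw [← Le' z hz.ge, Complex.exp_im] at h3
    exact (mul_eq_zero.1 h3).resolve_left (Real.exp_pos _).ne'
  exact (Real.sin_eq_zero_iff_of_lt_of_lt (by linarith [h1.1, pi_pos])
    (by linarith [h1.2, pi_pos])).1 h2

/-- The displacement of a lift without fixed points is bounded away from zero. -/
lemma exists_gap (h : AnnulusLift F P) {δ R : ℝ} (hδ : 0 < δ)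
    (htop : ∀ z : ℂ, R ≤ z.im → (F z - z).re ≤ -δ) (hfix : ∀ z : ℂ, 0 ≤ z.im → F z ≠ z) :
    ∃ η > 0, ∀ z : ℂ, 0 ≤ z.im → η ≤ ‖F z - z‖ := by
  have hK : IsCompact (Set.Icc 0 (2 * π) ×ℂ Set.Icc 0 (max R 0)) :=
    isCompact_Icc.reProdIm isCompact_Icc
  have hne : (Set.Icc 0 (2 * π) ×ℂ Set.Icc 0 (max R 0)).Nonempty :=
    ⟨0, by simp [Complex.mem_reProdIm, pi_pos.le]⟩
  obtain ⟨z₀, hz₀, hmin⟩ := hK.exists_isMinOn hne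
    (f := fun z => ‖F z - z‖) ((h.contF.sub continuous_id).norm.continuousOn)
  have hpos : 0 < ‖F z₀ - z₀‖ := norm_pos_iff.2 (sub_ne_zero.2 (hfix _ hz₀.2.1))
  refine ⟨min δ ‖F z₀ - z₀‖, lt_min hδ hpos, fun z hz => ?_⟩
  by_cases hR : R ≤ z.im
  · refine (min_le_left _ _).trans ?_
    have h1 := htop z hR
    have h2 := Complex.abs_re_le_norm (F z - z)
    have h3 := neg_abs_le (F z - z).re
    linarith
  · refine (min_le_right _ _).trans ?_
    set n : ℤ := ⌊z.re / (2 * π)⌋ with hn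
    have h1 := h.per_int z (-n)
    have e : F z - z = F (z + (-n : ℤ) * (2 * π)) - (z + (-n : ℤ) * (2 * π)) := by
      rw [h1]; ring
    rw [e]
    apply hmin
    have hp : (0 : ℝ) < 2 * π := by positivity
    have h2 := Int.floor_le (z.re / (2 * π))
    have h3 := (Int.lt_floor_add_one (z.re / (2 * π))).le
    rw [le_div_iff₀ hp] at h2
    rw [div_le_iff₀ hp] at h3
    rw [Complex.mem_reProdIm]
    push Not at hR
    refine ⟨⟨?_, ?_⟩, ⟨?_, ?_⟩⟩ <;> simp <;> first | nlinarith | (left; linarith)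

/-- A point that the shifted lift `F + iε` moves, after `n` steps, from the strip `0 < r ≤ ε` to a
point of height at least `M`: a far point of `exists_far_wandering` for the inverse map, followed
until it is collapsed to the origin, and read backwards. -/
lemma exists_escaping (hB : AnnulusLift B Pb)
    (hFB : ∀ z : ℂ, 0 ≤ z.im → F (B z) = z) {ε : ℝ} (hε : 0 < ε) (M : ℝ) :
    ∃ (n : ℕ) (y : ℂ), 0 < y.im ∧ y.im ≤ ε ∧ M < ((fun z => F z + ε * Complex.I)^[n] y).im := by
  obtain ⟨n, w, hw, h1, h2⟩ := exists_far_wandering hε hB.contP hB.mp hB.P_eq_zero (max M 0)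
  obtain ⟨z, hz, rfl⟩ := polar_surj w
  rw [← hz] at hw
  have key : ∀ (n : ℕ) (z : ℂ), 0 < z.im →
      (fun z => Pb (shrink ε z))^[n] (polar z) ≠ 0 →
      (fun z => Pb (shrink ε z))^[n + 1] (polar z) = 0 →
      ∃ y : ℂ, 0 < y.im ∧ y.im ≤ ε ∧ (fun z => F z + ε * Complex.I)^[n] y = z := by
    intro n
    induction n with
    | zero =>
      intro z hz _ h2
      refine ⟨z, hz, ?_, rfl⟩
      by_contra! hlt
      simp only [zero_add, Function.iterate_one, hB.P_eq_zero] at h2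
      exact shrink_ne_zero hε (by rw [norm_polar, abs_of_pos hz]; exact hlt) h2
    | succ n ih =>
      intro z hz h1 h2
      have hlt : ε < z.im := by
        by_contra! hle
        apply h1
        have e : Pb (shrink ε (polar z)) = 0 := by
          rw [hB.P_eq_zero, shrink_of_le hε (by rw [norm_polar, abs_of_pos hz]; exact hle)]
        rw [Function.iterate_succ_apply, e]
        refine Function.iterate_fixed ?_ n
        rw [hB.P_eq_zero]
        simp [shrink]
      have e : Pb (shrink ε (polar z)) = polar (B (z - ε * Complex.I)) := by
        rw [shrink_polar hε hlt.le, hB.semi]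
      have him : 0 < (z - ε * Complex.I).im := by simpa using hlt
      rw [Function.iterate_succ_apply] at h1 h2
      rw [e] at h1 h2
      obtain ⟨y, y1, y2, y3⟩ := ih _ (hB.im_pos him) h1 h2
      refine ⟨y, y1, y2, ?_⟩
      rw [Function.iterate_succ_apply', y3, hFB _ him.le]
      ring
  obtain ⟨y, y1, y2, y3⟩ := key n z ((le_max_right _ _).trans_lt hw) h1 h2
  exact ⟨n, y, y1, y2, by rw [y3]; exact (le_max_left _ _).trans_lt hw⟩

end AnnulusLift

end Subharm

namespace Subharm

/-- The curve that follows the segment from `z₀` to `G z₀`, then its images under the iterates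
of `G`. -/
lemma exists_orbit_curve {G : ℂ → ℂ} (hG : Continuous G) (z₀ : ℂ) :
    ∃ C : ℝ → ℂ, (∀ t, 0 ≤ t → t ≤ 1 → C t = z₀ + t * (G z₀ - z₀)) ∧
      (∀ t, 0 ≤ t → C (t + 1) = G (C t)) ∧ ∀ N : ℕ, ContinuousOn C (Set.Icc 0 N) := by
  set c : ℝ → ℂ := fun t => z₀ + t * (G z₀ - z₀) with hc
  have cc : Continuous c := by fun_prop
  set C : ℝ → ℂ := fun t => G^[⌊t⌋₊] (c (t - ⌊t⌋₊)) with hC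
  have hpiece : ∀ (n : ℕ) (t : ℝ), t ∈ Set.Icc (n : ℝ) (n + 1) → C t = G^[n] (c (t - n)) := by
    intro n t ht
    rcases eq_or_lt_of_le ht.2 with h | h
    · have : ⌊t⌋₊ = n + 1 := by rw [h]; exact_mod_cast Nat.floor_natCast (n + 1)
      simp only [hC, this]
      rw [Function.iterate_succ_apply, h]
      congr 1
      simp [hc]
    · have : ⌊t⌋₊ = n := (Nat.floor_eq_iff (n.cast_nonneg.trans ht.1)).2 ⟨ht.1, h⟩
      simp only [hC, this]
  refine ⟨C, fun t h0 h1 => ?_, fun t h0 => ?_, fun N => ?_⟩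
  · have := hpiece 0 t (by simp [h0, h1])
    simpa [hc] using this
  · simp only [hC]
    rw [Nat.floor_add_one h0, Function.iterate_succ_apply']
    push_cast
    congr 3
    ring
  · induction N with
    | zero => simp
    | succ N ih =>
      have : Set.Icc (0 : ℝ) ((N + 1 : ℕ) : ℝ) = Set.Icc (0 : ℝ) N ∪ Set.Icc (N : ℝ) (N + 1) := by
        rw [Set.Icc_union_Icc_eq_Icc N.cast_nonneg (by linarith)]
        push_cast; rfl
      rw [this]
      refine ih.union_of_isClosed ?_ isClosed_Icc isClosed_Icc
      refine ContinuousOn.congr ?_ (hpiece N)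
      exact ((hG.iterate N).comp (cc.comp (continuous_id.sub continuous_const))).continuousOn

namespace AnnulusLift

variable {F P B Pb : ℂ → ℂ}

/-- Through every point of a low strip passes the segment joining a boundary point to its image
under the shifted lift. -/
lemma exists_start (h : AnnulusLift F P) (hbot : ∀ z : ℂ, z.im = 0 → 0 < (F z - z).re)
    {t : ℝ} (ht : 0 ≤ t) (x : ℝ) : ∃ θ : ℝ, θ + t * ((F θ).re - θ) = x := by
  set φ : ℝ → ℝ := fun θ => θ + t * ((F θ).re - θ) with hφ
  have hFc := h.contF
  have φc : Continuous φ := by fun_prop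
  have h1 : x ≤ φ x := by
    have := hbot x (Complex.ofReal_im x)
    simp only [Complex.sub_re, Complex.ofReal_re] at this
    simp only [hφ]
    nlinarith
  obtain ⟨k, hk⟩ := exists_nat_ge ((φ x - x) / (2 * π))
  rw [div_le_iff₀ (by positivity)] at hk
  have h2 : φ (x - k * (2 * π)) = φ x - k * (2 * π) := by
    have e := h.per_int x (-k)
    have e' : ((x - k * (2 * π) : ℝ) : ℂ) = x + ((-k : ℤ) : ℂ) * (2 * π) := by push_cast; ring
    have e2 : (F x + ((-k : ℤ) : ℂ) * (2 * π)).re = (F x).re - k * (2 * π) := by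
      simp; ring
    simp only [hφ]
    rw [e', e, e2]
    ring
  have hle : x - k * (2 * π) ≤ x := by
    have : (0 : ℝ) ≤ k * (2 * π) := by positivity
    linarith
  obtain ⟨θ, -, hθ⟩ := intermediate_value_Icc hle φc.continuousOn
    (show x ∈ Set.Icc _ _ from ⟨by rw [h2]; linarith, h1⟩)
  exact ⟨θ, hθ⟩

/-- **Direction of rotation of the displacement.** For a twist lift without fixed points, the
argument of the displacement that is `0` at the bottom is close to `+π`, rather than to another odd
multiple of `π`, at the top. -/
lemma birkhoff_angle (h : AnnulusLift F P) (hB : AnnulusLift B Pb)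
    (hFB : ∀ z : ℂ, 0 ≤ z.im → F (B z) = z) (hBF : ∀ z : ℂ, 0 ≤ z.im → B (F z) = z)
    (hbot : ∀ z : ℂ, z.im = 0 → 0 < (F z - z).re) {δ R : ℝ} (hδ : 0 < δ) (hR : 0 ≤ R)
    (htop : ∀ z : ℂ, R ≤ z.im → (F z - z).re ≤ -δ) (hfix : ∀ z : ℂ, 0 ≤ z.im → F z ≠ z)
    {L : ℂ → ℂ} (Lc : Continuous L) (Le : ∀ z : ℂ, 0 ≤ z.im → Complex.exp (L z) = F z - z)
    (L0 : ∀ z : ℂ, z.im = 0 → (L z).im = 0) :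
    ∀ z : ℂ, R ≤ z.im → π / 2 < (L z).im ∧ (L z).im < 3 * π / 2 := by
  obtain ⟨η, hη, hgap⟩ := h.exists_gap hδ htop hfix
  -- a translation too short to cancel the displacement: `F` and `G` have close arguments
  obtain ⟨ε, hε, hεη⟩ : ∃ ε : ℝ, 0 < ε ∧ ε < η := ⟨η / 2, by positivity, by linarith⟩
  set G : ℂ → ℂ := fun z => F z + ε * Complex.I with hG
  have Gc : Continuous G := by have := h.contF; fun_prop
  have Gim : ∀ z, (G z).im = (F z).im + ε := fun z => by simp [hG]
  have Gge : ∀ z : ℂ, 0 ≤ z.im → ε ≤ (G z).im := fun z hz => by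
    rw [Gim]; linarith [h.im_nonneg hz]
  have Ginj : ∀ z w : ℂ, 0 ≤ z.im → 0 ≤ w.im → G z = G w → z = w := fun z w hz hw e => by
    have : F z = F w := by simpa [hG] using e
    rw [← hBF z hz, ← hBF w hw, this]
  -- the logarithm of the displacement of `G`
  set D : ℂ → ℂ := fun z => 1 + ε * Complex.I / (F z - z) with hD
  have Dre : ∀ z : ℂ, 0 ≤ z.im → 0 < (D z).re := fun z hz => by
    have h1 := hgap z hz
    have h2 : ‖(ε : ℂ) * Complex.I / (F z - z)‖ < 1 := by
      rw [norm_div, div_lt_one (hη.trans_le h1)]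
      simp [abs_of_pos hε]
      linarith
    have h3 := Complex.abs_re_le_norm ((ε : ℂ) * Complex.I / (F z - z))
    have h4 := neg_abs_le ((ε : ℂ) * Complex.I / (F z - z)).re
    simp only [hD, Complex.add_re, Complex.one_re]
    linarith
  set Lε : ℂ → ℂ := fun z => L z + Complex.log (D z) with hLε
  have Lεc : ContinuousOn Lε {z : ℂ | 0 ≤ z.im} := by
    refine Lc.continuousOn.add (ContinuousOn.clog ?_ fun z hz => Or.inl (Dre z hz))
    refine continuousOn_const.add (continuousOn_const.div ?_ fun z hz => sub_ne_zero.2 (hfix z hz))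
    exact (h.contF.sub continuous_id).continuousOn
  have Lεe : ∀ z : ℂ, 0 ≤ z.im → Complex.exp (Lε z) = G z - z := fun z hz => by
    have h0 : F z - z ≠ 0 := sub_ne_zero.2 (hfix z hz)
    have h1 : D z ≠ 0 := fun e => by have := Dre z hz; simp [e] at this
    simp only [hLε]
    rw [Complex.exp_add, Complex.exp_log h1, Le z hz]
    simp only [hD, hG]
    field_simp
    ring
  have Lεim : ∀ z : ℂ, 0 ≤ z.im → |(Lε z).im - (L z).im| < π / 2 := fun z hz => by
    have : (Lε z).im - (L z).im = (D z).arg := by simp [hLε, Complex.log_im]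
    rw [this]
    exact Complex.abs_arg_lt_pi_div_two_iff.2 (Or.inl (Dre z hz))
  -- an orbit that escapes
  obtain ⟨c, K, -, hK⟩ := h.growth
  set K' := max K 1 with hK'
  have hK1 : 1 ≤ K' := le_max_right _ _
  set M := K' * R + ε + 1 with hM
  obtain ⟨n, y, y0, y1, y2⟩ := exists_escaping hB hFB hε M
  set τ := y.im / ε with hτ
  have τ0 : 0 < τ := by positivity
  have τ1 : τ ≤ 1 := (div_le_one hε).2 y1
  obtain ⟨θ, hθ⟩ := h.exists_start hbot τ0.le y.re
  obtain ⟨C, C1, C2, C3⟩ := exists_orbit_curve Gc (θ : ℂ)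
  have hFθ : (F θ).im = 0 := h.im_eq_zero (Complex.ofReal_im θ)
  have Cim : ∀ t, 0 ≤ t → t ≤ 1 → (C t).im = ε * t := fun t h0 h1 => by
    rw [C1 t h0 h1]
    simp [hG, hFθ]
    ring
  have Cnn : ∀ (n : ℕ) (t : ℝ), 0 ≤ t → t ≤ n → 0 ≤ (C t).im := by
    intro n
    induction n with
    | zero =>
      intro t h0 h1
      have : t = 0 := le_antisymm (by simpa using h1) h0
      rw [Cim t h0 (by linarith)]
      positivity
    | succ n ih =>
      intro t h0 h1
      push_cast at h1
      by_cases ht : t ≤ 1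
      · rw [Cim t h0 ht]; positivity
      · push Not at ht
        have e := C2 (t - 1) (by linarith)
        rw [sub_add_cancel] at e
        rw [e]
        exact hε.le.trans (Gge _ (ih _ (by linarith) (by linarith)))
  have Cnn' : ∀ t : ℝ, 0 ≤ t → 0 ≤ (C t).im := fun t ht => by
    obtain ⟨n, hn⟩ := exists_nat_ge t
    exact Cnn n t ht hn
  have Cge : ∀ t : ℝ, 1 ≤ t → ε ≤ (C t).im := fun t ht => by
    have e := C2 (t - 1) (by linarith)
    rw [sub_add_cancel] at e
    rw [e]
    exact Gge _ (Cnn' _ (by linarith))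
  -- the curve is simple: on `[0,1]` it is below height `ε`, later it is above, and `G` is injective
  have Cne : ∀ (n : ℕ) (s t : ℝ), 0 ≤ s → s < t → s < n → C s ≠ C t := by
    intro n
    induction n with
    | zero => intro s t h0 _ h1; simp at h1; linarith
    | succ n ih =>
      intro s t h0 hst h1 e
      push_cast at h1
      by_cases hs : s < 1
      · have es := Cim s h0 hs.le
        by_cases ht : t < 1
        · have et := Cim t (by linarith) ht.le
          rw [e, et] at es
          nlinarith
        · push Not at ht
          have et := Cge t ht
          rw [← e, es] at et
          nlinarith
      · push Not at hs
        have e1 := C2 (s - 1) (by linarith)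
        have e2 := C2 (t - 1) (by linarith)
        rw [sub_add_cancel] at e1 e2
        rw [e1, e2] at e
        exact ih _ _ (by linarith) (by linarith) (by linarith)
          (Ginj _ _ (Cnn' _ (by linarith)) (Cnn' _ (by linarith)) e)
  have Cy : C τ = y := by
    rw [C1 τ τ0.le τ1]
    apply Complex.ext
    · simp [hG]
      linarith
    · simp [hG, hFθ, hτ]
      field_simp
  have Cit : ∀ m : ℕ, C (τ + m) = G^[m] y := by
    intro m
    induction m with
    | zero => simp [Cy]
    | succ m ih =>
      push_cast
      rw [← add_assoc, C2 _ (by positivity), ih, Function.iterate_succ_apply']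
  -- the first time at which the curve reaches height `M`
  have hcl : IsCompact (Set.Icc (0 : ℝ) ((n + 1 : ℕ) : ℝ) ∩ (fun t => (C t).im) ⁻¹' Set.Ici M) := by
    refine isCompact_Icc.of_isClosed_subset ?_ Set.inter_subset_left
    exact (Complex.continuous_im.comp_continuousOn (C3 (n + 1))).preimage_isClosed_of_isClosed
      isClosed_Icc isClosed_Ici
  obtain ⟨T, ⟨hT1, hT2⟩, hTmin⟩ := hcl.exists_isLeast
    ⟨τ + n, ⟨by positivity, by push_cast; linarith⟩, by
      show M ≤ (C (τ + n)).im
      rw [Cit]; exact y2.le⟩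
  have hT2 : M ≤ (C T).im := hT2
  have hMε : ε < M := by
    have : 0 ≤ K' * R := by positivity
    linarith
  have T1 : 1 < T := by
    by_contra! hT
    have := Cim T hT1.1 hT
    nlinarith
  have hbefore : ∀ t, 0 ≤ t → t < T → (C t).im < M := fun t h0 ht => by
    by_contra! hge
    exact absurd (hTmin ⟨⟨h0, ht.le.trans hT1.2⟩, hge⟩) (not_le.2 ht)
  have hCθ : C 0 = θ := by simpa using C1 0 le_rfl zero_le_one
  have hrot := chord_rotation T1.le ((C3 (n + 1)).mono (Set.Icc_subset_Icc_right hT1.2))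
    (by
      intro s hs t ht e
      obtain ⟨m, hm⟩ := exists_nat_gt (max s t)
      rcases lt_trichotomy s t with hlt | heq | hlt
      · exact absurd e (Cne m s t hs.1 hlt ((le_max_left _ _).trans_lt hm))
      · exact heq
      · exact absurd e.symm (Cne m t s ht.1 hlt ((le_max_right _ _).trans_lt hm)))
    (by
      intro t h0 _
      rw [Cim 0 le_rfl zero_le_one, mul_zero]
      by_cases ht : t ≤ 1
      · rw [Cim t h0.le ht]; positivity
      · exact hε.trans_le (Cge t (not_le.1 ht).le))
    (fun t h0 ht => (hbefore t h0 ht).trans_le hT2)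
    (l := fun t => Lε (C t))
    (Lεc.comp ((C3 (n + 1)).mono (Set.Icc_subset_Icc_right (by linarith [hT1.2])))
      fun t ht => Cnn' t ht.1)
    (fun t h0 _ => by rw [Lεe _ (Cnn' t h0), C2 t h0])
    (by
      have hi : (C 0).im = 0 := by rw [hCθ]; simp
      have h1 := Lεim (C 0) hi.ge
      rw [L0 _ hi, sub_zero, abs_lt] at h1
      have h2 : 0 < (Complex.exp (Lε (C 0))).im := by
        rw [Lεe _ hi.ge, Complex.sub_im, hi, sub_zero]
        exact hε.trans_le (Gge _ hi.ge)
      rw [Complex.exp_im] at h2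
      have h3 : 0 < Real.sin (Lε (C 0)).im := pos_of_mul_pos_right h2 (Real.exp_pos _).le
      refine ⟨?_, by linarith [h1.2, pi_pos]⟩
      by_contra! hle
      exact absurd (Real.sin_nonpos_of_nonpos_of_neg_pi_le hle (by linarith [h1.1, pi_pos]))
        (not_le.2 h3))
  have hs0 : 0 ≤ T - 1 := by linarith
  -- `M` is so large that one step before reaching height `M` the curve is already above `R`
  have hsR : R ≤ (C (T - 1)).im := by
    have e := C2 (T - 1) hs0
    rw [sub_add_cancel] at e
    rw [e, Gim] at hT2
    have h1 := (hK _ (Cnn' _ hs0)).2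
    have h2 : K * (C (T - 1)).im ≤ K' * (C (T - 1)).im :=
      mul_le_mul_of_nonneg_right (le_max_left _ _) (Cnn' _ hs0)
    nlinarith
  -- above `R` the displacement points to the left, so its argument is confined between odd multiples
  -- of `π / 2`; which ones is decided at the single point `C (T - 1)`
  have hcos : ∀ z : ℂ, R ≤ z.im → Real.cos (L z).im < 0 := fun z hz => by
    have h1 := htop z hz
    rw [← Le z (hR.trans hz), Complex.exp_re] at h1
    by_contra! h2
    have := mul_nonneg (Real.exp_pos (L z).re).le h2
    linarith
  refine stay_between (convex_halfSpace_ge (Complex.imLm.isLinear) R).isPreconnected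
    (f := fun z => (L z).im) (by fun_prop) (fun z hz => ⟨fun h' => ?_, fun h' => ?_⟩)
    (a₀ := C (T - 1)) hsR ?_
  · have := hcos z hz
    rw [h'] at this
    simp at this
  · have := hcos z hz
    rw [h', show 3 * π / 2 = π / 2 + π by ring, Real.cos_add_pi] at this
    simp at this
  · have h1 := abs_lt.1 (Lεim _ (Cnn' _ hs0))
    refine ⟨?_, by linarith [hrot.1, hrot.2, h1.1]⟩
    by_contra! hle
    exact absurd (Real.cos_nonneg_of_neg_pi_div_two_le_of_le (by linarith [hrot.1, h1.2]) hle)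
      (not_le.2 (hcos _ hsR))

end AnnulusLift

end Subharm

namespace Subharm

namespace AnnulusLift

variable {F P B Pb : ℂ → ℂ}

/-- **Poincaré–Birkhoff theorem** on the half-infinite annulus. An area-preserving lift that
advances the angle on the boundary `r = 0` and decreases it by a definite amount near infinity has
a fixed point. Otherwise the displacement of `F` and the one of its inverse `B`, reflected by
`θ ↦ -θ`, would both have an argument going from `0` to near `π`; but one is the complex conjugate
of the other. -/
theorem poincare_birkhoff (h : AnnulusLift F P) (hB : AnnulusLift B Pb)
    (hFB : ∀ z : ℂ, 0 ≤ z.im → F (B z) = z) (hBF : ∀ z : ℂ, 0 ≤ z.im → B (F z) = z)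
    (hbot : ∀ z : ℂ, z.im = 0 → 0 < (F z - z).re) {δ R₀ : ℝ} (hδ : 0 < δ)
    (htop₀ : ∀ z : ℂ, R₀ ≤ z.im → (F z - z).re ≤ -δ) : ∃ z : ℂ, 0 < z.im ∧ F z = z := by
  by_contra! hcon
  set R := max R₀ 0 with hRdef
  have hR : 0 ≤ R := le_max_right _ _
  have htop : ∀ z : ℂ, R ≤ z.im → (F z - z).re ≤ -δ := fun z hz =>
    htop₀ z ((le_max_left _ _).trans hz)
  have hfix : ∀ z : ℂ, 0 ≤ z.im → F z ≠ z := fun z hz e => by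
    rcases eq_or_lt_of_le hz with h0 | h0
    · have := hbot z h0.symm
      simp [e] at this
    · exact hcon z h0 e
  obtain ⟨L, Lc, Le, L0⟩ := h.exists_log hbot hfix
  have hU := h.birkhoff_angle hB hFB hBF hbot hδ hR htop hfix Lc Le L0
  -- the reflected inverse
  set ρ : ℂ → ℂ := fun z => -(starRingEnd ℂ) z with hρ
  have ρi : ∀ z, (ρ z).im = z.im := fun z => by simp [hρ]
  have ρr : ∀ z, (ρ z).re = -z.re := fun z => by simp [hρ]
  have ρρ : ∀ z, ρ (ρ z) = z := fun z => by simp [hρ]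
  have h' := h.reflect
  have hB' := hB.reflect
  set F' : ℂ → ℂ := fun z => ρ (F (ρ z)) with hF'
  set B' : ℂ → ℂ := fun z => ρ (B (ρ z)) with hB'd
  have e1 : ∀ z : ℂ, 0 ≤ z.im → B' (F' z) = z := fun z hz => by
    simp only [hF', hB'd, ρρ]
    rw [hBF _ (by rw [ρi]; exact hz), ρρ]
  have e2 : ∀ z : ℂ, 0 ≤ z.im → F' (B' z) = z := fun z hz => by
    simp only [hF', hB'd, ρρ]
    rw [hFB _ (by rw [ρi]; exact hz), ρρ]
  have disp : ∀ z : ℂ, 0 ≤ z.im →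
      (B' z - z).re = (F (B (ρ z)) - B (ρ z)).re := fun z hz => by
    rw [hFB _ (by rw [ρi]; exact hz)]
    simp only [hB'd, Complex.sub_re, ρr]
    ring
  obtain ⟨c, K, hc, hg⟩ := hB.growth
  have hbot' : ∀ z : ℂ, z.im = 0 → 0 < (B' z - z).re := fun z hz => by
    rw [disp z hz.ge]
    exact hbot _ (hB.im_eq_zero (by rw [ρi]; exact hz))
  have hR' : 0 ≤ R / c := by positivity
  have htop' : ∀ z : ℂ, R / c ≤ z.im → (B' z - z).re ≤ -δ := fun z hz => by
    rw [disp z (hR'.trans hz)]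
    refine htop _ (le_trans ?_ (hg _ (by rw [ρi]; exact hR'.trans hz)).1)
    rw [ρi]
    rwa [div_le_iff₀' hc] at hz
  have hfix' : ∀ z : ℂ, 0 ≤ z.im → B' z ≠ z := fun z hz e => by
    have h1 : B (ρ z) = ρ z := by
      rw [← ρρ (B (ρ z))]
      exact congrArg ρ e
    have h2 := hFB (ρ z) (by rw [ρi]; exact hz)
    rw [h1] at h2
    exact hfix _ (by rw [ρi]; exact hz) h2
  obtain ⟨L', Lc', Le', L0'⟩ := AnnulusLift.exists_log hB' hbot' hfix'
  have hU' := AnnulusLift.birkhoff_angle hB' h' e1 e2 hbot' hδ hR' htop' hfix' Lc' Le' L0'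
  have hexp : ∀ z : ℂ, 0 ≤ z.im →
      Complex.exp (L' (ρ (F z))) = Complex.exp ((starRingEnd ℂ) (L z)) := fun z hz => by
    rw [Le' _ (by rw [ρi]; exact h.im_nonneg hz), Complex.exp_conj, Le z hz]
    simp only [hB'd, ρρ, hBF z hz]
    simp [hρ]
    ring
  have heq := log_lift_unique (convex_halfSpace_ge (Complex.imLm.isLinear) 0).isPreconnected
    (f := fun z => L' (ρ (F z))) (g := fun z => (starRingEnd ℂ) (L z))
    (by
      have := h.contF
      have : Continuous ρ := Complex.continuous_conj.neg
      fun_prop)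
    ((Complex.continuous_conj.comp Lc).continuousOn) hexp (a₀ := 0) (by simp) (by
      have h1 := congrArg norm (hexp 0 le_rfl)
      rw [Complex.norm_exp, Complex.norm_exp] at h1
      apply Complex.ext
      · exact Real.exp_injective h1
      · rw [L0' _ (by rw [ρi]; exact h.im_eq_zero rfl), Complex.conj_im, L0 0 rfl, neg_zero])
  obtain ⟨c', K', hc', hg'⟩ := h.growth
  set z : ℂ := ⟨0, max R (R / c / c')⟩ with hz
  have hz0 : R ≤ z.im := le_max_left _ _
  have hz1 : R / c / c' ≤ z.im := le_max_right _ _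
  have hz2 : R / c ≤ (F z).im := by
    refine le_trans ?_ (hg' z (hR.trans hz0)).1
    rwa [div_le_iff₀' hc'] at hz1
  have h1 := hU z hz0
  have h2 := hU' (ρ (F z)) (by rw [ρi]; exact hz2)
  have h3 := heq z (show (0 : ℝ) ≤ z.im from hR.trans hz0)
  beta_reduce at h3
  rw [h3, Complex.conj_im] at h2
  linarith [h1.1, h2.1, pi_pos]

/-- Composition with the deck transformation `θ ↦ θ + 2πj`. -/
lemma shift (h : AnnulusLift F P) (j : ℤ) :
    AnnulusLift (fun z => F (z + j * (2 * π))) P := by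
  have hp : ∀ z : ℂ, polar (z + j * (2 * π)) = polar z := fun z => by
    have e1 : (z + j * (2 * π)).im = z.im := by simp
    have e2 : (((z + j * (2 * π)).re : ℝ) : ℂ) * Complex.I = z.re * Complex.I + j * (2 * π * Complex.I) := by
      simp; ring
    rw [polar, polar, e1, e2, Complex.exp_add, Complex.exp_int_mul_two_pi_mul_I, mul_one]
  refine ⟨?_, h.contP, fun z => ?_, fun z => ?_, ?_, h.mp⟩
  · have := h.contF
    fun_prop
  · rw [← h.per]; ring_nf
  · rw [h.semi, hp]
  · obtain ⟨c, K, hc, hg⟩ := h.growth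
    exact ⟨c, K, hc, fun z hz => by
      simpa using hg (z + j * (2 * π)) (by simpa using hz)⟩

/-- A point advancing by exactly `2πj`, when the advance is larger at the bottom and smaller
at the top. -/
lemma exists_advance (h : AnnulusLift F P) (hB : AnnulusLift B Pb)
    (hFB : ∀ z : ℂ, 0 ≤ z.im → F (B z) = z) (hBF : ∀ z : ℂ, 0 ≤ z.im → B (F z) = z) (j : ℤ)
    (hbot : ∀ z : ℂ, z.im = 0 → j * (2 * π) < (F z - z).re) {δ R₀ : ℝ} (hδ : 0 < δ)
    (htop₀ : ∀ z : ℂ, R₀ ≤ z.im → (F z - z).re ≤ j * (2 * π) - δ) :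
    ∃ z : ℂ, 0 < z.im ∧ F z = z + j * (2 * π) := by
  have key : ∀ z : ℂ, F (z + (-j : ℤ) * (2 * π)) = F z - j * (2 * π) := fun z => by
    rw [h.per_int]; push_cast; ring
  have hre : ∀ z : ℂ, (F z - j * (2 * π) - z).re = (F z - z).re - j * (2 * π) := fun z => by
    simp; ring
  obtain ⟨z, hz, e⟩ := poincare_birkhoff (h.shift (-j)) (hB.shift j)
    (fun z hz => by
      rw [key, hFB _ (by simpa using hz)]; ring)
    (fun z hz => by
      rw [key, sub_add_cancel, hBF z hz])
    (fun z hz => by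
      rw [key, hre]; linarith [hbot z hz]) hδ (R₀ := R₀)
    (fun z hz => by
      rw [key, hre]; linarith [htop₀ z hz])
  refine ⟨z, hz, ?_⟩
  rw [key] at e
  linear_combination e

end AnnulusLift

end Subharm

namespace Subharm

namespace AnnulusLift

variable {F B P Pb : ℂ → ℂ}

/-- The version of `exists_advance` with the opposite twist, obtained from it by exchanging the
map and its inverse. -/
lemma exists_advance' (h : AnnulusLift F P) (hB : AnnulusLift B Pb)
    (hFB : ∀ z : ℂ, 0 ≤ z.im → F (B z) = z) (hBF : ∀ z : ℂ, 0 ≤ z.im → B (F z) = z) (j : ℤ)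
    (hbot : ∀ z : ℂ, z.im = 0 → (F z - z).re < j * (2 * π)) {δ R₀ : ℝ} (hδ : 0 < δ)
    (htop₀ : ∀ z : ℂ, R₀ ≤ z.im → j * (2 * π) + δ ≤ (F z - z).re) :
    ∃ z : ℂ, 0 < z.im ∧ F z = z + j * (2 * π) := by
  obtain ⟨c, K, hc, hg⟩ := hB.growth
  have key : ∀ z : ℂ, 0 ≤ z.im → (B z - z).re = -(F (B z) - B z).re := fun z hz => by
    rw [hFB z hz]; simp
  obtain ⟨z, hz, e⟩ := hB.exists_advance h hBF hFB (-j)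
    (fun z hz => by
      rw [key z hz.ge]
      have := hbot (B z) (hB.im_eq_zero hz)
      push_cast; linarith) hδ (R₀ := max 0 (R₀ / c))
    (fun z hz => by
      have h0 : 0 ≤ z.im := (le_max_left _ _).trans hz
      have h1 : R₀ ≤ (B z).im := by
        have h2 := (div_le_iff₀' hc).1 ((le_max_right _ _).trans hz)
        exact h2.trans (hg z h0).1
      rw [key z h0]
      have := htop₀ _ h1
      push_cast; linarith)
  refine ⟨B z, hB.im_pos hz, ?_⟩
  rw [hFB z hz.le, e]
  push_cast; ring

end AnnulusLift

end Subharm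

namespace Subharm

/-! ### Planar systems with linear growth: existence, uniqueness, bounds -/

/-- The vector field of `u'' + h(t,u) = 0` in the plane `z = u - i u'`. With this sign the clockwise
winding of `(u, u')` is the counterclockwise winding of `z`. -/
noncomputable def V (h : ℝ → ℝ → ℝ) (t : ℝ) (z : ℂ) : ℂ := ⟨-z.im, h t z.re⟩

/-- `z` is a solution, on the whole line, of the planar system. -/
def Sol (h : ℝ → ℝ → ℝ) (z : ℝ → ℂ) : Prop := ∀ t, HasDerivAt z (V h t (z t)) t

/-- The nonlinearities considered: continuous, with linear growth of rate `A`, vanishing at `y = 0`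
and Lipschitz in `y` on bounded sets, uniformly in time. -/
structure Adm (A : ℝ) (h : ℝ → ℝ → ℝ) : Prop where
  cont : Continuous (Function.uncurry h)
  nonneg : 0 ≤ A
  lin : ∀ t y, |h t y| ≤ A * |y|
  lip : ∀ M, ∃ K, 0 ≤ K ∧ ∀ t y y', |y| ≤ M → |y'| ≤ M → |h t y - h t y'| ≤ K * |y - y'|

lemma norm_mk_le (a b : ℝ) : ‖(⟨a, b⟩ : ℂ)‖ ≤ |a| + |b| := Complex.norm_le_abs_re_add_abs_im _

lemma norm_exp_bound_right {z W : ℝ → ℂ} {a b C : ℝ} (hab : a ≤ b)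
    (hz : ∀ t ∈ Set.Icc a b, HasDerivWithinAt z (W t) (Set.Icc a b) t)
    (hW : ∀ t ∈ Set.Icc a b, ‖W t‖ ≤ C * ‖z t‖) : ‖z b‖ ≤ ‖z a‖ * Real.exp (C * (b - a)) := by
  have := norm_le_gronwallBound_of_norm_deriv_right_le (f := z) (f' := W) (δ := ‖z a‖) (K := C)
    (ε := 0) (a := a) (b := b) (fun t ht => (hz t ht).continuousWithinAt)
    (fun t ht => (hz t ⟨ht.1, ht.2.le⟩).mono_of_mem_nhdsWithin (Icc_mem_nhdsGE_of_mem ht)) le_rfl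
    (fun t ht => by simpa using hW t ⟨ht.1, ht.2.le⟩) b ⟨hab, le_rfl⟩
  rwa [gronwallBound_ε0] at this

lemma norm_exp_bound_left {z W : ℝ → ℂ} {a b C : ℝ} (hab : a ≤ b)
    (hz : ∀ t ∈ Set.Icc a b, HasDerivWithinAt z (W t) (Set.Icc a b) t)
    (hW : ∀ t ∈ Set.Icc a b, ‖W t‖ ≤ C * ‖z t‖) : ‖z a‖ ≤ ‖z b‖ * Real.exp (C * (b - a)) := by
  have hm : ∀ t ∈ Set.Icc a b, a + b - t ∈ Set.Icc a b := fun t ht =>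
    ⟨by linarith [ht.2], by linarith [ht.1]⟩
  have := norm_exp_bound_right (z := fun t => z (a + b - t)) (W := fun t => -W (a + b - t)) hab
    (C := C) (fun t ht => by
      have h1 : HasDerivWithinAt (fun s : ℝ => a + b - s) (-1) (Set.Icc a b) t := by
        simpa using (hasDerivWithinAt_id t _).const_sub (a + b)
      simpa [Function.comp_def] using (hz _ (hm t ht)).scomp t h1 hm)
    (fun t ht => by simpa using hW _ (hm t ht))
  simpa using this

namespace Adm

variable {A : ℝ} {h : ℝ → ℝ → ℝ}

lemma norm_V_le (H : Adm A h) (t : ℝ) (z : ℂ) : ‖V h t z‖ ≤ (1 + A) * ‖z‖ := by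
  have h1 := norm_mk_le (-z.im) (h t z.re)
  have h2 := H.lin t z.re
  have h3 := Complex.abs_re_le_norm z
  have h4 := Complex.abs_im_le_norm z
  have h5 := mul_le_mul_of_nonneg_left h3 H.nonneg
  rw [abs_neg] at h1
  unfold V
  linarith

lemma zero (H : Adm A h) (t : ℝ) : h t 0 = 0 := by simpa using H.lin t 0

lemma continuous_V (H : Adm A h) : Continuous fun p : ℝ × ℂ => V h p.1 p.2 := by
  have h1 : Continuous fun p : ℝ × ℂ => h p.1 p.2.re :=
    H.cont.comp (continuous_fst.prodMk (Complex.continuous_re.comp continuous_snd))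
  have : (fun p : ℝ × ℂ => V h p.1 p.2) = fun p =>
      Complex.equivRealProdCLM.symm (-p.2.im, h p.1 p.2.re) := by
    ext p
    apply Complex.ext <;> simp [V, Complex.equivRealProdCLM_symm_apply]
  rw [this]
  exact Complex.equivRealProdCLM.symm.continuous.comp
    (((Complex.continuous_im.comp continuous_snd).neg).prodMk h1)

lemma V_lip (H : Adm A h) (M : ℝ) : ∃ K, 0 ≤ K ∧ ∀ t (z w : ℂ), |z.re| ≤ M → |w.re| ≤ M →
    ‖V h t z - V h t w‖ ≤ K * ‖z - w‖ := by
  obtain ⟨K, hK, hl⟩ := H.lip M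
  refine ⟨1 + K, by positivity, fun t z w hz hw => ?_⟩
  have e : V h t z - V h t w = ⟨-(z.im - w.im), h t z.re - h t w.re⟩ := by
    apply Complex.ext <;> simp [V]; ring
  rw [e]
  have h1 := norm_mk_le (-(z.im - w.im)) (h t z.re - h t w.re)
  have h2 := hl t _ _ hz hw
  have h3 := Complex.abs_re_le_norm (z - w)
  have h4 := Complex.abs_im_le_norm (z - w)
  rw [Complex.sub_re] at h3
  rw [Complex.sub_im] at h4
  have h5 := mul_le_mul_of_nonneg_left h3 hK
  rw [abs_neg] at h1
  linarith

lemma V_lipschitzOn (H : Adm A h) (M : ℝ) : ∃ K : NNReal, ∀ t,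
    LipschitzOnWith K (V h t) {z | |z.re| ≤ M} := by
  obtain ⟨K, hK, hl⟩ := H.V_lip M
  refine ⟨⟨K, hK⟩, fun t => LipschitzOnWith.of_dist_le_mul fun z hz w hw => ?_⟩
  rw [dist_eq_norm, dist_eq_norm]
  exact hl t z w hz hw

/-- A local solution grows at most exponentially, forwards and backwards. -/
lemma norm_local_le (H : Adm A h) {z : ℝ → ℂ} {S : ℝ}
    (hz : ∀ t ∈ Set.Ioo (-S) S, HasDerivAt z (V h t (z t)) t) {t : ℝ}
    (ht : t ∈ Set.Ioo (-S) S) :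
    ‖z t‖ ≤ ‖z 0‖ * Real.exp ((1 + A) * |t|) ∧ ‖z 0‖ ≤ ‖z t‖ * Real.exp ((1 + A) * |t|) := by
  rcases le_total 0 t with h0 | h0
  · have h1 : ∀ s ∈ Set.Icc 0 t, HasDerivWithinAt z (V h s (z s)) (Set.Icc 0 t) s := fun s hs =>
      (hz s ⟨by linarith [hs.1, ht.1, hs.2, ht.2], by linarith [hs.2, ht.2]⟩).hasDerivWithinAt
    have h2 : ∀ s ∈ Set.Icc 0 t, ‖V h s (z s)‖ ≤ (1 + A) * ‖z s‖ := fun s _ => H.norm_V_le s _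
    have h3 := norm_exp_bound_right h0 h1 h2
    have h4 := norm_exp_bound_left h0 h1 h2
    rw [sub_zero] at h3 h4
    rw [abs_of_nonneg h0]
    exact ⟨h3, h4⟩
  · have h1 : ∀ s ∈ Set.Icc t 0, HasDerivWithinAt z (V h s (z s)) (Set.Icc t 0) s := fun s hs =>
      (hz s ⟨by linarith [hs.1, ht.1], by linarith [hs.2, hs.1, ht.1, ht.2]⟩).hasDerivWithinAt
    have h2 : ∀ s ∈ Set.Icc t 0, ‖V h s (z s)‖ ≤ (1 + A) * ‖z s‖ := fun s _ => H.norm_V_le s _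
    have h3 := norm_exp_bound_right h0 h1 h2
    have h4 := norm_exp_bound_left h0 h1 h2
    rw [zero_sub] at h3 h4
    rw [abs_of_nonpos h0]
    exact ⟨h4, h3⟩

lemma norm_le (H : Adm A h) {z : ℝ → ℂ} (hz : Sol h z) (t : ℝ) :
    ‖z t‖ ≤ ‖z 0‖ * Real.exp ((1 + A) * |t|) :=
  (H.norm_local_le (S := |t| + 1) (fun s _ => hz s)
    (abs_lt.1 (lt_add_one |t|))).1

lemma norm_ge (H : Adm A h) {z : ℝ → ℂ} (hz : Sol h z) (t : ℝ) :
    ‖z 0‖ ≤ ‖z t‖ * Real.exp ((1 + A) * |t|) :=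
  (H.norm_local_le (S := |t| + 1) (fun s _ => hz s)
    (abs_lt.1 (lt_add_one |t|))).2

/-- Uniqueness of local solutions. -/
lemma unique_local (H : Adm A h) {z w : ℝ → ℂ} {S : ℝ}
    (hz : ∀ t ∈ Set.Ioo (-S) S, HasDerivAt z (V h t (z t)) t)
    (hw : ∀ t ∈ Set.Ioo (-S) S, HasDerivAt w (V h t (w t)) t) (h0 : z 0 = w 0) :
    Set.EqOn z w (Set.Ioo (-S) S) := by
  intro t ht
  have hS : 0 < S := by linarith [ht.1, ht.2]
  set M := ‖z 0‖ * Real.exp ((1 + A) * S) with hM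
  obtain ⟨K, hK⟩ := H.V_lipschitzOn M
  have hb : ∀ y : ℝ → ℂ, (∀ t ∈ Set.Ioo (-S) S, HasDerivAt y (V h t (y t)) t) → y 0 = z 0 →
      ∀ t ∈ Set.Ioo (-S) S, |(y t).re| ≤ M := fun y hy hy0 t ht => by
    refine (Complex.abs_re_le_norm _).trans ((H.norm_local_le hy ht).1.trans ?_)
    rw [hy0]
    have h1 : |t| ≤ S := abs_le.2 ⟨ht.1.le, ht.2.le⟩
    have := H.nonneg
    rw [hM]
    gcongr
  exact ODE_solution_unique_of_mem_Ioo (v := V h) (s := fun _ => {z | |z.re| ≤ M}) (K := K)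
    (t₀ := 0) (fun t _ => hK t) ⟨by linarith, hS⟩
    (fun t ht => ⟨hz t ht, hb z hz rfl t ht⟩) (fun t ht => ⟨hw t ht, hb w hw h0.symm t ht⟩) h0 ht

lemma unique (H : Adm A h) {z w : ℝ → ℂ} (hz : Sol h z) (hw : Sol h w) (h0 : z 0 = w 0) :
    z = w := by
  ext t
  exact H.unique_local (S := |t| + 1) (fun s _ => hz s) (fun s _ => hw s) h0
    (abs_lt.1 (lt_add_one |t|))

/-- Solutions exist on every bounded interval: truncate the field far away, apply Picard–Lindelöf,
and observe that the a priori bound keeps the solution where nothing was truncated. -/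
lemma exists_local (H : Adm A h) (ζ : ℂ) {S : ℝ} (hS : 0 < S) :
    ∃ z : ℝ → ℂ, z 0 = ζ ∧ ∀ t ∈ Set.Ioo (-S) S, HasDerivAt z (V h t (z t)) t := by
  set M := ‖ζ‖ * Real.exp ((1 + A) * S) with hM
  have hM0 : 0 ≤ M := by positivity
  -- truncation of a coordinate to `[-M, M]`
  set cl : ℝ → ℝ := fun y => max (-M) (min y M) with hcl
  have clM : ∀ y, |cl y| ≤ M := fun y =>
    abs_le.2 ⟨le_max_left _ _, max_le (by linarith) (min_le_right _ _)⟩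
  have clid : ∀ y, |y| ≤ M → cl y = y := fun y hy => by
    have := abs_le.1 hy
    simp [hcl, this.1, this.2]
  have cllip : ∀ y y', |cl y - cl y'| ≤ |y - y'| := fun y y' => by
    refine (abs_max_sub_max_le_max _ _ _ _).trans (max_le (by simp) ?_)
    exact (abs_min_sub_min_le_max _ _ _ _).trans (max_le le_rfl (by simp))
  have clabs : ∀ y, |cl y| ≤ |y| := fun y => by
    have h0 : cl 0 = 0 := clid 0 (by simpa using hM0)
    simpa [h0] using cllip y 0
  have clc : Continuous cl := by fun_prop
  set c : ℂ → ℂ := fun z => ⟨cl z.re, cl z.im⟩ with hc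
  have cc : Continuous c := by
    have : c = fun z => Complex.equivRealProdCLM.symm (cl z.re, cl z.im) := by
      ext z
      apply Complex.ext <;> simp [hc, Complex.equivRealProdCLM_symm_apply]
    rw [this]
    fun_prop
  obtain ⟨K, hK, hl⟩ := H.lip M
  have hlip : ∀ t (z w : ℂ), ‖V h t (c z) - V h t (c w)‖ ≤ (1 + K) * ‖z - w‖ := fun t z w => by
    have e : V h t (c z) - V h t (c w) =
        ⟨-(cl z.im - cl w.im), h t (cl z.re) - h t (cl w.re)⟩ := by
      apply Complex.ext <;> simp [V, hc]; ring
    rw [e]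
    have h1 := norm_mk_le (-(cl z.im - cl w.im)) (h t (cl z.re) - h t (cl w.re))
    have h2 := hl t _ _ (clM z.re) (clM w.re)
    have h3 := (cllip z.re w.re).trans (Complex.abs_re_le_norm (z - w))
    have h4 := (cllip z.im w.im).trans (Complex.abs_im_le_norm (z - w))
    have h5 := mul_le_mul_of_nonneg_left h3 hK
    rw [abs_neg] at h1
    linarith
  have hbd : ∀ t z, ‖V h t (c z)‖ ≤ M + A * M := fun t z => by
    have h1 := norm_mk_le (-cl z.im) (h t (cl z.re))
    have h2 := H.lin t (cl z.re)
    have h3 := mul_le_mul_of_nonneg_left (clM z.re) H.nonneg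
    have h4 := clM z.im
    rw [abs_neg] at h1
    simp only [V, hc]
    linarith
  have hbd' : ∀ t z, ‖V h t (c z)‖ ≤ (1 + A) * ‖z‖ := fun t z => by
    have h1 := norm_mk_le (-cl z.im) (h t (cl z.re))
    have h2 := H.lin t (cl z.re)
    have h3 := mul_le_mul_of_nonneg_left ((clabs z.re).trans (Complex.abs_re_le_norm z)) H.nonneg
    have h4 := (clabs z.im).trans (Complex.abs_im_le_norm z)
    rw [abs_neg] at h1
    simp only [V, hc]
    linarith
  have hMA : 0 ≤ M + A * M := by have := H.nonneg; positivity
  have hPL : IsPicardLindelof (fun t z => V h t (c z)) (tmin := -S) (tmax := S)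
      ⟨0, by constructor <;> linarith⟩ ζ ⟨(M + A * M) * S, by positivity⟩ 0 ⟨M + A * M, hMA⟩
      ⟨1 + K, by positivity⟩ := by
    refine ⟨fun t _ => LipschitzOnWith.of_dist_le_mul fun z _ w _ => ?_, fun z _ => ?_,
      fun t _ z _ => hbd t z, ?_⟩
    · rw [dist_eq_norm, dist_eq_norm]
      exact hlip t z w
    · exact (H.continuous_V.comp (continuous_id.prodMk continuous_const)).continuousOn
    · simp only [sub_zero, zero_sub, neg_neg, max_self, NNReal.coe_zero]
      exact le_rfl
  obtain ⟨z, z0, hz⟩ := hPL.exists_eq_forall_mem_Icc_hasDerivWithinAt₀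
  have z0 : z 0 = ζ := z0
  refine ⟨z, z0, fun t ht => ?_⟩
  have hzM : ‖z t‖ ≤ M := by
    have habs : |t| ≤ S := abs_le.2 ⟨ht.1.le, ht.2.le⟩
    have hA := H.nonneg
    have hle : ‖ζ‖ * Real.exp ((1 + A) * |t|) ≤ M := by rw [hM]; gcongr
    refine le_trans ?_ hle
    rcases le_total 0 t with h0 | h0
    · have := norm_exp_bound_right (z := z) (W := fun s => V h s (c (z s))) (C := 1 + A) h0
        (fun s hs => (hz s ⟨by linarith [hs.1], by linarith [hs.2, ht.2]⟩).mono
          (Set.Icc_subset_Icc (by linarith) ht.2.le)) (fun s _ => hbd' s _)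
      rw [abs_of_nonneg h0]
      rwa [sub_zero, z0] at this
    · have := norm_exp_bound_left (z := z) (W := fun s => V h s (c (z s))) (C := 1 + A) h0
        (fun s hs => (hz s ⟨by linarith [hs.1, ht.1], by linarith [hs.2]⟩).mono
          (Set.Icc_subset_Icc ht.1.le hS.le)) (fun s _ => hbd' s _)
      rw [abs_of_nonpos h0]
      rwa [zero_sub, z0] at this
  have e : c (z t) = z t := by
    apply Complex.ext
    · exact clid _ ((Complex.abs_re_le_norm _).trans hzM)
    · exact clid _ ((Complex.abs_im_le_norm _).trans hzM)
  have := (hz t ⟨ht.1.le, ht.2.le⟩).hasDerivAt (Icc_mem_nhds ht.1 ht.2)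
  beta_reduce at this
  rwa [e] at this

/-- Solutions exist on the whole line. -/
lemma exists_sol (H : Adm A h) (ζ : ℂ) : ∃ z : ℝ → ℂ, Sol h z ∧ z 0 = ζ := by
  have hpos : ∀ n : ℕ, (0 : ℝ) < n + 1 := fun n => by positivity
  choose y y0 hy using fun n : ℕ => H.exists_local ζ (hpos n)
  have heq : ∀ (n m : ℕ) (t : ℝ), |t| < n + 1 → |t| < m + 1 → y n t = y m t := by
    have key : ∀ (n m : ℕ) (t : ℝ), n ≤ m → |t| < n + 1 → y n t = y m t := by
      intro n m t hnm ht
      have hnm' : (n : ℝ) ≤ m := by exact_mod_cast hnm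
      exact H.unique_local (S := n + 1) (hy n)
        (fun s hs => hy m s ⟨by linarith [hs.1], by linarith [hs.2]⟩) (by rw [y0, y0])
        (abs_lt.1 ht)
    intro n m t hn hm
    rcases le_total n m with h | h
    · exact key n m t h hn
    · exact (key m n t h hm).symm
  refine ⟨fun t => y ⌈|t|⌉₊ t, fun t => ?_, by simp [y0]⟩
  have h1 : |t| < ⌈|t|⌉₊ + 1 := (Nat.le_ceil _).trans_lt (lt_add_one _)
  have h2 := hy ⌈|t|⌉₊ t (abs_lt.1 h1)
  refine h2.congr_of_eventuallyEq ?_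
  have h3 : ∀ᶠ s : ℝ in 𝓝 t, |s| < (⌈|t|⌉₊ : ℝ) + 1 := continuous_abs.continuousAt.eventually_lt_const h1
  filter_upwards [h3] with s hs
  exact heq _ _ _ ((Nat.le_ceil _).trans_lt (lt_add_one _)) hs

end Adm

/-- The solution of the planar system with value `ζ` at time `0`. -/
noncomputable def flow (h : ℝ → ℝ → ℝ) (ζ : ℂ) : ℝ → ℂ :=
  Classical.epsilon fun z => Sol h z ∧ z 0 = ζ

namespace Adm

variable {A : ℝ} {h : ℝ → ℝ → ℝ}

lemma flow_sol (H : Adm A h) (ζ : ℂ) : Sol h (flow h ζ) :=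
  (Classical.epsilon_spec (H.exists_sol ζ)).1

lemma flow_zero (H : Adm A h) (ζ : ℂ) : flow h ζ 0 = ζ :=
  (Classical.epsilon_spec (H.exists_sol ζ)).2

lemma eq_flow (H : Adm A h) {z : ℝ → ℂ} (hz : Sol h z) : z = flow h (z 0) :=
  H.unique hz (H.flow_sol _) (H.flow_zero _).symm

lemma ne_zero (H : Adm A h) {z : ℝ → ℂ} (hz : Sol h z) (h0 : z 0 ≠ 0) (t : ℝ) : z t ≠ 0 := by
  intro e
  have := H.norm_ge hz t
  rw [e, norm_zero, zero_mul] at this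
  exact h0 (norm_le_zero_iff.1 this)

end Adm

lemma Sol.continuous {h : ℝ → ℝ → ℝ} {z : ℝ → ℂ} (hz : Sol h z) : Continuous z :=
  continuous_iff_continuousAt.2 fun t => (hz t).continuousAt

lemma Adm.continuous_V_sol {A : ℝ} {h : ℝ → ℝ → ℝ} (H : Adm A h) {z : ℝ → ℂ} (hz : Continuous z) :
    Continuous fun t => V h t (z t) :=
  H.continuous_V.comp (continuous_id.prodMk hz)

end Subharm

namespace Subharm

/-! ### Continuous dependence of solutions and of their logarithms -/

lemma gronwall_int {d d' : ℝ → ℂ} {g : ℝ → ℝ} {K S : ℝ} (hK : 0 ≤ K)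
    (hd : ∀ t, HasDerivAt d (d' t) t) (hg : Continuous g) (hg0 : ∀ t, 0 ≤ g t)
    (hb : ∀ t ∈ Set.Icc 0 S, ‖d' t‖ ≤ K * ‖d t‖ + g t) :
    ∀ t ∈ Set.Icc 0 S, ‖d t‖ ≤ (‖d 0‖ + ∫ s in (0 : ℝ)..S, g s) * Real.exp (K * S) := by
  intro t ht
  have hS : 0 ≤ S := ht.1.trans ht.2
  have key : ∀ η > 0, ‖d t‖ ≤ (‖d 0‖ + (∫ s in (0 : ℝ)..t, g s) + η * t) * Real.exp (K * t) := by
    intro η hη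
    have hG : ∀ x, HasDerivAt (fun x => ∫ s in (0 : ℝ)..x, g s) (g x) x := fun x =>
      intervalIntegral.integral_hasDerivAt_right (hg.intervalIntegrable _ _)
        (hg.stronglyMeasurableAtFilter _ _) hg.continuousAt
    have hB : ∀ x, HasDerivAt
        (fun x => (‖d 0‖ + (∫ s in (0 : ℝ)..x, g s) + η * x) * Real.exp (K * x))
        ((g x + η) * Real.exp (K * x) +
          (‖d 0‖ + (∫ s in (0 : ℝ)..x, g s) + η * x) * (Real.exp (K * x) * K)) x := fun x => by
      have h1 := ((hG x).const_add ‖d 0‖).add ((hasDerivAt_id x).const_mul η)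
      have h2 := ((hasDerivAt_id x).const_mul K).exp
      refine (h1.mul h2).congr_deriv ?_
      simp
    refine image_norm_le_of_norm_deriv_right_lt_deriv_boundary' (f := d) (f' := d') (a := 0)
      (b := S) (fun x _ => (hd x).continuousAt.continuousWithinAt)
      (fun x _ => (hd x).hasDerivWithinAt) (by simp)
      (fun x _ => (hB x).continuousAt.continuousWithinAt) (fun x _ => (hB x).hasDerivWithinAt)
      (fun x hx he => ?_) ht
    have h1 := hb x ⟨hx.1, hx.2.le⟩
    rw [he] at h1
    have h2 : 1 ≤ Real.exp (K * x) := Real.one_le_exp (mul_nonneg hK hx.1)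
    have h3 := hg0 x
    nlinarith
  have hint : (∫ s in (0 : ℝ)..t, g s) ≤ ∫ s in (0 : ℝ)..S, g s :=
    intervalIntegral.integral_mono_interval le_rfl ht.1 ht.2 (Filter.Eventually.of_forall hg0)
      (hg.intervalIntegrable _ _)
  have hint0 : 0 ≤ ∫ s in (0 : ℝ)..t, g s := intervalIntegral.integral_nonneg ht.1 fun s _ => hg0 s
  have hlim : ‖d t‖ ≤ (‖d 0‖ + (∫ s in (0 : ℝ)..t, g s) + 0 * t) * Real.exp (K * t) := by
    have hc : Tendsto (fun η : ℝ => (‖d 0‖ + (∫ s in (0 : ℝ)..t, g s) + η * t) * Real.exp (K * t))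
        (𝓝[>] 0) (𝓝 ((‖d 0‖ + (∫ s in (0 : ℝ)..t, g s) + 0 * t) * Real.exp (K * t))) := by
      have : Continuous fun η : ℝ =>
        (‖d 0‖ + (∫ s in (0 : ℝ)..t, g s) + η * t) * Real.exp (K * t) := by fun_prop
      exact this.continuousWithinAt
    exact ge_of_tendsto hc (eventually_mem_nhdsWithin.mono fun η hη => key η hη)
  refine hlim.trans ?_
  rw [zero_mul, add_zero]
  have : K * t ≤ K * S := mul_le_mul_of_nonneg_left ht.2 hK
  have h0 := norm_nonneg (d 0)
  gcongr
  linarith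

variable {A : ℝ} {h : ℝ → ℝ → ℝ}

/-- The increment over `[0,S]` of a logarithm of the solution `z`. Its imaginary part is the
angle swept by `z`. -/
noncomputable def logInt (h : ℝ → ℝ → ℝ) (z : ℝ → ℂ) (S : ℝ) : ℂ :=
  ∫ t in (0 : ℝ)..S, V h t (z t) / z t

lemma Adm.norm_logDeriv_le (H : Adm A h) (t : ℝ) (z : ℂ) : ‖V h t z / z‖ ≤ 1 + A := by
  have := H.nonneg
  rw [norm_div]
  exact div_le_of_le_mul₀ (norm_nonneg _) (by positivity) (H.norm_V_le t z)

lemma Adm.continuous_logDeriv (H : Adm A h) {z : ℝ → ℂ} (hz : Sol h z) (h0 : z 0 ≠ 0) :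
    Continuous fun t => V h t (z t) / z t :=
  (H.continuous_V_sol hz.continuous).div hz.continuous (H.ne_zero hz h0)

lemma Adm.hasDerivAt_logInt (H : Adm A h) {z : ℝ → ℂ} (hz : Sol h z) (h0 : z 0 ≠ 0) (t : ℝ) :
    HasDerivAt (logInt h z) (V h t (z t) / z t) t := by
  have hc := H.continuous_logDeriv hz h0
  exact intervalIntegral.integral_hasDerivAt_right (hc.intervalIntegrable _ _)
    (hc.stronglyMeasurableAtFilter _ _) hc.continuousAt

lemma Adm.exp_logInt (H : Adm A h) {z : ℝ → ℂ} (hz : Sol h z) (h0 : z 0 ≠ 0) (t : ℝ) :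
    z t = z 0 * Complex.exp (logInt h z t) := by
  have h1 : ∀ s, HasDerivAt (fun s => z s * Complex.exp (-logInt h z s)) 0 s := fun s => by
    have := (hz s).mul (H.hasDerivAt_logInt hz h0 s).neg.cexp
    refine this.congr_deriv ?_
    have hz0 := H.ne_zero hz h0 s
    field_simp
    ring
  have h2 := is_const_of_deriv_eq_zero (fun s => (h1 s).differentiableAt)
    (fun s => (h1 s).deriv) t 0
  beta_reduce at h2
  rw [show logInt h z 0 = 0 from intervalIntegral.integral_same, neg_zero, Complex.exp_zero,
    mul_one] at h2
  rw [← h2, mul_assoc, ← Complex.exp_add, neg_add_cancel, Complex.exp_zero, mul_one]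

section limit

variable {hn : ℕ → ℝ → ℝ → ℝ} {wn : ℕ → ℝ → ℂ} {w : ℝ → ℂ}

/-- Solutions depend continuously on the nonlinearity and on the initial value. The convergence of
nonlinearities is only pointwise in time. -/
lemma Adm.tendsto_sol (Hn : ∀ n, Adm A (hn n)) (H : Adm A h)
    (hconv : ∀ t M η, 0 < η → ∀ᶠ n in atTop, ∀ y, |y| ≤ M → |hn n t y - h t y| ≤ η)
    (hwn : ∀ n, Sol (hn n) (wn n)) (hw : Sol h w)
    (h0 : Tendsto (fun n => wn n 0) atTop (𝓝 (w 0))) {S : ℝ} (hS : 0 ≤ S) :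
    Tendsto (fun n => wn n S) atTop (𝓝 (w S)) := by
  set M := (‖w 0‖ + 1) * Real.exp ((1 + A) * S) with hM
  have hA := H.nonneg
  have hb0 : ∀ᶠ n in atTop, ‖wn n 0‖ ≤ ‖w 0‖ + 1 :=
    (h0.norm.eventually_lt_const (lt_add_one _)).mono fun _ => le_of_lt
  have hb : ∀ {k : ℝ → ℝ → ℝ} {y : ℝ → ℂ}, Adm A k → Sol k y → ‖y 0‖ ≤ ‖w 0‖ + 1 →
      ∀ t ∈ Set.Icc 0 S, |(y t).re| ≤ M := fun {k y} Hk hy hy0 t ht => by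
    refine (Complex.abs_re_le_norm _).trans ((Hk.norm_le hy t).trans ?_)
    have h1 : |t| ≤ S := by rw [abs_of_nonneg ht.1]; exact ht.2
    rw [hM]
    gcongr
  obtain ⟨K, hK, hl⟩ := H.V_lip M
  set g : ℕ → ℝ → ℝ := fun n t => |hn n t (wn n t).re - h t (wn n t).re| with hg
  have gc : ∀ n, Continuous (g n) := fun n => by
    have h1 : Continuous fun t => (wn n t).re := Complex.continuous_re.comp (hwn n).continuous
    exact (((Hn n).cont.comp (continuous_id.prodMk h1)).sub
      (H.cont.comp (continuous_id.prodMk h1))).abs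
  -- pointwise convergence in time suffices, by dominated convergence
  have hgint : Tendsto (fun n => ∫ s in (0 : ℝ)..S, g n s) atTop (𝓝 0) := by
    have := intervalIntegral.tendsto_integral_filter_of_dominated_convergence (μ := MeasureTheory.volume)
      (a := 0) (b := S) (l := atTop) (F := g) (f := fun _ => (0 : ℝ)) (fun _ => 2 * A * M)
      (Eventually.of_forall fun n => (gc n).aestronglyMeasurable)
      (hb0.mono fun n hn0 => Eventually.of_forall fun t ht => ?_) intervalIntegrable_const
      (Eventually.of_forall fun t ht => ?_)
    · simpa using this
    · rw [Set.uIoc_of_le hS] at ht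
      have h1 := hb (Hn n) (hwn n) hn0 t ⟨ht.1.le, ht.2⟩
      have h2 := (Hn n).lin t (wn n t).re
      have h3 := H.lin t (wn n t).re
      have h4 := mul_le_mul_of_nonneg_left h1 hA
      have h5 := abs_sub (hn n t (wn n t).re) (h t (wn n t).re)
      simp only [hg, Real.norm_eq_abs, abs_abs]
      linarith
    · rw [Set.uIoc_of_le hS] at ht
      rw [Metric.tendsto_atTop']
      intro η hη
      obtain ⟨N, hN⟩ := eventually_atTop.1 ((hconv t M (η / 2) (by positivity)).and hb0)
      refine ⟨N, fun n hnN => ?_⟩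
      have := (hN n hnN.le).1 _ (hb (Hn n) (hwn n) (hN n hnN.le).2 t ⟨ht.1.le, ht.2⟩)
      simp only [hg, dist_zero_right, Real.norm_eq_abs, abs_abs]
      linarith
  have hd0 : Tendsto (fun n => ‖wn n 0 - w 0‖) atTop (𝓝 0) := by
    simpa using (h0.sub_const (w 0)).norm
  have hsum : Tendsto (fun n => (‖wn n 0 - w 0‖ + ∫ s in (0 : ℝ)..S, g n s) * Real.exp (K * S))
      atTop (𝓝 0) := by
    simpa using (hd0.add hgint).mul_const (Real.exp (K * S))
  rw [tendsto_iff_norm_sub_tendsto_zero]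
  refine squeeze_zero' (Eventually.of_forall fun n => norm_nonneg _) (hb0.mono fun n hn0 => ?_) hsum
  refine gronwall_int (d := fun t => wn n t - w t) hK (fun t => (hwn n t).sub (hw t)) (gc n)
    (fun t => abs_nonneg _) (fun t ht => ?_) S ⟨hS, le_rfl⟩
  have h1 := hl t (wn n t) (w t) (hb (Hn n) (hwn n) hn0 t ht)
    (hb H hw (by linarith) t ht)
  have h2 : ‖V (hn n) t (wn n t) - V h t (wn n t)‖ ≤ g n t := by
    have : V (hn n) t (wn n t) - V h t (wn n t) =
        ⟨0, hn n t (wn n t).re - h t (wn n t).re⟩ := by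
      apply Complex.ext <;> simp [V]
    rw [this]
    refine (norm_mk_le _ _).trans ?_
    simp [hg]
  have h3 := norm_add_le (V h t (wn n t) - V h t (w t)) (V (hn n) t (wn n t) - V h t (wn n t))
  rw [show V h t (wn n t) - V h t (w t) + (V (hn n) t (wn n t) - V h t (wn n t)) =
    V (hn n) t (wn n t) - V h t (w t) by ring] at h3
  linarith

lemma Adm.tendsto_logInt (Hn : ∀ n, Adm A (hn n)) (H : Adm A h)
    (hconv : ∀ t M η, 0 < η → ∀ᶠ n in atTop, ∀ y, |y| ≤ M → |hn n t y - h t y| ≤ η)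
    (hwn : ∀ n, Sol (hn n) (wn n)) (hw : Sol h w) (hn0 : ∀ n, wn n 0 ≠ 0) (hw0 : w 0 ≠ 0)
    (h0 : Tendsto (fun n => wn n 0) atTop (𝓝 (w 0))) {S : ℝ} (hS : 0 ≤ S) :
    Tendsto (fun n => logInt (hn n) (wn n) S) atTop (𝓝 (logInt h w S)) := by
  refine intervalIntegral.tendsto_integral_filter_of_dominated_convergence (fun _ => 1 + A)
    (Eventually.of_forall fun n =>
      ((Hn n).continuous_logDeriv (hwn n) (hn0 n)).aestronglyMeasurable)
    (Eventually.of_forall fun n => Eventually.of_forall fun t _ => (Hn n).norm_logDeriv_le t _)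
    intervalIntegrable_const (Eventually.of_forall fun t ht => ?_)
  rw [Set.uIoc_of_le hS] at ht
  have ht := Adm.tendsto_sol Hn H hconv hwn hw h0 ht.1.le
  refine Tendsto.div ?_ ht (H.ne_zero hw hw0 t)
  have h1 : Tendsto (fun n => V h t (wn n t)) atTop (𝓝 (V h t (w t))) :=
    ((H.continuous_V.comp (continuous_const.prodMk continuous_id)).tendsto (w t)).comp ht
  have h2 : Tendsto (fun n => V (hn n) t (wn n t) - V h t (wn n t)) atTop (𝓝 0) := by
    rw [Metric.tendsto_atTop']
    intro η hη
    have hb0 : ∀ᶠ n in atTop, ‖wn n t‖ ≤ ‖w t‖ + 1 :=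
      (ht.norm.eventually_lt_const (lt_add_one _)).mono fun _ => le_of_lt
    obtain ⟨N, hN⟩ := eventually_atTop.1
      ((hconv t (‖w t‖ + 1) (η / 2) (by positivity)).and hb0)
    refine ⟨N, fun n hnN => ?_⟩
    have h3 := (hN n hnN.le).1 _ ((Complex.abs_re_le_norm _).trans (hN n hnN.le).2)
    have : V (hn n) t (wn n t) - V h t (wn n t) =
        ⟨0, hn n t (wn n t).re - h t (wn n t).re⟩ := by
      apply Complex.ext <;> simp [V]
    rw [dist_zero_right, this]
    refine (norm_mk_le _ _).trans_lt ?_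
    rw [abs_zero]
    linarith
  simpa using h2.add h1

end limit

end Subharm

namespace Subharm

/-! ### The lift of the time-`S` map in polar coordinates -/

/-- `h` is admissible and differentiable along the zero solution, with derivative `q`. -/
structure AdmD (A : ℝ) (h : ℝ → ℝ → ℝ) (q : ℝ → ℝ) : Prop extends Adm A h where
  contq : Continuous q
  deriv : ∀ t, HasDerivAt (h t) (q t) 0

/-- The blow-up of `h` at scale `r`. If `w` solves the system for `resc h q r` then `r w` solves
the system for `h`; at `r = 0` this is the linearization along the zero solution. -/
noncomputable def resc (h : ℝ → ℝ → ℝ) (q : ℝ → ℝ) (r t y : ℝ) : ℝ :=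
  if r = 0 then q t * y else h t (r * y) / r

lemma resc_zero (h : ℝ → ℝ → ℝ) (q : ℝ → ℝ) : resc h q 0 = fun t y => q t * y := by
  ext t y; simp [resc]

lemma resc_of_ne (h : ℝ → ℝ → ℝ) (q : ℝ → ℝ) {r : ℝ} (hr : r ≠ 0) :
    resc h q r = fun t y => h t (r * y) / r := by
  ext t y; simp [resc, hr]

lemma adm_linear {A : ℝ} {q : ℝ → ℝ} (hA : 0 ≤ A) (hq : Continuous q) (hb : ∀ t, |q t| ≤ A) :
    Adm A fun t y => q t * y := by
  refine ⟨(hq.comp continuous_fst).mul continuous_snd, hA, fun t y => ?_,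
    fun M => ⟨A, hA, fun t y y' _ _ => ?_⟩⟩
  · rw [abs_mul]; exact mul_le_mul_of_nonneg_right (hb t) (abs_nonneg _)
  · rw [← mul_sub, abs_mul]; exact mul_le_mul_of_nonneg_right (hb t) (abs_nonneg _)

/-- The lift, in the coordinates `z = θ + i r`, of the time-`S` map. -/
noncomputable def lift (h : ℝ → ℝ → ℝ) (q : ℝ → ℝ) (S : ℝ) (z : ℂ) : ℂ :=
  ⟨z.re + (logInt (resc h q z.im) (flow (resc h q z.im) (Complex.exp (z.re * Complex.I))) S).im,
    z.im * Real.exp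
      (logInt (resc h q z.im) (flow (resc h q z.im) (Complex.exp (z.re * Complex.I))) S).re⟩

/-- Time reversal of a nonlinearity on `[0,S]`. -/
def rev {α : Type*} (S : ℝ) (h : ℝ → α) : ℝ → α := fun t => h (S - t)

lemma rev_rev {α : Type*} (S : ℝ) (h : ℝ → α) : rev S (rev S h) = h := by
  ext t; simp [rev]

lemma resc_rev (h : ℝ → ℝ → ℝ) (q : ℝ → ℝ) (S r : ℝ) :
    resc (rev S h) (rev S q) r = rev S (resc h q r) := by
  ext t y; simp [resc, rev]

lemma Adm.rev {A : ℝ} {h : ℝ → ℝ → ℝ} (H : Adm A h) (S : ℝ) : Adm A (rev S h) := by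
  refine ⟨?_, H.nonneg, fun t y => H.lin _ y, fun M => ?_⟩
  · exact H.cont.comp ((continuous_const.sub continuous_fst).prodMk continuous_snd)
  · obtain ⟨K, hK, hl⟩ := H.lip M
    exact ⟨K, hK, fun t => hl _⟩

namespace AdmD

variable {A : ℝ} {h : ℝ → ℝ → ℝ} {q : ℝ → ℝ}

lemma rev (H : AdmD A h q) (S : ℝ) : AdmD A (rev S h) (rev S q) :=
  ⟨H.toAdm.rev S, H.contq.comp (continuous_const.sub continuous_id), fun _ => H.deriv _⟩

lemma q_le (H : AdmD A h q) (t : ℝ) : |q t| ≤ A := by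
  refine (H.deriv t).le_of_lip' H.nonneg (Eventually.of_forall fun y => ?_)
  simpa [H.zero] using H.lin t y

lemma resc (H : AdmD A h q) (r : ℝ) : Adm A (resc h q r) := by
  by_cases hr : r = 0
  · rw [hr, resc_zero]
    exact adm_linear H.nonneg H.contq H.q_le
  · rw [resc_of_ne _ _ hr]
    have hr' : 0 < |r| := abs_pos.2 hr
    refine ⟨?_, H.nonneg, fun t y => ?_, fun M => ?_⟩
    · exact (H.cont.comp (continuous_fst.prodMk (continuous_const.mul continuous_snd))).div_const r
    · rw [abs_div, div_le_iff₀ hr']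
      have := H.lin t (r * y)
      rw [abs_mul] at this
      linarith
    · obtain ⟨K, hK, hl⟩ := H.lip (|r| * M)
      refine ⟨K, hK, fun t y y' hy hy' => ?_⟩
      rw [← sub_div, abs_div, div_le_iff₀ hr']
      refine (hl t (r * y) (r * y') ?_ ?_).trans_eq ?_
      · rw [abs_mul]; gcongr
      · rw [abs_mul]; gcongr
      · rw [← mul_sub, abs_mul]; ring

lemma resc_tendsto (H : AdmD A h q) {rn : ℕ → ℝ} {r : ℝ} (hr : Tendsto rn atTop (𝓝 r))
    (t M η : ℝ) (hη : 0 < η) :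
    ∀ᶠ n in atTop, ∀ y, |y| ≤ M → |Subharm.resc h q (rn n) t y - Subharm.resc h q r t y| ≤ η := by
  by_cases hM : M < 0
  · exact Eventually.of_forall fun n y hy => absurd ((abs_nonneg y).trans hy) (not_le.2 hM)
  push Not at hM
  by_cases h0 : r = 0
  · subst h0
    have hε : 0 < η / (M + 1) := by positivity
    have h1 := (hasDerivAt_iff_isLittleO_nhds_zero.1 (H.deriv t)).def hε
    obtain ⟨d, hd, hball⟩ := Metric.eventually_nhds_iff.1 h1
    have h2 : ∀ᶠ n in atTop, |rn n| * (M + 1) < d := by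
      have : Tendsto (fun n => |rn n| * (M + 1)) atTop (𝓝 (|(0 : ℝ)| * (M + 1))) :=
        hr.abs.mul_const _
      exact this.eventually_lt_const (by simpa using hd)
    filter_upwards [h2] with n hn y hy
    rw [resc_zero]
    by_cases hrn : rn n = 0
    · rw [hrn, resc_zero]; simpa using hη.le
    · rw [resc_of_ne _ _ hrn]
      have hrn' : 0 < |rn n| := abs_pos.2 hrn
      have h3 : |rn n * y| < d := by
        rw [abs_mul]
        nlinarith
      have h4 := hball (show dist (rn n * y) 0 < d by simpa using h3)
      simp only [zero_add, H.zero, sub_zero, smul_eq_mul, Real.norm_eq_abs] at h4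
      have e : h t (rn n * y) / rn n - q t * y = (h t (rn n * y) - rn n * y * q t) / rn n := by
        field_simp
      rw [e, abs_div, div_le_iff₀ hrn']
      refine h4.trans ?_
      rw [abs_mul]
      have h5 : η / (M + 1) * |y| ≤ η := by
        rw [div_mul_eq_mul_div, div_le_iff₀ (by positivity)]
        nlinarith
      nlinarith
  · obtain ⟨K, hK, hl⟩ := H.lip ((|r| + 1) * M)
    have h1 : Tendsto (fun n => K * (|rn n - r| * M) / |rn n| + A * (|r| * M) * |1 / rn n - 1 / r|)
        atTop (𝓝 (K * (|r - r| * M) / |r| + A * (|r| * M) * |1 / r - 1 / r|)) := by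
      refine Tendsto.add (Tendsto.div ?_ hr.abs (abs_ne_zero.2 h0)) ?_
      · exact (((hr.sub_const r).abs).mul_const M).const_mul K
      · exact (((tendsto_const_nhds.div hr h0).sub_const _).abs).const_mul _
    rw [show K * (|r - r| * M) / |r| + A * (|r| * M) * |1 / r - 1 / r| = 0 by simp] at h1
    filter_upwards [h1.eventually_lt_const hη, hr.eventually_ne h0,
      hr.abs.eventually_lt_const (lt_add_one |r|)] with n hn hrn hrb y hy
    rw [resc_of_ne _ _ hrn, resc_of_ne _ _ h0]
    have hrn' : 0 < |rn n| := abs_pos.2 hrn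
    have e : h t (rn n * y) / rn n - h t (r * y) / r =
        (h t (rn n * y) - h t (r * y)) / rn n + h t (r * y) * (1 / rn n - 1 / r) := by
      field_simp
      ring
    rw [e]
    refine (abs_add_le _ _).trans (le_trans (add_le_add ?_ ?_) hn.le)
    · rw [abs_div]
      gcongr
      refine (hl t _ _ ?_ ?_).trans ?_
      · rw [abs_mul]; gcongr
      · rw [abs_mul]; gcongr; linarith
      · rw [← sub_mul, abs_mul]; gcongr
    · rw [abs_mul]
      gcongr
      refine (H.lin t _).trans ?_
      have := H.nonneg
      rw [abs_mul]; gcongr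

lemma sol_scale {w : ℝ → ℂ} {r : ℝ} (hr : r ≠ 0) (hw : Sol (Subharm.resc h q r) w) :
    Sol h fun t => r * w t := by
  intro t
  refine ((hw t).const_mul (r : ℂ)).congr_deriv ?_
  rw [resc_of_ne _ _ hr]
  apply Complex.ext
  · simp [V]
  · simp [V]; field_simp

lemma resc_mul (r : ℝ) {l : ℝ} (hl : l ≠ 0) (t y : ℝ) :
    Subharm.resc h q (r * l) t y = Subharm.resc h q r t (l * y) / l := by
  by_cases hr : r = 0
  · simp only [hr, zero_mul, resc_zero]
    field_simp
  · rw [resc_of_ne _ _ hr, resc_of_ne _ _ (mul_ne_zero hr hl)]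
    simp only
    rw [div_div, mul_assoc]

/-- Reversing time inverts the motion: in the logarithmic coordinates, after reflection. -/
lemma logInt_rev (H : AdmD A h q) {S : ℝ} (r : ℝ) {ζ : ℂ} (hζ : ζ ≠ 0) {L : ℂ}
    (hL : L = logInt (Subharm.resc (Subharm.rev S h) (Subharm.rev S q) r)
      (flow (Subharm.resc (Subharm.rev S h) (Subharm.rev S q) r) ζ) S) :
    logInt (Subharm.resc h q (r * Real.exp L.re))
      (flow (Subharm.resc h q (r * Real.exp L.re))
        ((starRingEnd ℂ) ζ * Complex.exp (-(L.im * Complex.I)))) S = -(starRingEnd ℂ) L := by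
  set l := Real.exp L.re with hl
  have l0 : 0 < l := Real.exp_pos _
  have lc : (l : ℂ) ≠ 0 := by exact_mod_cast l0.ne'
  have Hk := (H.rev S).resc r
  set k := Subharm.resc (Subharm.rev S h) (Subharm.rev S q) r with hk
  set y := flow k ζ with hy
  have ys : Sol k y := Hk.flow_sol ζ
  have y0 : y 0 = ζ := Hk.flow_zero ζ
  -- the reversed solution, reflected since the velocity changes sign, and rescaled so that its
  -- initial modulus is `‖ζ‖`
  set w : ℝ → ℂ := fun t => (starRingEnd ℂ) (y (S - t)) / l with hw
  have ws : Sol (Subharm.resc h q (r * l)) w := by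
    intro t
    have h1 : HasDerivAt (fun t : ℝ => S - t) (-1) t := by
      simpa using (hasDerivAt_id t).const_sub S
    have h2 := (ys (S - t)).scomp t h1
    have h3 := (Complex.conjCLE.hasFDerivAt.comp_hasDerivAt t h2).div_const (l : ℂ)
    refine (h3.congr_deriv ?_ : HasDerivAt w _ t)
    have e : k (S - t) (y (S - t)).re = Subharm.resc h q r t (y (S - t)).re := by
      rw [hk, resc_rev]; simp [Subharm.rev]
    have e2 : l * (w t).re = (y (S - t)).re := by
      simp only [hw, Complex.div_ofReal_re, Complex.conj_re]
      field_simp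
    apply Complex.ext
    · simp [V, hw]; ring
    · simp only [V]
      rw [resc_mul r l0.ne', e2, ← e]
      simp
  have Hr := H.resc (r * l)
  have w0 : w 0 = (starRingEnd ℂ) ζ * Complex.exp (-(L.im * Complex.I)) := by
    simp only [hw, sub_zero]
    rw [Hk.exp_logInt ys (by rw [y0]; exact hζ) S, y0, ← hL, map_mul, ← Complex.exp_conj]
    have : (starRingEnd ℂ) L = L.re + -(L.im * Complex.I) := by
      apply Complex.ext <;> simp
    rw [this, Complex.exp_add, ← Complex.ofReal_exp, ← hl]
    field_simp
  rw [← w0, ← Hr.eq_flow ws, hL]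
  simp only [logInt]
  have e3 : ∀ t, V (Subharm.resc h q (r * l)) t (w t) / w t =
      -(starRingEnd ℂ) (V k (S - t) (y (S - t)) / y (S - t)) := by
    intro t
    have h4 : V (Subharm.resc h q (r * l)) t (w t) = -(starRingEnd ℂ) (V k (S - t) (y (S - t))) / l := by
      have e : k (S - t) (y (S - t)).re = Subharm.resc h q r t (y (S - t)).re := by
        rw [hk, resc_rev]; simp [Subharm.rev]
      have e2 : l * (w t).re = (y (S - t)).re := by
        simp only [hw, Complex.div_ofReal_re, Complex.conj_re]
        field_simp
      apply Complex.ext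
      · simp [V, hw]; ring
      · simp only [V]
        rw [resc_mul r l0.ne', e2, ← e]
        simp
    rw [h4]
    simp only [hw, map_div₀]
    rw [div_div_div_cancel_right₀ lc, neg_div]
  simp_rw [e3]
  rw [intervalIntegral.integral_neg,
    intervalIntegral.integral_comp_sub_left
      (fun s => (starRingEnd ℂ) (V k s (y s) / y s)) S, sub_self, sub_zero]
  congr 1
  rw [intervalIntegral, intervalIntegral, map_sub]
  rw [integral_conj, integral_conj]

/-- The inverse of the lift: reverse time and reflect. -/
noncomputable def invLift (h : ℝ → ℝ → ℝ) (q : ℝ → ℝ) (S : ℝ) (z : ℂ) : ℂ :=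
  -(starRingEnd ℂ) (lift (Subharm.rev S h) (Subharm.rev S q) S (-(starRingEnd ℂ) z))

lemma lift_invLift (H : AdmD A h q) (S : ℝ) (z : ℂ) : lift h q S (invLift h q S z) = z := by
  set ζ : ℂ := Complex.exp ((-z.re : ℝ) * Complex.I) with hζ
  obtain ⟨L, hL⟩ : ∃ L, L = logInt (Subharm.resc (Subharm.rev S h) (Subharm.rev S q) z.im)
      (flow (Subharm.resc (Subharm.rev S h) (Subharm.rev S q) z.im) ζ) S := ⟨_, rfl⟩
  have e1 : invLift h q S z = ⟨z.re - L.im, z.im * Real.exp L.re⟩ := by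
    apply Complex.ext
    · simp [invLift, lift, hL, hζ]; ring
    · simp [invLift, lift, hL, hζ]
  have e2 := H.logInt_rev z.im (Complex.exp_ne_zero _) hL
  have e3 : (starRingEnd ℂ) ζ * Complex.exp (-(L.im * Complex.I)) =
      Complex.exp ((z.re - L.im : ℝ) * Complex.I) := by
    rw [hζ, ← Complex.exp_conj, ← Complex.exp_add]
    congr 1
    simp
    ring
  rw [e3] at e2
  rw [e1, lift]
  simp only
  rw [e2]
  apply Complex.ext
  · simp
  · simp [mul_assoc, ← Real.exp_add]

lemma invLift_lift (H : AdmD A h q) (S : ℝ) (z : ℂ) : invLift h q S (lift h q S z) = z := by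
  have := (H.rev S).lift_invLift S (-(starRingEnd ℂ) z)
  simp only [invLift, rev_rev, map_neg, Complex.conj_conj, neg_neg] at this
  rw [invLift, this]
  simp

lemma continuous_logInt (H : AdmD A h q) {S : ℝ} (hS : 0 ≤ S) :
    Continuous fun z : ℂ => logInt (Subharm.resc h q z.im)
      (flow (Subharm.resc h q z.im) (Complex.exp (z.re * Complex.I))) S := by
  refine continuous_iff_seqContinuous.2 fun zn z hz => ?_
  have hre : Tendsto (fun n => (zn n).re) atTop (𝓝 z.re) :=
    (Complex.continuous_re.tendsto z).comp hz
  have him : Tendsto (fun n => (zn n).im) atTop (𝓝 z.im) :=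
    (Complex.continuous_im.tendsto z).comp hz
  refine Adm.tendsto_logInt (fun n => H.resc (zn n).im) (H.resc z.im)
    (fun t M η hη => H.resc_tendsto him t M η hη)
    (fun n => (H.resc _).flow_sol _) ((H.resc _).flow_sol _)
    (fun n => ?_) ?_ ?_ hS
  · rw [(H.resc _).flow_zero]; exact Complex.exp_ne_zero _
  · rw [(H.resc _).flow_zero]; exact Complex.exp_ne_zero _
  · simp_rw [fun n => (H.resc (zn n).im).flow_zero, (H.resc z.im).flow_zero]
    have hc : Continuous fun x : ℝ => Complex.exp (x * Complex.I) := by fun_prop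
    exact (hc.tendsto _).comp hre

lemma continuous_lift (H : AdmD A h q) {S : ℝ} (hS : 0 ≤ S) : Continuous (lift h q S) := by
  have hc := H.continuous_logInt hS
  have : lift h q S = fun z => Complex.equivRealProdCLM.symm
      (z.re + (logInt (Subharm.resc h q z.im)
        (flow (Subharm.resc h q z.im) (Complex.exp (z.re * Complex.I))) S).im,
      z.im * Real.exp (logInt (Subharm.resc h q z.im)
        (flow (Subharm.resc h q z.im) (Complex.exp (z.re * Complex.I))) S).re) := by
    ext z
    apply Complex.ext
    · simp [lift, Complex.equivRealProdCLM_symm_apply]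
    · simp [lift, Complex.equivRealProdCLM_symm_apply, -Complex.ofReal_exp]
  rw [this]
  exact Complex.equivRealProdCLM.symm.continuous.comp (by fun_prop)

lemma lift_semi (H : AdmD A h q) (S : ℝ) (z : ℂ) : polar (lift h q S z) = flow h (polar z) S := by
  set ζ : ℂ := Complex.exp (z.re * Complex.I) with hζ
  have Hr := H.resc z.im
  obtain ⟨L, hL⟩ : ∃ L, L = logInt (Subharm.resc h q z.im)
      (flow (Subharm.resc h q z.im) ζ) S := ⟨_, rfl⟩
  have e1 : lift h q S z = ⟨z.re + L.im, z.im * Real.exp L.re⟩ := by rw [lift, hL]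
  have e2 : polar (lift h q S z) = z.im * flow (Subharm.resc h q z.im) ζ S := by
    rw [Hr.exp_logInt (Hr.flow_sol ζ) (by rw [Hr.flow_zero]; exact Complex.exp_ne_zero _) S,
      Hr.flow_zero, ← hL, e1, polar, hζ, ← Complex.exp_add]
    simp only
    rw [Complex.ofReal_mul, mul_assoc, Complex.ofReal_exp, ← Complex.exp_add]
    congr 2
    apply Complex.ext <;> simp
  rw [e2]
  by_cases hz : z.im = 0
  · have h0 : polar z = 0 := by simp [polar, hz]
    have := H.norm_le (H.flow_sol 0) S
    rw [H.flow_zero, norm_zero, zero_mul] at this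
    rw [h0, norm_le_zero_iff.1 this, hz]
    simp
  · have h1 := H.eq_flow (sol_scale hz (Hr.flow_sol ζ))
    have h2 := congrFun h1 S
    beta_reduce at h2
    rw [Hr.flow_zero] at h2
    exact h2

lemma continuous_flow (H : Adm A h) {S : ℝ} (hS : 0 ≤ S) : Continuous fun ζ => flow h ζ S := by
  refine continuous_iff_seqContinuous.2 fun zn z hz => ?_
  refine Adm.tendsto_sol (fun _ => H) H (fun t M η hη => Eventually.of_forall fun n y _ => ?_)
    (fun n => H.flow_sol _) (H.flow_sol z) ?_ hS
  · simpa using hη.le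
  · simp_rw [H.flow_zero]; exact hz

open MeasureTheory in
lemma annulusLift (H : AdmD A h q) {S : ℝ} (hS : 0 ≤ S)
    (hmp : MeasurePreserving (fun ζ => flow h ζ S) volume volume) :
    AnnulusLift (lift h q S) fun ζ => flow h ζ S := by
  refine ⟨H.continuous_lift hS, continuous_flow H.toAdm hS, fun z => ?_, H.lift_semi S, ?_, hmp⟩
  · have e1 : (z + 2 * π).im = z.im := by simp
    have e2 : (((z + 2 * π).re : ℝ) : ℂ) * Complex.I = z.re * Complex.I + 2 * π * Complex.I := by
      simp; ring
    rw [lift, lift, e1, e2, Complex.exp_add, Complex.exp_two_pi_mul_I, mul_one]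
    apply Complex.ext
    · simp; ring
    · simp
  · refine ⟨(Real.exp ((1 + A) * S))⁻¹, Real.exp ((1 + A) * S), by positivity, fun z hz => ?_⟩
    set ζ : ℂ := Complex.exp (z.re * Complex.I) with hζ
    have Hr := H.resc z.im
    have hζ1 : ‖ζ‖ = 1 := Complex.norm_exp_ofReal_mul_I _
    have e1 : ‖flow (Subharm.resc h q z.im) ζ S‖ = Real.exp
        (logInt (Subharm.resc h q z.im) (flow (Subharm.resc h q z.im) ζ) S).re := by
      rw [Hr.exp_logInt (Hr.flow_sol ζ) (by rw [Hr.flow_zero]; exact Complex.exp_ne_zero _) S,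
        Hr.flow_zero, norm_mul, hζ1, one_mul, Complex.norm_exp]
    have h1 := Hr.norm_le (Hr.flow_sol ζ) S
    have h2 := Hr.norm_ge (Hr.flow_sol ζ) S
    rw [Hr.flow_zero, hζ1, abs_of_nonneg hS, e1] at h1 h2
    simp only [lift]
    rw [mul_comm _ z.im, mul_comm _ z.im]
    refine ⟨mul_le_mul_of_nonneg_left ?_ hz, mul_le_mul_of_nonneg_left (by linarith) hz⟩
    rw [inv_le_iff_one_le_mul₀ (Real.exp_pos _)]
    exact h2

end AdmD

end Subharm

namespace Subharm

open MeasureTheory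

/-! ### The flow preserves area -/

/-- One step of the symplectic Euler scheme, a composition of two shears. -/
noncomputable def eulerStep (h : ℝ → ℝ → ℝ) (τ t : ℝ) (z : ℂ) : ℂ :=
  ⟨z.re - τ * z.im, z.im + τ * h t (z.re - τ * z.im)⟩

/-- The symplectic Euler scheme with time step `τ`, started at time `0`. -/
noncomputable def euler (h : ℝ → ℝ → ℝ) (τ : ℝ) : ℕ → ℂ → ℂ
  | 0 => id
  | i + 1 => fun z => eulerStep h τ (i * τ) (euler h τ i z)

lemma shear_im_mp {g : ℝ → ℝ} (hg : Continuous g) :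
    MeasurePreserving (fun z : ℂ => (⟨z.re, z.im + g z.re⟩ : ℂ)) volume volume := by
  have h1 : MeasurePreserving (fun p : ℝ × ℝ => (p.1, p.2 + g p.1)) (volume.prod volume)
      (volume.prod volume) :=
    (MeasurePreserving.id volume).skew_product (g := fun x y => y + g x)
      (by fun_prop : Continuous _).measurable
      (Eventually.of_forall fun x => map_add_right_eq_self _ _)
  exact Complex.volume_preserving_equiv_real_prod.symm.comp
    (h1.comp Complex.volume_preserving_equiv_real_prod)

lemma shear_re_mp {g : ℝ → ℝ} (hg : Continuous g) :
    MeasurePreserving (fun z : ℂ => (⟨z.re + g z.im, z.im⟩ : ℂ)) volume volume := by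
  have h1 : MeasurePreserving (fun p : ℝ × ℝ => (p.1, p.2 + g p.1)) (volume.prod volume)
      (volume.prod volume) :=
    (MeasurePreserving.id volume).skew_product (g := fun x y => y + g x)
      (by fun_prop : Continuous _).measurable
      (Eventually.of_forall fun x => map_add_right_eq_self _ _)
  have h2 : MeasurePreserving (Prod.swap : ℝ × ℝ → ℝ × ℝ) (volume.prod volume)
      (volume.prod volume) := Measure.measurePreserving_swap
  exact Complex.volume_preserving_equiv_real_prod.symm.comp
    (h2.comp (h1.comp (h2.comp Complex.volume_preserving_equiv_real_prod)))

variable {A : ℝ} {h : ℝ → ℝ → ℝ}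

lemma Adm.eulerStep_mp (H : Adm A h) (τ t : ℝ) :
    MeasurePreserving (eulerStep h τ t) volume volume := by
  have hc : Continuous fun x => h t x := H.cont.comp (continuous_const.prodMk continuous_id)
  have h1 := shear_im_mp (g := fun x => τ * h t x) (by fun_prop)
  have h2 := shear_re_mp (g := fun y => -(τ * y)) (by fun_prop)
  exact h1.comp h2

lemma Adm.euler_mp (H : Adm A h) (τ : ℝ) (i : ℕ) :
    MeasurePreserving (euler h τ i) volume volume := by
  induction i with
  | zero => exact MeasurePreserving.id _
  | succ i ih => exact (H.eulerStep_mp τ _).comp ih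

lemma Adm.eulerStep_sub (H : Adm A h) {τ : ℝ} (h0 : 0 ≤ τ) (h1 : τ ≤ 1) (t : ℝ) (z : ℂ) :
    ‖eulerStep h τ t z - z‖ ≤ τ * ((1 + 2 * A) * ‖z‖) := by
  have e : eulerStep h τ t z - z = (τ : ℂ) * ⟨-z.im, h t (z.re - τ * z.im)⟩ := by
    apply Complex.ext <;> simp [eulerStep]
  rw [e, norm_mul, Complex.norm_real, norm_of_nonneg h0]
  have h2 := norm_mk_le (-z.im) (h t (z.re - τ * z.im))
  have h3 := H.lin t (z.re - τ * z.im)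
  have h4 := abs_sub z.re (τ * z.im)
  have h5 := Complex.abs_re_le_norm z
  have h6 := Complex.abs_im_le_norm z
  rw [abs_mul, abs_of_nonneg h0] at h4
  have h7 : τ * |z.im| ≤ 1 * ‖z‖ := by gcongr
  have h8 : A * |z.re - τ * z.im| ≤ A * (2 * ‖z‖) :=
    mul_le_mul_of_nonneg_left (by linarith) H.nonneg
  rw [abs_neg] at h2
  gcongr
  linarith

lemma Adm.euler_bounds (H : Adm A h) {τ : ℝ} (h0 : 0 ≤ τ) (h1 : τ ≤ 1)
    (h2 : (1 + 2 * A) * τ ≤ 1 / 2) (i : ℕ) (z : ℂ) :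
    ‖euler h τ i z‖ ≤ ‖z‖ * Real.exp (2 * (1 + 2 * A) * (i * τ)) ∧
    ‖z‖ ≤ ‖euler h τ i z‖ * Real.exp (2 * (1 + 2 * A) * (i * τ)) := by
  induction i with
  | zero => simp [euler]
  | succ i ih =>
    set w := euler h τ i z with hw
    set E := Real.exp (2 * (1 + 2 * A) * (i * τ)) with hE
    have hA := H.nonneg
    have e1 : Real.exp (2 * (1 + 2 * A) * ((i + 1 : ℕ) * τ)) =
        Real.exp (2 * (1 + 2 * A) * τ) * E := by
      rw [hE, ← Real.exp_add]; congr 1; push_cast; ring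
    have e2 : euler h τ (i + 1) z = eulerStep h τ (i * τ) w := rfl
    rw [e1, e2]
    set w' := eulerStep h τ (i * τ) w
    have h3 := H.eulerStep_sub h0 h1 (i * τ) w
    have h4 := Real.add_one_le_exp (2 * (1 + 2 * A) * τ)
    have h5 := norm_le_norm_add_norm_sub' w' w
    have h6 := norm_le_norm_add_norm_sub' w w'
    rw [norm_sub_rev] at h6
    have hE0 : 0 < E := Real.exp_pos _
    have hn := norm_nonneg w
    have hn' := norm_nonneg w'
    have h7 : ‖w'‖ ≤ ‖w‖ * Real.exp (2 * (1 + 2 * A) * τ) := by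
      nlinarith [mul_nonneg (mul_nonneg (by positivity : 0 ≤ 1 + 2 * A) h0) hn]
    have h8 : ‖w‖ ≤ ‖w'‖ * Real.exp (2 * (1 + 2 * A) * τ) := by
      have h9 : ‖w‖ ≤ 2 * ‖w'‖ := by nlinarith
      have h10 : τ * ((1 + 2 * A) * ‖w‖) ≤ τ * ((1 + 2 * A) * (2 * ‖w'‖)) := by gcongr
      nlinarith
    constructor
    · calc ‖w'‖ ≤ ‖w‖ * Real.exp (2 * (1 + 2 * A) * τ) := h7
        _ ≤ (‖z‖ * E) * Real.exp (2 * (1 + 2 * A) * τ) := by gcongr; exact ih.1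
        _ = _ := by ring
    · calc ‖z‖ ≤ ‖w‖ * E := ih.2
        _ ≤ (‖w'‖ * Real.exp (2 * (1 + 2 * A) * τ)) * E := by gcongr
        _ = _ := by ring

/-- One step of the error recursion for the Euler scheme. -/
lemma Adm.euler_local (H : Adm A h) {M : ℝ} : ∃ K, 0 ≤ K ∧ ∀ (w : ℝ → ℂ) (z : ℂ) (t τ ω : ℝ),
    Sol h w → 0 ≤ τ → τ ≤ 1 → ‖z‖ ≤ M → ‖w t‖ ≤ M →
    (∀ s ∈ Set.Icc t (t + τ), ‖V h s (w s) - V h t (w t)‖ ≤ ω) →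
    ‖eulerStep h τ t z - w (t + τ)‖ ≤ (1 + K * τ) * ‖z - w t‖ + τ * (ω + K * τ) := by
  obtain ⟨K, hK, hl⟩ := H.V_lip M
  obtain ⟨K', hK', hl'⟩ := H.lip (2 * M)
  by_cases hM : 0 ≤ M
  swap
  · refine ⟨0, le_rfl, fun w z t τ ω _ _ _ hz => ?_⟩
    linarith [norm_nonneg z]
  refine ⟨K + K' * M, by positivity, fun w z t τ ω hw h0 h1 hz hwt hω => ?_⟩
  -- consistency error of the explicit Euler step along the exact solution
  have a1 : ‖w (t + τ) - w t - τ * V h t (w t)‖ ≤ ω * τ := by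
    have := (convex_Icc t (t + τ)).norm_image_sub_le_of_norm_hasDerivWithin_le
      (f := fun s : ℝ => w s - (s : ℂ) * V h t (w t))
      (f' := fun s => V h s (w s) - V h t (w t)) (C := ω) (x := t) (y := t + τ)
      (fun s _ => by
        have h2 : HasDerivAt (fun s : ℝ => (s : ℂ) * V h t (w t)) (1 * V h t (w t)) s :=
          (Complex.ofRealCLM.hasDerivAt (x := s)).mul_const _
        rw [one_mul] at h2
        exact ((hw s).sub h2).hasDerivWithinAt) hω
      (by simp [h0]) (by simp [h0])
    simp only [add_sub_cancel_left, Real.norm_eq_abs, abs_of_nonneg h0] at this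
    refine le_trans (le_of_eq ?_) this
    congr 1; push_cast; ring
  have hre : |z.re| ≤ M := (Complex.abs_re_le_norm z).trans hz
  have him : |z.im| ≤ M := (Complex.abs_im_le_norm z).trans hz
  have him' : τ * |z.im| ≤ τ * M := by gcongr
  -- the symplectic step differs from the explicit one by `O(τ²)`
  have a2 : ‖eulerStep h τ t z - z - τ * V h t z‖ ≤ τ * (K' * (τ * M)) := by
    have e : eulerStep h τ t z - z - τ * V h t z =
        (τ : ℂ) * ((h t (z.re - τ * z.im) - h t z.re : ℝ) * Complex.I) := by
      apply Complex.ext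
      · simp [eulerStep, V]
      · simp [eulerStep, V]; ring
    rw [e, norm_mul, norm_mul, Complex.norm_I, mul_one, Complex.norm_real, Complex.norm_real,
      norm_of_nonneg h0, Real.norm_eq_abs]
    have h4 := abs_sub z.re (τ * z.im)
    rw [abs_mul, abs_of_nonneg h0] at h4
    have h5 : τ * M ≤ 1 * M := by gcongr
    have := hl' t (z.re - τ * z.im) z.re (by linarith) (by linarith)
    have h6 : |z.re - τ * z.im - z.re| = τ * |z.im| := by
      rw [sub_sub_cancel_left, abs_neg, abs_mul, abs_of_nonneg h0]
    rw [h6] at this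
    gcongr
    exact this.trans (by gcongr)
  have a3 := hl t z (w t) hre ((Complex.abs_re_le_norm _).trans hwt)
  have a4 : ‖(τ : ℂ) * (V h t z - V h t (w t))‖ ≤ τ * (K * ‖z - w t‖) := by
    rw [norm_mul, Complex.norm_real, norm_of_nonneg h0]; gcongr
  have e : eulerStep h τ t z - w (t + τ) = (eulerStep h τ t z - z - τ * V h t z) +
      (τ : ℂ) * (V h t z - V h t (w t)) + (z - w t) - (w (t + τ) - w t - τ * V h t (w t)) := by
    ring
  rw [e]
  have b1 := norm_sub_le ((eulerStep h τ t z - z - τ * V h t z) +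
      (τ : ℂ) * (V h t z - V h t (w t)) + (z - w t)) (w (t + τ) - w t - τ * V h t (w t))
  have b2 := norm_add₃_le (a := eulerStep h τ t z - z - τ * V h t z)
    (b := (τ : ℂ) * (V h t z - V h t (w t))) (c := z - w t)
  have b3 : 0 ≤ K' * M * τ * ‖z - w t‖ := by positivity
  have b4 : 0 ≤ τ * (K * τ) := by positivity
  nlinarith

/-- The symplectic Euler scheme converges to the flow. -/
lemma Adm.euler_tendsto (H : Adm A h) {S : ℝ} (hS : 0 ≤ S) (z : ℂ) :
    Tendsto (fun n : ℕ => euler h (S / (n + 1)) (n + 1) z) atTop (𝓝 (flow h z S)) := by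
  have hA := H.nonneg
  set w := flow h z with hw
  have hws : Sol h w := H.flow_sol z
  have hw0 : w 0 = z := H.flow_zero z
  set M := ‖z‖ * Real.exp (2 * (1 + 2 * A) * S) with hM
  obtain ⟨K, hK, hl⟩ := H.euler_local (M := M)
  rw [Metric.tendsto_atTop']
  intro ε hε
  obtain ⟨η, hη, hηε⟩ : ∃ η > 0, S * (2 * η) * Real.exp (K * S) < ε := by
    have hp : 0 < S * 2 * Real.exp (K * S) + 1 := by positivity
    refine ⟨ε / (S * 2 * Real.exp (K * S) + 1), by positivity, ?_⟩
    have := div_mul_cancel₀ ε hp.ne'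
    nlinarith [div_pos hε hp]
  obtain ⟨δ, hδ, hu⟩ := Metric.uniformContinuousOn_iff.1
    (isCompact_Icc.uniformContinuousOn_of_continuous (s := Set.Icc 0 S)
      (H.continuous_V_sol hws.continuous).continuousOn) η hη
  have ht : Tendsto (fun n : ℕ => S / ((n : ℝ) + 1)) atTop (𝓝 0) := by
    simpa [div_eq_mul_inv] using (tendsto_one_div_add_atTop_nhds_zero_nat (𝕜 := ℝ)).const_mul S
  have hev : ∀ᶠ n : ℕ in atTop, S / ((n : ℝ) + 1) < δ ∧ S / ((n : ℝ) + 1) < 1 ∧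
      (1 + 2 * A) * (S / ((n : ℝ) + 1)) < 1 / 2 ∧ K * (S / ((n : ℝ) + 1)) < η := by
    have h1 := ht.const_mul (1 + 2 * A)
    have h2 := ht.const_mul K
    rw [mul_zero] at h1 h2
    exact (ht.eventually_lt_const hδ).and ((ht.eventually_lt_const one_pos).and
      ((h1.eventually_lt_const (by norm_num)).and (h2.eventually_lt_const hη)))
  obtain ⟨N, hN⟩ := eventually_atTop.1 hev
  refine ⟨N, fun n hn => ?_⟩
  obtain ⟨c1, c2, c3, c4⟩ := hN n hn.le
  set τ := S / ((n : ℝ) + 1) with hτ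
  have hn1 : (0 : ℝ) < n + 1 := by positivity
  have hτ0 : 0 ≤ τ := by positivity
  have hτS : (n + 1 : ℝ) * τ = S := by rw [hτ]; field_simp
  have key : ∀ i : ℕ, i ≤ n + 1 →
      ‖euler h τ i z - w (i * τ)‖ ≤ (i * τ) * (2 * η) * Real.exp (K * (i * τ)) := by
    intro i
    induction i with
    | zero => intro _; simp [euler, hw0]
    | succ i ih =>
      intro hi
      have ih := ih (by omega)
      have hi' : ((i : ℝ) + 1) ≤ n + 1 := by exact_mod_cast hi
      have hiS : i * τ + τ ≤ S := by
        rw [← hτS]; nlinarith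
      have hi0 : 0 ≤ i * τ := by positivity
      have hE : Real.exp (2 * (1 + 2 * A) * (i * τ)) ≤ Real.exp (2 * (1 + 2 * A) * S) := by
        apply Real.exp_le_exp.2; gcongr; linarith
      have d1 : ‖euler h τ i z‖ ≤ M :=
        ((H.euler_bounds hτ0 c2.le c3.le i z).1).trans (by rw [hM]; gcongr)
      have d2 : ‖w (i * τ)‖ ≤ M := by
        refine (H.norm_le hws _).trans ?_
        rw [hw0, abs_of_nonneg hi0, hM]
        gcongr
        · linarith
        · linarith
      have d3 := hl w (euler h τ i z) (i * τ) τ η hws hτ0 c2.le d1 d2 (fun s hs => by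
        have := hu s ⟨hi0.trans hs.1, hs.2.trans hiS⟩ (i * τ) ⟨hi0, by linarith⟩ (by
          rw [Real.dist_eq, abs_of_nonneg (by linarith [hs.1])]
          linarith [hs.2])
        rw [dist_eq_norm] at this
        exact this.le)
      have e1 : ((i + 1 : ℕ) : ℝ) * τ = i * τ + τ := by push_cast; ring
      rw [e1]
      refine d3.trans ?_
      have f1 : 1 + K * τ ≤ Real.exp (K * τ) := by linarith [Real.add_one_le_exp (K * τ)]
      have f2 : Real.exp (K * (i * τ + τ)) = Real.exp (K * τ) * Real.exp (K * (i * τ)) := by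
        rw [← Real.exp_add]; congr 1; ring
      have f3 : 1 ≤ Real.exp (K * (i * τ + τ)) := Real.one_le_exp (by positivity)
      have f4 : (1 + K * τ) * ‖euler h τ i z - w (i * τ)‖ ≤
          Real.exp (K * τ) * ((i * τ) * (2 * η) * Real.exp (K * (i * τ))) := by gcongr
      have f5 : τ * (η + K * τ) ≤ τ * (2 * η) * 1 := by
        rw [mul_one]; gcongr; linarith
      have f6 : τ * (2 * η) * 1 ≤ τ * (2 * η) * Real.exp (K * (i * τ + τ)) := by gcongr
      have f7 : Real.exp (K * τ) * ((i * τ) * (2 * η) * Real.exp (K * (i * τ))) =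
          (i * τ) * (2 * η) * Real.exp (K * (i * τ + τ)) := by rw [f2]; ring
      linarith
  have := key (n + 1) le_rfl
  push_cast at this
  rw [hτS] at this
  rw [dist_eq_norm]
  linarith

/-- The time-`S` map preserves area, as the locally bounded limit of compositions of shears. -/
lemma Adm.flow_mp (H : Adm A h) {S : ℝ} (hS : 0 ≤ S) :
    MeasurePreserving (fun ζ => flow h ζ S) volume volume := by
  have hA := H.nonneg
  have hc : Continuous fun ζ => flow h ζ S := AdmD.continuous_flow H hS
  refine ⟨hc.measurable, ?_⟩
  -- the image measure is locally finite, hence determined by integrals of test functions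
  have hfin : IsFiniteMeasureOnCompacts (Measure.map (fun ζ => flow h ζ S) volume) := by
    refine ⟨fun K hK => ?_⟩
    rw [Measure.map_apply hc.measurable hK.measurableSet]
    obtain ⟨R, hR⟩ := hK.isBounded.subset_closedBall 0
    refine (measure_mono (t := Metric.closedBall 0 (R * Real.exp ((1 + A) * |S|)))
      fun ζ hζ => ?_).trans_lt measure_closedBall_lt_top
    have h1 := hR hζ
    rw [mem_closedBall_zero_iff] at h1 ⊢
    have h2 := H.norm_ge (H.flow_sol ζ) S
    rw [H.flow_zero] at h2
    exact h2.trans (by gcongr)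
  have : IsLocallyFiniteMeasure (Measure.map (fun ζ => flow h ζ S) volume) :=
    isLocallyFiniteMeasure_of_isFiniteMeasureOnCompacts
  refine Measure.ext_of_integral_eq_on_compactlySupported fun φ => ?_
  have hφ : Continuous fun x => φ x := φ.continuous
  rw [integral_map hc.aemeasurable hφ.aestronglyMeasurable]
  obtain ⟨R, hR⟩ := φ.hasCompactSupport.isCompact.isBounded.subset_closedBall 0
  obtain ⟨C, hC⟩ := φ.hasCompactSupport.exists_bound_of_continuous φ.continuous
  set R' := R * Real.exp (2 * (1 + 2 * A) * S) with hR'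
  have ht : Tendsto (fun n : ℕ => S / ((n : ℝ) + 1)) atTop (𝓝 0) := by
    simpa [div_eq_mul_inv] using (tendsto_one_div_add_atTop_nhds_zero_nat (𝕜 := ℝ)).const_mul S
  have hev : ∀ᶠ n : ℕ in atTop, S / ((n : ℝ) + 1) < 1 ∧
      (1 + 2 * A) * (S / ((n : ℝ) + 1)) < 1 / 2 := by
    have h1 := ht.const_mul (1 + 2 * A)
    rw [mul_zero] at h1
    exact (ht.eventually_lt_const one_pos).and (h1.eventually_lt_const (by norm_num))
  -- the preimages of the support of `φ` under the Euler maps stay in one fixed ball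
  have key := tendsto_integral_filter_of_dominated_convergence (μ := (volume : Measure ℂ))
    (l := atTop) (F := fun (n : ℕ) ζ => φ (euler h (S / (n + 1)) (n + 1) ζ))
    (f := fun ζ => φ (flow h ζ S))
    ((Metric.closedBall 0 R').indicator fun _ => C)
    (Eventually.of_forall fun n =>
      (hφ.measurable.comp (H.euler_mp _ _).measurable).aestronglyMeasurable)
    (hev.mono fun n hn => Eventually.of_forall fun ζ => ?_)
    ((integrable_indicator_iff measurableSet_closedBall).2
      (integrableOn_const measure_closedBall_lt_top.ne))
    (Eventually.of_forall fun ζ => (hφ.tendsto _).comp (H.euler_tendsto hS ζ))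
  · have e : ∀ n : ℕ, ∫ ζ, φ (euler h (S / (n + 1)) (n + 1) ζ) = ∫ ζ, φ ζ := fun n => by
      have h1 := H.euler_mp (S / (n + 1)) (n + 1)
      conv_rhs => rw [← h1.map_eq]
      rw [integral_map h1.measurable.aemeasurable hφ.aestronglyMeasurable]
    simp_rw [e] at key
    exact tendsto_nhds_unique key tendsto_const_nhds
  · by_cases h0 : φ (euler h (S / (n + 1)) (n + 1) ζ) = 0
    · rw [h0, norm_zero]
      exact Set.indicator_nonneg (fun _ _ => (norm_nonneg _).trans (hC 0)) _
    · have h1 := hR (subset_tsupport _ h0)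
      rw [mem_closedBall_zero_iff] at h1
      have h2 := (H.euler_bounds (by positivity) hn.1.le hn.2.le (n + 1) ζ).2
      have h3 : ((n + 1 : ℕ) : ℝ) * (S / (n + 1)) = S := by push_cast; field_simp
      rw [h3] at h2
      rw [Set.indicator_of_mem]
      · exact hC _
      · rw [mem_closedBall_zero_iff]
        exact h2.trans (by rw [hR']; gcongr)

end Subharm

namespace Subharm

/-! ### Rotation numbers and the twist -/

/-- The nonlinearity of the linear equation `u'' + q(t)u = 0`. -/
def lin (q : ℝ → ℝ) (t y : ℝ) : ℝ := q t * y

/-- The angle swept on `[0,S]` by the solution of `u'' + q(t)u = 0` starting at angle `ω`. -/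
noncomputable def sweep (q : ℝ → ℝ) (S ω : ℝ) : ℝ :=
  (logInt (lin q) (flow (lin q) (Complex.exp (ω * Complex.I))) S).im

variable {A : ℝ} {q : ℝ → ℝ}

lemma admD_linear (hA : 0 ≤ A) (hq : Continuous q) (hb : ∀ t, |q t| ≤ A) : AdmD A (lin q) q :=
  ⟨adm_linear hA hq hb, hq, fun t =>
    (by simpa using (hasDerivAt_id (0 : ℝ)).const_mul (q t) :
      HasDerivAt (fun y => q t * y) (q t) 0)⟩

/-- The angular coordinate used to define rotation numbers is the one given by `sweep`. -/
lemma sweep_eq (H : Adm A (lin q)) (hq : Continuous q) {θ : ℝ → ℝ}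
    (hθ : ∀ t, HasDerivAt θ (q t * Real.cos (θ t) ^ 2 + Real.sin (θ t) ^ 2) t) (S : ℝ) :
    sweep q S (θ 0) = θ S - θ 0 := by
  have hc : Continuous θ := continuous_iff_continuousAt.2 fun t => (hθ t).continuousAt
  set g : ℝ → ℝ := fun t => (q t - 1) * Real.sin (θ t) * Real.cos (θ t) with hg
  have gc : Continuous g := by fun_prop
  -- the solution with angular coordinate `θ`; `g` is the logarithmic derivative of its modulus
  set w : ℝ → ℂ := fun t => Complex.exp ((∫ s in (0 : ℝ)..t, g s : ℝ) + θ t * Complex.I) with hw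
  set e : ℝ → ℂ := fun t => g t + (q t * Real.cos (θ t) ^ 2 + Real.sin (θ t) ^ 2 : ℝ) * Complex.I
    with he
  have hV : ∀ t, V (lin q) t (w t) = w t * e t := by
    intro t
    apply Complex.ext
    · simp [V, lin, hw, he, hg, Complex.exp_re, Complex.exp_im, Complex.mul_re, -Complex.ofReal_mul,
        -Complex.ofReal_add, -Complex.ofReal_pow]
      linear_combination
        (Real.exp (∫ s in (0 : ℝ)..t, (q s - 1) * Real.sin (θ s) * Real.cos (θ s)) *
          Real.sin (θ t)) * Real.sin_sq_add_cos_sq (θ t)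
    · simp [V, lin, hw, he, hg, Complex.exp_re, Complex.exp_im, Complex.mul_im, -Complex.ofReal_mul,
        -Complex.ofReal_add, -Complex.ofReal_pow]
      linear_combination
        (-Real.exp (∫ s in (0 : ℝ)..t, (q s - 1) * Real.sin (θ s) * Real.cos (θ s)) * q t *
          Real.cos (θ t)) * Real.sin_sq_add_cos_sq (θ t)
  have hs : Sol (lin q) w := by
    intro t
    rw [hV]
    have h1 : HasDerivAt (fun t => ∫ s in (0 : ℝ)..t, g s) (g t) t :=
      intervalIntegral.integral_hasDerivAt_right (gc.intervalIntegrable _ _)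
        (gc.stronglyMeasurableAtFilter _ _) gc.continuousAt
    exact ((h1.ofReal_comp).add ((hθ t).ofReal_comp.mul_const Complex.I)).cexp
  have hw0 : w 0 = Complex.exp (θ 0 * Complex.I) := by simp [hw]
  have hne : ∀ t, w t ≠ 0 := fun t => Complex.exp_ne_zero _
  have hq2 : Continuous fun t => q t * Real.cos (θ t) ^ 2 + Real.sin (θ t) ^ 2 := by fun_prop
  rw [sweep, ← hw0, ← H.eq_flow hs, logInt]
  simp_rw [hV, mul_div_cancel_left₀ _ (hne _)]
  have h2 : ∀ S, ∫ t in (0 : ℝ)..S, e t = (∫ t in (0 : ℝ)..S, g t : ℝ) +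
      (∫ t in (0 : ℝ)..S, (q t * Real.cos (θ t) ^ 2 + Real.sin (θ t) ^ 2) : ℝ) * Complex.I := by
    intro S
    refine (intervalIntegral.integral_add (f := fun t => (g t : ℂ))
      (g := fun t => (q t * Real.cos (θ t) ^ 2 + Real.sin (θ t) ^ 2 : ℝ) * Complex.I)
      ((Complex.continuous_ofReal.comp gc).intervalIntegrable _ _)
      (((Complex.continuous_ofReal.comp hq2).mul continuous_const).intervalIntegrable _ _)).trans ?_
    rw [intervalIntegral.integral_mul_const, intervalIntegral.integral_ofReal,
      intervalIntegral.integral_ofReal]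
  rw [h2, intervalIntegral.integral_eq_sub_of_hasDerivAt (fun t _ => hθ t)
    (hq2.intervalIntegrable _ _)]
  simp

/-- The displacement on the inner boundary is that of the linearized equation. -/
lemma lift_bottom {h : ℝ → ℝ → ℝ} (S : ℝ) {z : ℂ} (hz : z.im = 0) :
    (lift h q S z - z).re = sweep q S z.re := by
  simp [lift, hz, resc_zero, sweep]
  rfl

/-- Since the time-`S` map acts on angles by a circle homeomorphism, the angles swept from two
initial directions differ by at most one turn. -/
lemma sweep_sub_le (H : AdmD A (lin q) q) {S : ℝ} (hS : 0 ≤ S) (ω ω' : ℝ) :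
    |sweep q S ω - sweep q S ω'| ≤ 2 * π := by
  have hre : ∀ ω : ℝ, lift (lin q) q S (ω : ℂ) = (ω + sweep q S ω : ℝ) := fun ω => by
    have h1 := lift_bottom (h := lin q) (q := q) S (z := (ω : ℂ)) (by simp)
    apply Complex.ext
    · simp at h1 ⊢; linarith
    · simp [lift]
  set G : ℝ → ℝ := fun ω => ω + sweep q S ω with hG
  have hGl : ∀ ω, G ω = (lift (lin q) q S (ω : ℂ)).re := fun ω => by rw [hre]; simp [hG]
  have Gc : Continuous G := by
    have : G = fun ω : ℝ => (lift (lin q) q S (ω : ℂ)).re := funext hGl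
    rw [this]
    exact Complex.continuous_re.comp ((H.continuous_lift hS).comp Complex.continuous_ofReal)
  have Gi : Function.Injective G := fun a b hab => by
    have h1 : lift (lin q) q S (a : ℂ) = lift (lin q) q S (b : ℂ) := by
      rw [hre, hre]; exact congrArg _ hab
    have h2 := congrArg (AdmD.invLift (lin q) q S) h1
    rw [H.invLift_lift, H.invLift_lift] at h2
    exact_mod_cast h2
  have per : ∀ ω (n : ℤ), sweep q S (ω + n * (2 * π)) = sweep q S ω := fun ω n => by
    have : Complex.exp ((ω + n * (2 * π) : ℝ) * Complex.I) = Complex.exp (ω * Complex.I) := by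
      have e : ((ω + n * (2 * π) : ℝ) : ℂ) * Complex.I =
          ω * Complex.I + n * (2 * π * Complex.I) := by push_cast; ring
      rw [e, Complex.exp_add, Complex.exp_int_mul_two_pi_mul_I, mul_one]
    rw [sweep, this, sweep]
  -- an injective lift of a degree one circle map is increasing
  have Gm : StrictMono G := by
    rcases Gc.strictMono_of_inj Gi with hm | hm
    · exact hm
    · have h1 := hm (show (0 : ℝ) < 0 + (1 : ℤ) * (2 * π) by
        push_cast; linarith [pi_pos])
      simp only [hG, per] at h1
      push_cast at h1
      linarith [pi_pos]
  obtain ⟨n, hn, -⟩ := existsUnique_add_zsmul_mem_Ico (two_pi_pos) ω' ω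
  rw [zsmul_eq_mul] at hn
  rw [← per ω' n]
  set x := ω' + n * (2 * π) with hx
  have h1 := Gm.monotone hn.1
  have h2 := Gm.monotone hn.2.le
  have h3 := per ω 1
  push_cast at h3
  rw [one_mul] at h3
  simp only [hG, h3] at h1 h2
  rw [abs_le]
  constructor <;> linarith [hn.1, hn.2]

/-- The rotation number controls the angle swept, uniformly in the initial direction. -/
lemma sweep_rotation (H : AdmD A (lin q) q) {T ρ : ℝ} (hT : 0 < T) (hρ : IsRotationNumber T q ρ)
    {δ : ℝ} (hδ : 0 < δ) : ∃ k₀ : ℕ, ∀ k : ℕ, k₀ ≤ k → ∀ ω,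
      |sweep q (k * T) ω - 2 * π * k * ρ| ≤ 2 * π * k * δ := by
  obtain ⟨θ, h0, hd, hl⟩ := hρ
  obtain ⟨N, hN⟩ := Metric.tendsto_atTop.1 (hl 0) (δ / 2) (by positivity)
  -- `2π ≤ π k δ` once `k ≥ 2 / δ`: the bound `sweep_sub_le` costs the other half of `δ`
  obtain ⟨m, hm⟩ := exists_nat_gt (2 / δ)
  refine ⟨max N (max m 1), fun k hk ω => ?_⟩
  have k1 : (1 : ℝ) ≤ k := by
    exact_mod_cast (le_max_right _ _).trans ((le_max_right _ _).trans hk)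
  have k2 : 2 / δ ≤ k := hm.le.trans (by
    exact_mod_cast (le_max_left _ _).trans ((le_max_right _ _).trans hk))
  rw [div_le_iff₀ hδ] at k2
  have h1 := hN k ((le_max_left _ _).trans hk)
  have h2 := sweep_eq H.toAdm H.contq (θ := fun s => θ s 0) (hd 0) (k * T)
  rw [h0] at h2
  rw [← h2, Real.dist_eq, abs_lt] at h1
  have hp : 0 < 2 * π * k := by have := pi_pos; positivity
  have h3 := sweep_sub_le H (S := k * T) (by positivity) ω 0
  rw [abs_le] at h3 ⊢
  obtain ⟨X, hX⟩ : ∃ X, X = sweep q (k * T) 0 / (2 * π * k) := ⟨_, rfl⟩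
  have hX' : sweep q (k * T) 0 = X * (2 * π * k) := by rw [hX]; field_simp
  rw [← hX] at h1
  rw [hX'] at h3
  have hpi := pi_pos
  constructor <;> nlinarith [mul_pos hp (sub_pos.2 h1.1), mul_pos hp (sub_pos.2 h1.2)]

/-- Far from the origin the displacement is that of the equation linearized at infinity. -/
lemma lift_top {h : ℝ → ℝ → ℝ} {q₁ : ℝ → ℝ} (H : AdmD A h q) (H₁ : AdmD A (lin q₁) q₁)
    (hasy : ∀ ε > 0, ∃ C, ∀ t y, |h t y - q₁ t * y| ≤ ε * |y| + C) {S : ℝ} (hS : 0 ≤ S)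
    {η : ℝ} (hη : 0 < η) : ∃ R, ∀ z : ℂ, R ≤ z.im →
      |(lift h q S z - z).re - sweep q₁ S z.re| ≤ η := by
  by_contra hcon
  push Not at hcon
  choose z hz hbad using fun n : ℕ => hcon (n + 1)
  have zpos : ∀ n, 0 < (z n).im := fun n => lt_of_lt_of_le (by positivity) (hz n)
  set ζ : ℕ → ℂ := fun n => Complex.exp ((z n).re * Complex.I) with hζ
  have hζ1 : ∀ n, ‖ζ n‖ = 1 := fun n => Complex.norm_exp_ofReal_mul_I _
  obtain ⟨ζ₀, hζ₀, φ, hφ, hlim⟩ := (isCompact_sphere (0 : ℂ) 1).tendsto_subseq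
    (x := ζ) (fun n => by simp [hζ1])
  have hζ₀' : ζ₀ ≠ 0 := by
    rintro rfl; simp at hζ₀
  have hζne : ∀ n, ζ n ≠ 0 := fun n => Complex.exp_ne_zero _
  -- after blow-down by `r → ∞` the nonlinearities converge to the linear one
  have t1 := Adm.tendsto_logInt (fun n => H.resc (z (φ n)).im) H₁.toAdm
    (fun t M ε hε => by
      obtain ⟨C, hC⟩ := hasy (ε / 2 / (|M| + 1)) (by positivity)
      obtain ⟨m, hm⟩ := exists_nat_gt (2 * |C| / ε)
      refine (eventually_ge_atTop m).mono fun n hn y hy => ?_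
      set r := (z (φ n)).im with hr
      have r0 : 0 < r := zpos _
      have hrm : 2 * |C| / ε ≤ r := by
        have h1 : (m : ℝ) ≤ φ n := by exact_mod_cast hn.trans (hφ.id_le n)
        have := hz (φ n)
        linarith
      rw [div_le_iff₀ hε] at hrm
      rw [resc_of_ne _ _ r0.ne', lin]
      have h2 := hC t (r * y)
      have e : h t (r * y) / r - q₁ t * y = (h t (r * y) - q₁ t * (r * y)) / r := by
        field_simp
      beta_reduce
      rw [e, abs_div, abs_of_pos r0, div_le_iff₀ r0]
      refine h2.trans ?_
      rw [abs_mul, abs_of_pos r0]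
      have h3 : ε / 2 / (|M| + 1) * (r * |y|) ≤ ε / 2 / (|M| + 1) * (r * (|M| + 1)) := by
        gcongr
        linarith [le_abs_self M]
      have h4 : ε / 2 / (|M| + 1) * (r * (|M| + 1)) = ε / 2 * r := by
        have : 0 < |M| + 1 := by positivity
        field_simp
      linarith [le_abs_self C])
    (fun n => (H.resc _).flow_sol (ζ (φ n))) (H₁.toAdm.flow_sol ζ₀)
    (fun n => by rw [(H.resc _).flow_zero]; exact hζne _)
    (by rw [H₁.toAdm.flow_zero]; exact hζ₀')
    (by
      simp_rw [fun n => (H.resc (z (φ n)).im).flow_zero, H₁.toAdm.flow_zero]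
      exact hlim) hS
  have t2 := Adm.tendsto_logInt (fun _ : ℕ => H₁.toAdm) H₁.toAdm
    (fun t M ε hε => Eventually.of_forall fun n y _ => by simpa using hε.le)
    (fun n => H₁.toAdm.flow_sol (ζ (φ n))) (H₁.toAdm.flow_sol ζ₀)
    (fun n => by rw [H₁.toAdm.flow_zero]; exact hζne _)
    (by rw [H₁.toAdm.flow_zero]; exact hζ₀')
    (by
      simp_rw [H₁.toAdm.flow_zero]
      exact hlim) hS
  have t3 := (Complex.continuous_im.tendsto _).comp (t1.sub t2)
  rw [sub_self, Complex.zero_im] at t3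
  have t4 := t3.abs
  rw [abs_zero] at t4
  obtain ⟨n, hn⟩ := (t4.eventually_lt_const hη).exists
  refine absurd (hbad (φ n)) (not_lt.2 (le_trans (le_of_eq ?_) hn.le))
  congr 1
  simp [lift, sweep, hζ]

/-- Multiples of a full turn lying strictly between the rotations at the origin and at infinity are
attained as exact displacements. -/
lemma exists_rotating {h : ℝ → ℝ → ℝ} {q₁ : ℝ → ℝ} (H : AdmD A h q) (H₁ : AdmD A (lin q₁) q₁)
    (hasy : ∀ ε > 0, ∃ C, ∀ t y, |h t y - q₁ t * y| ≤ ε * |y| + C) {T ρ ρ₁ : ℝ} (hT : 0 < T)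
    (hρ : IsRotationNumber T q ρ) (hρ₁ : IsRotationNumber T q₁ ρ₁) (hne : ρ ≠ ρ₁) :
    ∃ (x c : ℝ) (k₀ : ℕ), 0 < c ∧ ∀ k : ℕ, k₀ ≤ k → ∀ j : ℤ, k * x < j → j < k * x + c * k →
      ∃ z : ℂ, 0 < z.im ∧ lift h q (k * T) z = z + j * (2 * π) := by
  have H₀ : AdmD A (lin q) q := admD_linear H.nonneg H.contq H.q_le
  set δ := |ρ - ρ₁| / 4 with hδ
  have δ0 : 0 < δ := div_pos (abs_pos.2 (sub_ne_zero.2 hne)) (by norm_num)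
  obtain ⟨k₀, hk₀⟩ := sweep_rotation H₀ hT hρ δ0
  obtain ⟨k₁, hk₁⟩ := sweep_rotation H₁ hT hρ₁ δ0
  have hpi := pi_pos
  refine ⟨min ρ ρ₁ + δ, 2 * δ, max k₀ k₁, by positivity, fun k hk j hj1 hj2 => ?_⟩
  have b0 := hk₀ k ((le_max_left _ _).trans hk)
  have b1 := hk₁ k ((le_max_right _ _).trans hk)
  have hS : 0 ≤ k * T := by positivity
  have L1 := H.annulusLift hS (H.flow_mp hS)
  -- the inverse of the lift is the lift of the reversed system, reflected
  have L2 := ((H.rev (k * T)).annulusLift hS ((H.rev (k * T)).flow_mp hS)).reflect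
  rcases lt_or_gt_of_ne hne with hlt | hlt
  · rw [min_eq_left hlt.le] at hj1 hj2
    rw [abs_of_neg (sub_neg.2 hlt)] at hδ
    set m := π * (k * (ρ₁ - δ) - j) with hm
    have m0 : 0 < m := by
      apply mul_pos hpi
      have : ρ₁ = ρ + 4 * δ := by rw [hδ]; ring
      rw [this]; linarith
    obtain ⟨R, hR⟩ := lift_top H H₁ hasy hS m0
    refine L1.exists_advance' L2 (fun z _ => H.lift_invLift _ z) (fun z _ => H.invLift_lift _ z) j
      (fun z hz => ?_) m0 (R₀ := R) (fun z hz => ?_)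
    · rw [lift_bottom _ hz]
      have := (abs_le.1 (b0 z.re)).2
      nlinarith
    · have h1 := (abs_le.1 (hR z hz)).1
      have h2 := (abs_le.1 (b1 z.re)).1
      rw [hm] at h1 ⊢
      linarith
  · rw [min_eq_right hlt.le] at hj1 hj2
    rw [abs_of_pos (sub_pos.2 hlt)] at hδ
    set m := π * (j - k * (ρ₁ + δ)) with hm
    have m0 : 0 < m := mul_pos hpi (by linarith)
    have e : ρ = ρ₁ + 4 * δ := by rw [hδ]; ring
    obtain ⟨R, hR⟩ := lift_top H H₁ hasy hS m0
    refine L1.exists_advance L2 (fun z _ => H.lift_invLift _ z) (fun z _ => H.invLift_lift _ z) j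
      (fun z hz => ?_) m0 (R₀ := R) (fun z hz => ?_)
    · rw [lift_bottom _ hz]
      have := (abs_le.1 (b0 z.re)).1
      rw [e] at this
      nlinarith
    · have h1 := (abs_le.1 (hR z hz)).2
      have h2 := (abs_le.1 (b1 z.re)).2
      rw [hm] at h1 ⊢
      linarith

end Subharm

namespace Subharm

/-! ### Integers coprime to `k` in intervals of length proportional to `k` -/

/-- If every prime factor of `k` but `p` divides `Q`, then among `n + 1 ≤ p` consecutive terms of
the progression `1 + Q ℤ` at most one fails to be coprime to `k`. -/
lemma exists_coprime_aux {n k Q p : ℕ} (hQ : 0 < Q) (hp : p.Prime) (hpQ : ¬ p ∣ Q) (hn : n + 1 ≤ p)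
    (hk : ∀ r : ℕ, r.Prime → r ∣ k → r ∣ Q ∨ r = p) (x : ℝ) :
    ∃ s : Finset ℤ, n ≤ s.card ∧ ∀ j ∈ s, x < j ∧ (j : ℝ) ≤ x + (n + 1) * Q ∧ Int.gcd j k = 1 := by
  have hQ' : (0 : ℝ) < Q := by exact_mod_cast hQ
  set i₀ : ℤ := ⌊(x - 1) / Q⌋ with hi₀
  have f1 : (x - 1) < (i₀ + 1) * Q := (div_lt_iff₀ hQ').1 (Int.lt_floor_add_one _)
  have f2 : i₀ * Q ≤ x - 1 := (le_div_iff₀ hQ').1 (Int.floor_le _)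
  set g : ℕ → ℤ := fun i => 1 + Q * (i₀ + i) with hg
  have gi : Function.Injective g := fun a b hab => by
    have hQz : (Q : ℤ) ≠ 0 := by exact_mod_cast hQ.ne'
    simpa [hg, hQ.ne'] using hab
  set S := (Finset.Icc 1 (n + 1)).filter fun i => ¬ (p : ℤ) ∣ g i with hS
  have hbad : ((Finset.Icc 1 (n + 1)).filter fun i => (p : ℤ) ∣ g i).card ≤ 1 := by
    refine Finset.card_le_one.2 fun a ha b hb => ?_
    simp only [Finset.mem_filter, Finset.mem_Icc] at ha hb
    have h1 : (p : ℤ) ∣ Q * ((a : ℤ) - b) := by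
      have := dvd_sub ha.2 hb.2
      have e : g a - g b = Q * ((a : ℤ) - b) := by simp only [hg]; ring
      rwa [e] at this
    rcases (Nat.prime_iff_prime_int.1 hp).dvd_or_dvd h1 with h2 | h2
    · exact absurd (by exact_mod_cast h2) hpQ
    · have h3 := Int.eq_zero_of_abs_lt_dvd h2 (by
        rw [abs_lt]; constructor <;> omega)
      omega
  have hcard : n ≤ S.card := by
    have h1 : ((Finset.Icc 1 (n + 1)).filter fun i => (p : ℤ) ∣ g i).card + S.card =
        (Finset.Icc 1 (n + 1)).card := Finset.card_filter_add_card_filter_not _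
    rw [Nat.card_Icc] at h1
    omega
  refine ⟨S.image g, by rwa [Finset.card_image_of_injective _ gi], fun j hj => ?_⟩
  obtain ⟨i, hi, rfl⟩ := Finset.mem_image.1 hj
  simp only [hS, Finset.mem_filter, Finset.mem_Icc] at hi
  obtain ⟨⟨i1, i2⟩, hpi⟩ := hi
  have i1' : (1 : ℝ) ≤ i := by exact_mod_cast i1
  have i2' : (i : ℝ) ≤ n + 1 := by exact_mod_cast i2
  refine ⟨?_, ?_, ?_⟩
  · simp only [hg]; push_cast; nlinarith
  · simp only [hg]; push_cast; nlinarith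
  · by_contra hgcd
    obtain ⟨r, hr, hrd⟩ := Nat.exists_prime_and_dvd hgcd
    have r1 : (r : ℤ) ∣ g i := (Int.natCast_dvd_natCast.2 hrd).trans (Int.gcd_dvd_left _ _)
    have r2 : r ∣ k := Int.natCast_dvd_natCast.1
      ((Int.natCast_dvd_natCast.2 hrd).trans (Int.gcd_dvd_right _ _))
    rcases hk r hr r2 with h | rfl
    · have h1 : (r : ℤ) ∣ Q * (i₀ + i) := (Int.natCast_dvd_natCast.2 h).mul_right _
      have h2 : (r : ℤ) ∣ 1 := by
        have := dvd_sub r1 h1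
        simpa [hg] using this
      exact (Nat.prime_iff_prime_int.1 hr).not_isUnit (isUnit_of_dvd_one h2)
    · exact hpi r1

/-- For large `k`, every interval of length `c k` contains many integers coprime to `k`. If `k` has
a large prime factor `p`, use a progression whose step is the product of the other prime factors;
otherwise the product of the prime factors of `k` is bounded. -/
lemma exists_coprime {c : ℝ} (hc : 0 < c) (n : ℕ) : ∃ k₀ : ℕ, ∀ k : ℕ, k₀ ≤ k → ∀ x : ℝ,
    ∃ s : Finset ℤ, n ≤ s.card ∧ ∀ j ∈ s, x < j ∧ (j : ℝ) < x + c * k ∧ Int.gcd j k = 1 := by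
  obtain ⟨y, hy⟩ := exists_nat_gt (max (n + 1 : ℝ) ((n + 1) / c))
  have hy1 : n + 1 < y := by exact_mod_cast (le_max_left _ _).trans_lt hy
  have hy2 := (div_lt_iff₀ hc).1 ((le_max_right _ _).trans_lt hy)
  set M := primorial y with hM
  obtain ⟨m, hm⟩ := exists_nat_gt ((n + 1) * M / c)
  refine ⟨m + 1, fun k hk x => ?_⟩
  have k0 : k ≠ 0 := by omega
  have kpos : (0 : ℝ) < k := by exact_mod_cast Nat.pos_of_ne_zero k0
  obtain ⟨Q, p, hQ, hp, hpQ, hn, hkr, hlen⟩ : ∃ Q p : ℕ, 0 < Q ∧ p.Prime ∧ ¬ p ∣ Q ∧ n + 1 ≤ p ∧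
      (∀ r : ℕ, r.Prime → r ∣ k → r ∣ Q ∨ r = p) ∧ ((n : ℝ) + 1) * Q < c * k := by
    by_cases hbig : ∃ p ∈ k.primeFactors, y < p
    · obtain ⟨p, hpk, hyp⟩ := hbig
      have hpp := Nat.prime_of_mem_primeFactors hpk
      set Q := ∏ r ∈ k.primeFactors.erase p, r with hQ
      have hQpos : 0 < Q := Finset.prod_pos fun r hr =>
        (Nat.prime_of_mem_primeFactors (Finset.mem_of_mem_erase hr)).pos
      refine ⟨Q, p, hQpos, hpp, fun hd => ?_, by omega, fun r hr hrk => ?_, ?_⟩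
      · obtain ⟨r, hr, hd⟩ := (Prime.dvd_finsetProd_iff hpp.prime _).1 hd
        have := (Nat.prime_dvd_prime_iff_eq hpp
          (Nat.prime_of_mem_primeFactors (Finset.mem_of_mem_erase hr))).1 hd
        exact Finset.ne_of_mem_erase hr this.symm
      · by_cases h : r = p
        · exact Or.inr h
        · exact Or.inl (Finset.dvd_prod_of_mem (fun r : ℕ => r)
            (Finset.mem_erase.2 ⟨h, Nat.mem_primeFactors.2 ⟨hr, hrk, k0⟩⟩))
      · have h1 : p * Q ∣ k := by
          rw [hQ, Finset.mul_prod_erase _ (fun r : ℕ => r) hpk]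
          exact Nat.prod_primeFactors_dvd k
        have h2 : (p : ℝ) * Q ≤ k := by exact_mod_cast Nat.le_of_dvd (by omega) h1
        have h3 : (y : ℝ) < p := by exact_mod_cast hyp
        have h4 : (0 : ℝ) < Q := by exact_mod_cast hQpos
        calc ((n : ℝ) + 1) * Q < (y * c) * Q := by gcongr
          _ ≤ (p * c) * Q := by gcongr
          _ = c * (p * Q) := by ring
          _ ≤ c * k := by gcongr
    · push Not at hbig
      set Q := ∏ r ∈ k.primeFactors, r with hQ
      have hQpos : 0 < Q := Finset.prod_pos fun r hr => (Nat.prime_of_mem_primeFactors hr).pos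
      have hQM : Q ≤ M := by
        refine Finset.prod_le_prod_of_subset_of_one_le' (fun r hr => ?_) fun r hr _ => ?_
        · have := hbig r hr
          simp only [Finset.mem_filter, Finset.mem_range]
          exact ⟨by omega, Nat.prime_of_mem_primeFactors hr⟩
        · exact (Finset.mem_filter.1 hr).2.one_le
      -- here all prime factors of `k` divide `Q`, and `p` is a dummy prime
      obtain ⟨p, hp1, hpp⟩ := Nat.exists_infinite_primes (Q + n + 1)
      refine ⟨Q, p, hQpos, hpp, fun hd => ?_, by omega, fun r hr hrk => Or.inl ?_, ?_⟩
      · have := Nat.le_of_dvd hQpos hd; omega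
      · exact Finset.dvd_prod_of_mem (fun r : ℕ => r) (Nat.mem_primeFactors.2 ⟨hr, hrk, k0⟩)
      · rw [div_lt_iff₀ hc] at hm
        have h1 : (Q : ℝ) ≤ M := by exact_mod_cast hQM
        have h2 : (m : ℝ) ≤ k := by exact_mod_cast (Nat.le_succ m).trans hk
        calc ((n : ℝ) + 1) * Q ≤ (n + 1) * M := by gcongr
          _ < m * c := hm
          _ ≤ k * c := by gcongr
          _ = c * k := mul_comm _ _
  obtain ⟨s, hs, hj⟩ := exists_coprime_aux hQ hp hpQ hn hkr x
  exact ⟨s, hs, fun j h => ⟨(hj j h).1, (hj j h).2.1.trans_lt (by linarith), (hj j h).2.2⟩⟩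

end Subharm

namespace Subharm

/-! ### Periodic solutions and their winding numbers -/

section winding

variable {A T : ℝ} {h : ℝ → ℝ → ℝ} {q : ℝ → ℝ} {w w₁ w₂ : ℝ → ℂ}

lemma nat_per {α : Type*} {g : ℝ → α} (hg : ∀ t, g (t + T) = g t) (l : ℕ) (t : ℝ) :
    g (t + l * T) = g t := by
  have := (Function.Periodic.nat_mul (f := g) (c := T) hg l) t
  exact this

lemma Sol.shift (hper : ∀ t, h (t + T) = h t) (hw : Sol h w) (l : ℕ) :
    Sol h fun t => w (t + l * T) := by
  intro t
  have h1 := (hw (t + l * T)).comp_add_const t (l * T)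
  rwa [V, nat_per hper, ← V] at h1

/-- A solution returning to its initial value after `k` periods is periodic. -/
lemma Adm.sol_periodic (H : Adm A h) (hper : ∀ t, h (t + T) = h t) (hw : Sol h w) {k : ℕ}
    (h0 : w (k * T) = w 0) (t : ℝ) : w (t + k * T) = w t :=
  congrFun (H.unique (hw.shift hper k) hw (by simpa using h0)) t

lemma logDeriv_shift (hper : ∀ t, h (t + T) = h t) {l : ℕ} (e : ∀ t, w₁ t = w₂ (t + l * T)) (t : ℝ) :
    V h t (w₁ t) / w₁ t = V h (t + l * T) (w₂ (t + l * T)) / w₂ (t + l * T) := by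
  rw [e, V, V, nat_per hper]

/-- The winding number over `k` periods is invariant under time shifts. -/
lemma logInt_shift (hper : ∀ t, h (t + T) = h t) {k l : ℕ}
    (hk : ∀ t, w₂ (t + k * T) = w₂ t) (e : ∀ t, w₁ t = w₂ (t + l * T)) :
    logInt h w₁ (k * T) = logInt h w₂ (k * T) := by
  have hp : Function.Periodic (fun t => V h t (w₂ t) / w₂ t) (k * T) := fun t =>
    (logDeriv_shift hper (fun t => (hk t).symm) t).symm
  rw [logInt, logInt]
  simp_rw [logDeriv_shift hper e]
  rw [intervalIntegral.integral_comp_add_right (fun t => V h t (w₂ t) / w₂ t), zero_add,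
    add_comm (k * T) (l * T)]
  have := hp.intervalIntegral_add_eq (l * T) 0
  rwa [zero_add] at this

/-- A winding number coprime to `k` forces the minimal period to be `kT`. -/
lemma Adm.not_periodic (H : Adm A h) (hper : ∀ t, h (t + T) = h t) (hw : Sol h w) (h0 : w 0 ≠ 0)
    {k l : ℕ} {j : ℤ} (hper2 : ∀ t, w (t + k * T) = w t)
    (hj : (logInt h w (k * T)).im = j * (2 * π)) (hjk : Int.gcd j k = 1)
    (hl1 : 1 ≤ l) (hlk : l < k) : ¬ ∀ t, w (t + l * T) = w t := by
  intro e
  have hc := H.continuous_logDeriv hw h0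
  have hpl : Function.Periodic (fun t => V h t (w t) / w t) (l * T) := fun t =>
    (logDeriv_shift hper (fun t => (e t).symm) t).symm
  have h1 := H.exp_logInt hw h0 (l * T)
  have h2 : w (l * T) = w 0 := by simpa using e 0
  rw [h2] at h1
  have h3 : Complex.exp (logInt h w (l * T)) = 1 :=
    mul_left_cancel₀ h0 (by rw [← h1, mul_one])
  obtain ⟨m, hm⟩ := Complex.exp_eq_one_iff.1 h3
  have hint := fun t₁ t₂ => hc.intervalIntegrable (μ := MeasureTheory.volume) t₁ t₂
  -- the integral over `k l` periods, computed in two ways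
  have i1 := hpl.intervalIntegral_add_zsmul_eq k 0 hint
  have hpk : Function.Periodic (fun t => V h t (w t) / w t) (k * T) := fun t =>
    (logDeriv_shift hper (fun t => (hper2 t).symm) t).symm
  have i2 := hpk.intervalIntegral_add_zsmul_eq l 0 hint
  simp only [zero_add, zsmul_eq_mul, Int.cast_natCast] at i1 i2
  rw [mul_left_comm] at i1
  rw [i2] at i1
  change (l : ℂ) * logInt h w (k * T) = k * logInt h w (l * T) at i1
  have i3 := congrArg Complex.im i1
  rw [hm] at i3
  simp [hj] at i3
  have i4 : (l : ℝ) * j = k * m := by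
    have hp : (2 * π) ≠ 0 := two_pi_pos.ne'
    exact mul_right_cancel₀ hp (by linear_combination i3)
  have i5 : (l : ℤ) * j = k * m := by exact_mod_cast i4
  have i6 : (k : ℤ) ∣ l := IsCoprime.dvd_of_dvd_mul_right
    (Int.isCoprime_iff_gcd_eq_one.2 (by rwa [Int.gcd_comm])) ⟨m, i5⟩
  have := Nat.le_of_dvd (by omega) (Int.natCast_dvd_natCast.1 i6)
  omega

/-- The angle swept does not change under the blow-up. -/
lemma logInt_scale {r : ℝ} (hr : r ≠ 0) (y : ℝ → ℂ) (S : ℝ) :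
    logInt h (fun t => r * y t) S = logInt (resc h q r) y S := by
  rw [logInt, logInt]
  congr 1
  ext t
  have e : V h t (r * y t) = r * V (resc h q r) t (y t) := by
    rw [resc_of_ne _ _ hr]
    apply Complex.ext
    · simp [V]
    · simp [V]; field_simp
  rw [e, mul_div_mul_left _ _ (Complex.ofReal_ne_zero.2 hr)]

/-- A point whose lift is displaced by `j` full turns gives a periodic solution with winding
number `j`. -/
lemma AdmD.exists_winding (H : AdmD A h q) (hper : ∀ t, h (t + T) = h t) {k : ℕ} {j : ℤ} {z : ℂ}
    (hz : 0 < z.im) (e : lift h q (k * T) z = z + j * (2 * π)) :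
    ∃ w : ℝ → ℂ, Sol h w ∧ w 0 ≠ 0 ∧ (∀ t, w (t + k * T) = w t) ∧
      (logInt h w (k * T)).im = j * (2 * π) := by
  have hsol := H.flow_sol (polar z)
  have h0 := H.flow_zero (polar z)
  have e1 : polar (z + j * (2 * π)) = polar z := by
    have e1 : (z + j * (2 * π)).im = z.im := by simp
    have e2 : (((z + j * (2 * π)).re : ℝ) : ℂ) * Complex.I =
        z.re * Complex.I + j * (2 * π * Complex.I) := by
      simp; ring
    rw [polar, polar, e1, e2, Complex.exp_add, Complex.exp_int_mul_two_pi_mul_I, mul_one]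
  refine ⟨flow h (polar z), hsol, ?_, H.sol_periodic hper hsol ?_, ?_⟩
  · rw [h0, Ne, polar_eq_zero]; exact hz.ne'
  · rw [h0, ← H.lift_semi, e, e1]
  · have Hr := H.resc z.im
    have h1 := H.eq_flow (AdmD.sol_scale hz.ne'
      (Hr.flow_sol (Complex.exp (z.re * Complex.I))))
    beta_reduce at h1
    rw [Hr.flow_zero] at h1
    have h2 := congrArg Complex.re e
    rw [polar, ← h1, logInt_scale hz.ne']
    simpa [lift] using h2

end winding

end Subharm

namespace Subharm

/-! ### The equation around the periodic solution -/

section variation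

variable {T : ℝ} {f : ℝ → ℝ → ℝ} {qinf ubar q0 : ℝ → ℝ}

/-- The nonlinearity of the equation satisfied by the deviation from `ubar`. -/
def dev (f : ℝ → ℝ → ℝ) (ubar : ℝ → ℝ) (t y : ℝ) : ℝ := f t (ubar t + y) - f t (ubar t)

lemma exists_bound_periodic {g : ℝ → ℝ} (hT : 0 < T) (hg : Continuous g)
    (hper : ∀ t, g (t + T) = g t) : ∃ B, 0 ≤ B ∧ ∀ t, |g t| ≤ B := by
  obtain ⟨B, hB⟩ := (isCompact_Icc (a := 0) (b := T)).exists_bound_of_continuousOn hg.continuousOn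
  have hB' : ∀ t, |g t| ≤ B := fun t => by
    obtain ⟨s, hs, e⟩ := Function.Periodic.exists_mem_Ico₀ (f := g) hper hT t
    rw [e]; exact hB s ⟨hs.1, hs.2.le⟩
  exact ⟨B, (abs_nonneg _).trans (hB' 0), hB'⟩

/-- A periodic locally Lipschitz nonlinearity is Lipschitz on bounded sets, uniformly in time. -/
lemma exists_lip (hT : 0 < T) (hfper : ∀ t u, f (t + T) u = f t u)
    (hflip : LocallyLipschitz (Function.uncurry f)) (M : ℝ) :
    ∃ K, 0 ≤ K ∧ ∀ t u u', |u| ≤ M → |u'| ≤ M → |f t u - f t u'| ≤ K * |u - u'| := by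
  obtain ⟨K, hK⟩ := (hflip.locallyLipschitzOn
    (s := Set.Icc 0 T ×ˢ Set.Icc (-M) M)).exists_lipschitzOnWith_of_compact
    (isCompact_Icc.prod isCompact_Icc)
  refine ⟨K, K.2, fun t u u' hu hu' => ?_⟩
  obtain ⟨s, hs, e⟩ := Function.Periodic.exists_mem_Ico₀ (f := f) (fun t => funext (hfper t)) hT t
  rw [e]
  have := hK.dist_le_mul (s, u) ⟨⟨hs.1, hs.2.le⟩, abs_le.1 hu⟩ (s, u') ⟨⟨hs.1, hs.2.le⟩, abs_le.1 hu'⟩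
  simpa [Function.uncurry, Prod.dist_eq, Real.dist_eq] using this

lemma exists_bound (hT : 0 < T) (hfper : ∀ t u, f (t + T) u = f t u)
    (hfc : Continuous (Function.uncurry f)) (M : ℝ) :
    ∃ C, 0 ≤ C ∧ ∀ t u, |u| ≤ M → |f t u| ≤ C := by
  obtain ⟨C, hC⟩ := ((isCompact_Icc (a := 0) (b := T)).prod
    (isCompact_Icc (a := -M) (b := M))).exists_bound_of_continuousOn hfc.continuousOn
  refine ⟨|C|, abs_nonneg _, fun t u hu => ?_⟩
  obtain ⟨s, hs, e⟩ := Function.Periodic.exists_mem_Ico₀ (f := f) (fun t => funext (hfper t)) hT t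
  rw [e]
  exact (hC (s, u) ⟨⟨hs.1, hs.2.le⟩, abs_le.1 hu⟩).trans (le_abs_self C)

/-- The deviation equation is asymptotically linear. -/
lemma dev_asymp (hT : 0 < T) (hfper : ∀ t u, f (t + T) u = f t u)
    (hfc : Continuous (Function.uncurry f)) (hqinfcont : Continuous qinf)
    (hqinfper : ∀ t, qinf (t + T) = qinf t)
    (hlim : ∀ ε > 0, ∃ R > 0, ∀ t u : ℝ, R ≤ |u| → |f t u / u - qinf t| ≤ ε)
    (hub : Continuous ubar) (hubarper : ∀ t, ubar (t + T) = ubar t) :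
    ∀ ε > 0, ∃ C, ∀ t y, |dev f ubar t y - qinf t * y| ≤ ε * |y| + C := by
  intro ε hε
  obtain ⟨Q, hQ0, hQ⟩ := exists_bound_periodic hT hqinfcont hqinfper
  obtain ⟨B, hB0, hB⟩ := exists_bound_periodic hT hub hubarper
  obtain ⟨R, hR, hl⟩ := hlim ε hε
  obtain ⟨C, hC0, hC⟩ := exists_bound hT hfper hfc R
  have key : ∀ t u, |f t u - qinf t * u| ≤ ε * |u| + (C + Q * R) := fun t u => by
    rcases le_total R |u| with h | h
    · have hu : u ≠ 0 := by rintro rfl; simp at h; linarith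
      have h1 := mul_le_mul_of_nonneg_right (hl t u h) (abs_nonneg u)
      rw [← abs_mul, sub_mul, div_mul_cancel₀ _ hu] at h1
      have : 0 ≤ C + Q * R := by positivity
      linarith
    · have h1 := abs_sub (f t u) (qinf t * u)
      rw [abs_mul] at h1
      have h2 : |qinf t| * |u| ≤ Q * R := mul_le_mul (hQ t) h (abs_nonneg _) hQ0
      have h3 := hC t u h
      have : 0 ≤ ε * |u| := by positivity
      linarith
  refine ⟨ε * B + (C + Q * R) + (ε * B + (C + Q * R)), fun t y => ?_⟩
  have e : dev f ubar t y - qinf t * y =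
      (f t (ubar t + y) - qinf t * (ubar t + y)) - (f t (ubar t) - qinf t * ubar t) := by
    rw [dev]; ring
  rw [e]
  have h1 := abs_sub (f t (ubar t + y) - qinf t * (ubar t + y)) (f t (ubar t) - qinf t * ubar t)
  have h2 := key t (ubar t + y)
  have h3 := key t (ubar t)
  have h4 : ε * |ubar t + y| ≤ ε * (B + |y|) := by
    gcongr
    exact (abs_add_le _ _).trans (by linarith [hB t])
  have h5 : ε * |ubar t| ≤ ε * B := by gcongr; exact hB t
  linarith

/-- A locally Lipschitz, asymptotically linear nonlinearity has linear growth around `ubar`; one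
constant serves for the deviation equation and for the equation linearized at infinity. -/
lemma dev_admD (hT : 0 < T) (hfper : ∀ t u, f (t + T) u = f t u)
    (hflip : LocallyLipschitz (Function.uncurry f)) (hqinfcont : Continuous qinf)
    (hqinfper : ∀ t, qinf (t + T) = qinf t)
    (hlim : ∀ ε > 0, ∃ R > 0, ∀ t u : ℝ, R ≤ |u| → |f t u / u - qinf t| ≤ ε)
    (hub : Continuous ubar) (hubarper : ∀ t, ubar (t + T) = ubar t)
    (hq0cont : Continuous q0) (hq0 : ∀ t, HasDerivAt (fun u => f t u) (q0 t) (ubar t)) :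
    ∃ A, AdmD A (dev f ubar) q0 ∧ AdmD A (lin qinf) qinf := by
  have hfc := hflip.continuous
  obtain ⟨Q, hQ0, hQ⟩ := exists_bound_periodic hT hqinfcont hqinfper
  obtain ⟨B, hB0, hB⟩ := exists_bound_periodic hT hub hubarper
  obtain ⟨C, hC⟩ := dev_asymp hT hfper hfc hqinfcont hqinfper hlim hub hubarper 1 one_pos
  have lip : ∀ M, ∃ K, 0 ≤ K ∧ ∀ t y y', |y| ≤ M → |y'| ≤ M →
      |dev f ubar t y - dev f ubar t y'| ≤ K * |y - y'| := fun M => by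
    obtain ⟨K, hK0, hK⟩ := exists_lip hT hfper hflip (B + M)
    refine ⟨K, hK0, fun t y y' hy hy' => ?_⟩
    have := hK t (ubar t + y) (ubar t + y') ((abs_add_le _ _).trans (add_le_add (hB t) hy))
      ((abs_add_le _ _).trans (add_le_add (hB t) hy'))
    simpa [dev] using this
  obtain ⟨K, hK0, hK⟩ := lip 1
  have hA : 0 ≤ K + (Q + 1 + |C|) := by positivity
  refine ⟨K + (Q + 1 + |C|), ⟨⟨?_, hA, fun t y => ?_, lip⟩, hq0cont, fun t => ?_⟩,
    admD_linear hA hqinfcont fun t => (hQ t).trans (by linarith [abs_nonneg C])⟩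
  · have h1 : Continuous fun p : ℝ × ℝ => f p.1 (ubar p.1 + p.2) :=
      hfc.comp (continuous_fst.prodMk ((hub.comp continuous_fst).add continuous_snd))
    have h2 : Continuous fun p : ℝ × ℝ => f p.1 (ubar p.1) :=
      hfc.comp (continuous_fst.prodMk (hub.comp continuous_fst))
    exact h1.sub h2
  · rcases le_total |y| 1 with h | h
    · have h1 := hK t y 0 h (by simp)
      simp only [dev, add_zero, sub_self, sub_zero] at h1 ⊢
      refine h1.trans ?_
      gcongr
      have := abs_nonneg C
      linarith
    · have h1 := hC t y
      have h2 := abs_add_le (dev f ubar t y - qinf t * y) (qinf t * y)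
      rw [sub_add_cancel, abs_mul] at h2
      have h3 : |qinf t| * |y| ≤ Q * |y| := by gcongr; exact hQ t
      have h4 : C ≤ |C| * |y| := (le_abs_self C).trans (le_mul_of_one_le_right (abs_nonneg C) h)
      have h5 : 0 ≤ K * |y| := by positivity
      linarith
  · have h1 : HasDerivAt (fun u => f t u) (q0 t) (ubar t + 0) := by simpa using hq0 t
    exact (h1.comp_const_add (ubar t) 0).sub_const _

lemma dev_per (hfper : ∀ t u, f (t + T) u = f t u) (hubarper : ∀ t, ubar (t + T) = ubar t) (t : ℝ) :
    dev f ubar (t + T) = dev f ubar t := by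
  ext y; rw [dev, dev, hfper, hfper, hubarper]

/-- Solutions of the deviation equation give solutions of the original one. -/
lemma isSol_of_dev {w : ℝ → ℂ} (hubar : IsSol f ubar) (hw : Sol (dev f ubar) w) :
    IsSol f fun t => ubar t + (w t).re := by
  obtain ⟨v, hu, hv⟩ := hubar
  refine ⟨fun t => v t + -(w t).im, fun t => ?_, fun t => ?_⟩
  · exact (hu t).add (Complex.reCLM.hasFDerivAt.comp_hasDerivAt t (hw t))
  · refine ((hv t).add (Complex.imCLM.hasFDerivAt.comp_hasDerivAt t (hw t)).neg).congr_deriv ?_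
    simp [V, dev]
    ring

/-- The position determines the whole state: equal real parts, up to a time shift, force equal
solutions. -/
lemma eq_of_re_eq {h : ℝ → ℝ → ℝ} {w₁ w₂ : ℝ → ℂ} (h1 : Sol h w₁) (h2 : Sol h w₂) {a : ℝ}
    (e : ∀ t, (w₁ t).re = (w₂ (t + a)).re) (t : ℝ) : w₁ t = w₂ (t + a) := by
  refine Complex.ext (e t) ?_
  have d1 : HasDerivAt (fun t => (w₁ t).re) (-(w₁ t).im) t :=
    Complex.reCLM.hasFDerivAt.comp_hasDerivAt t (h1 t)
  have d2 : HasDerivAt (fun t => (w₂ (t + a)).re) (-(w₂ (t + a)).im) t :=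
    HasDerivAt.comp_add_const t a
      (Complex.reCLM.hasFDerivAt.comp_hasDerivAt (t + a) (h2 (t + a)))
  rw [← funext e] at d2
  exact neg_injective (d1.unique d2)

end variation

end Subharm

/-! ### Subharmonics -/

open Subharm

/-- Consider `u'' + f(t,u) = 0` with `f` `T`-periodic in `t`, locally
Lipschitz, and `f(t,u)/u → q_∞(t)` uniformly as `|u| → ∞`. If there is a `T`-periodic
solution `ū` whose linearization rotation number `ρ_ū` differs from `ρ_∞`, then for all
sufficiently large `k` the equation has subharmonic solutions of order `k`, and the
number of pairwise non-equivalent subharmonics of order `k` tends to infinity. -/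
theorem subharmonics_of_second_order_equation
    (T : ℝ) (hT : 0 < T)
    (f : ℝ → ℝ → ℝ)
    (hfper : ∀ t u, f (t + T) u = f t u)
    (hflip : LocallyLipschitz (Function.uncurry f))
    (qinf : ℝ → ℝ) (hqinfcont : Continuous qinf)
    (hqinfper : ∀ t, qinf (t + T) = qinf t)
    (hlim : ∀ ε > 0, ∃ R > 0, ∀ t u : ℝ, R ≤ |u| → |f t u / u - qinf t| ≤ ε)
    (ubar : ℝ → ℝ) (hubar : IsSol f ubar) (hubarper : ∀ t, ubar (t + T) = ubar t)
    (q0 : ℝ → ℝ) (hq0cont : Continuous q0)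
    (hq0 : ∀ t, HasDerivAt (fun u => f t u) (q0 t) (ubar t))
    (ρ0 ρinf : ℝ)
    (hρ0 : IsRotationNumber T q0 ρ0)
    (hρinf : IsRotationNumber T qinf ρinf)
    (hne : ρ0 ≠ ρinf) :
    (∃ kstar : ℕ, 1 ≤ kstar ∧ ∀ k : ℕ, kstar ≤ k → ∃ u, Subharmonic f T k u) ∧
    (∀ n : ℕ, ∃ kn : ℕ, 1 ≤ kn ∧ ∀ k : ℕ, kn ≤ k →
      ∃ s : Finset (ℝ → ℝ), n ≤ s.card ∧
        (∀ u ∈ s, Subharmonic f T k u) ∧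
        ∀ u₁ ∈ s, ∀ u₂ ∈ s, u₁ ≠ u₂ →
          ¬ ∃ l : ℕ, l < k ∧ ∀ t, u₁ t = u₂ (t + l * T)) := by
  have hub : Continuous ubar := by
    obtain ⟨v, hu, -⟩ := hubar
    exact continuous_iff_continuousAt.2 fun t => (hu t).continuousAt
  obtain ⟨A, H, H₁⟩ := dev_admD hT hfper hflip hqinfcont hqinfper hlim hub hubarper hq0cont hq0
  have hper := dev_per hfper hubarper
  obtain ⟨x, c, k₀, hc, hrot⟩ := exists_rotating H H₁
    (dev_asymp hT hfper hflip.continuous hqinfcont hqinfper hlim hub hubarper) hT hρ0 hρinf hne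
  have main : ∀ n : ℕ, ∃ kn : ℕ, 1 ≤ kn ∧ ∀ k : ℕ, kn ≤ k →
      ∃ s : Finset (ℝ → ℝ), n ≤ s.card ∧
        (∀ u ∈ s, Subharmonic f T k u) ∧
        ∀ u₁ ∈ s, ∀ u₂ ∈ s, u₁ ≠ u₂ →
          ¬ ∃ l : ℕ, l < k ∧ ∀ t, u₁ t = u₂ (t + l * T) := by
    intro n
    obtain ⟨k₁, hk₁⟩ := exists_coprime hc n
    refine ⟨max 1 (max k₀ k₁), le_max_left _ _, fun k hk => ?_⟩
    obtain ⟨J, hJn, hJ⟩ := hk₁ k ((le_max_right _ _).trans ((le_max_right _ _).trans hk)) (k * x)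
    have hw : ∀ j : ℤ, ∃ w : ℝ → ℂ, j ∈ J → Sol (dev f ubar) w ∧ w 0 ≠ 0 ∧
        (∀ t, w (t + k * T) = w t) ∧
        (logInt (dev f ubar) w (k * T)).im = j * (2 * π) := fun j => by
      by_cases hj : j ∈ J
      · obtain ⟨z, hz, e⟩ := hrot k ((le_max_left _ _).trans ((le_max_right _ _).trans hk)) j
          (hJ j hj).1 (hJ j hj).2.1
        obtain ⟨w, h⟩ := H.exists_winding hper hz e
        exact ⟨w, fun _ => h⟩
      · exact ⟨0, fun h => absurd h hj⟩
    choose w hw using hw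
    set U : ℤ → ℝ → ℝ := fun j t => ubar t + (w j t).re with hU
    -- equivalent solutions have equal winding numbers
    have hshift : ∀ j₁ ∈ J, ∀ j₂ ∈ J, ∀ l : ℕ, (∀ t, U j₁ t = U j₂ (t + l * T)) → j₁ = j₂ := by
      intro j₁ h₁ j₂ h₂ l e
      have e1 := eq_of_re_eq (hw j₁ h₁).1 (hw j₂ h₂).1 (a := l * T) fun t => by
        have := e t
        simp only [hU, nat_per hubarper l t] at this
        linarith
      have e2 := congrArg Complex.im (logInt_shift hper (hw j₂ h₂).2.2.1 e1)
      rw [(hw j₁ h₁).2.2.2, (hw j₂ h₂).2.2.2] at e2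
      exact_mod_cast mul_right_cancel₀ two_pi_pos.ne' e2
    have hinj : Set.InjOn U J := fun j₁ h₁ j₂ h₂ e =>
      hshift j₁ h₁ j₂ h₂ 0 fun t => by simp [e]
    classical
    refine ⟨J.image U, by rwa [Finset.card_image_of_injOn hinj], fun u hu => ?_, ?_⟩
    · obtain ⟨j, hj, rfl⟩ := Finset.mem_image.1 hu
      obtain ⟨a1, a2, a3, a4⟩ := hw j hj
      refine ⟨isSol_of_dev hubar a1, fun t => ?_, fun l hl1 hlk hl => ?_⟩
      · simp only [hU, a3, nat_per hubarper]
      · refine H.not_periodic hper a1 a2 a3 a4 (hJ j hj).2.2 hl1 hlk fun t =>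
          (eq_of_re_eq a1 a1 (fun t => ?_) t).symm
        have := hl t
        simp only [hU, nat_per hubarper l t] at this
        linarith
    · rintro u₁ hu₁ u₂ hu₂ hne' ⟨l, -, e⟩
      obtain ⟨j₁, h₁, rfl⟩ := Finset.mem_image.1 hu₁
      obtain ⟨j₂, h₂, rfl⟩ := Finset.mem_image.1 hu₂
      exact hne' (by rw [hshift j₁ h₁ j₂ h₂ l e])
  refine ⟨?_, main⟩
  obtain ⟨k₁, h1, hk₁⟩ := main 1
  refine ⟨k₁, h1, fun k hk => ?_⟩
  obtain ⟨s, hs, hsub, -⟩ := hk₁ k hk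
  obtain ⟨u, hu⟩ := Finset.card_pos.1 hs
  exact ⟨u, hsub u hu⟩
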